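/- arXiv:1605.08136 — 2 statements merged into one kernel-verified Lean document; each statement's English description precedes it below -/
import Mathlib

section
/- Assume the local multiplier setup with g of the standard form, and let ε be the ball exponent of g with ε ≥ 1/2. Then there are at most finitely many unit directions v (up to sign) for which the strip exponent δ_v is less than 1/2, and every such direction v is perpendicular to one of the lines l₁,…,l_p. -/
open MeasureTheory Real Set Filter Metric
open scoped Topology ENNReal

noncomputable section

/-- The Euclidean magnitude `|(x,y)| = √(x²+y²)` of a point of `ℝ²`. -/
def nrm2 (p : ℝ × ℝ) : ℝ := Real.sqrt (p.1 ^ 2 + p.2 ^ 2)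

/-- The open Euclidean disk `{(x,y) : x²+y² < r²}` centered at the origin. -/
def disk2 (r : ℝ) : Set (ℝ × ℝ) := {p : ℝ × ℝ | p.1 ^ 2 + p.2 ^ 2 < r ^ 2}

/-- The closed Euclidean disk `{(x,y) : x²+y² ≤ r²}` centered at the origin. -/
def closedDisk2 (r : ℝ) : Set (ℝ × ℝ) := {p : ℝ × ℝ | p.1 ^ 2 + p.2 ^ 2 ≤ r ^ 2}

/-- The circle `{(x,y) : x²+y² = r²}` centered at the origin. -/
def circle2 (r : ℝ) : Set (ℝ × ℝ) := {p : ℝ × ℝ | p.1 ^ 2 + p.2 ^ 2 = r ^ 2}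

/-- Dot product on `ℝ²`. -/
def dot2 (p q : ℝ × ℝ) : ℝ := p.1 * q.1 + p.2 * q.2

/-- The perpendicular vector `v^⊥ = (v₂, −v₁)`. -/
def perp2 (v : ℝ × ℝ) : ℝ × ℝ := (v.2, -v.1)

/-- The function `g = χ_E · ∏ᵢ |fᵢ|^(γᵢ)`. -/
def stdFun (n : ℕ) (f : Fin n → ℝ × ℝ → ℝ) (γ : Fin n → ℝ) (E : Set (ℝ × ℝ)) :
    ℝ × ℝ → ℝ :=
  E.indicator fun p => ∏ i, |f i p| ^ (γ i)

/-- A boundary curve for the region `E`: one half of a graph `y = h(|x|^{1/N})` or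
`x = h(|y|^{1/N})` with `h` real analytic, `h 0 = 0`, joining the origin to the circle
of radius `r₀`. -/
def IsPuiseuxBdryCurve (r₀ : ℝ) (C : Set (ℝ × ℝ)) : Prop :=
  ∃ (N : ℕ) (h : ℝ → ℝ) (I : Set ℝ) (σ : ℝ),
    0 < N ∧ (σ = 1 ∨ σ = -1) ∧ IsOpen I ∧ Icc (0:ℝ) (r₀ ^ ((N:ℝ)⁻¹)) ⊆ I ∧
    AnalyticOnNhd ℝ h I ∧ h 0 = 0 ∧
    (C = {p : ℝ × ℝ | p ∈ closedDisk2 r₀ ∧ 0 ≤ σ * p.1 ∧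
            p.2 = h (|p.1| ^ ((N:ℝ)⁻¹))} ∨
     C = {p : ℝ × ℝ | p ∈ closedDisk2 r₀ ∧ 0 ≤ σ * p.2 ∧
            p.1 = h (|p.2| ^ ((N:ℝ)⁻¹))}) ∧
    (0:ℝ×ℝ) ∈ C ∧ ∃ p ∈ C, nrm2 p = r₀

/-- The admissible form of the set `E`: either a disk centered at the origin, or a finite
disjoint union of open regions, each bounded by two Puiseux boundary curves joining the
origin to the circle of radius `r₀` together with an arc of that circle, where all the
boundary curves are pairwise disjoint in the closed disk minus the origin. -/
def IsStdDomain (E : Set (ℝ × ℝ)) : Prop :=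
  (∃ r₀ > (0:ℝ), E = disk2 r₀) ∨
  (∃ r₀ > (0:ℝ), ∃ m : ℕ, ∃ Es : Fin m → Set (ℝ × ℝ), ∃ Cs : Fin m → Fin 2 → Set (ℝ × ℝ),
    E = Set.iUnion Es ∧
    (Pairwise fun i j => Disjoint (Es i) (Es j)) ∧
    (∀ i, IsOpen (Es i) ∧ Es i ⊆ disk2 r₀ ∧ (0:ℝ×ℝ) ∈ closure (Es i) ∧
      frontier (Es i) ⊆ Cs i 0 ∪ Cs i 1 ∪ circle2 r₀) ∧
    (∀ i j, IsPuiseuxBdryCurve r₀ (Cs i j)) ∧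
    (Pairwise fun (q q' : Fin m × Fin 2) =>
      Disjoint (Cs q.1 q.2 ∩ (closedDisk2 r₀ \ {0}))
               (Cs q'.1 q'.2 ∩ (closedDisk2 r₀ \ {0}))))

/-- The standard form of the paper: the `fᵢ` are real analytic and not identically zero
near the origin, `g = χ_E ∏ |fᵢ|^(γᵢ)` is integrable near the origin, and `E` is an
admissible domain. -/
structure StandardForm (n : ℕ) (f : Fin n → ℝ × ℝ → ℝ) (γ : Fin n → ℝ)
    (E : Set (ℝ × ℝ)) : Prop where
  analytic : ∃ U ∈ 𝓝 (0 : ℝ × ℝ), ∀ i, AnalyticOnNhd ℝ (f i) U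
  nontriv : ∀ i, ¬ (∀ᶠ p in 𝓝 (0 : ℝ × ℝ), f i p = 0)
  integ : ∃ U ∈ 𝓝 (0 : ℝ × ℝ), IntegrableOn (stdFun n f γ E) U
  domain : IsStdDomain E

/-- The two-sided bound `c₁ rᵉ |log r|^d ≤ ∫_{x²+y²<r²} g ≤ c₂ rᵉ |log r|^d` for all small
`r` ("ball exponents" `ε`, `d` of `g`, as in Lemma 1.1). -/
def BallBound (g : ℝ × ℝ → ℝ) (ε : ℝ) (d : ℕ) : Prop :=
  0 < ε ∧ d ≤ 1 ∧ ∃ c₁ > (0:ℝ), ∃ c₂ > (0:ℝ), ∃ c₃ > (0:ℝ), ∀ r : ℝ, 0 < r → r < c₃ →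
    c₁ * r ^ ε * |Real.log r| ^ d ≤ (∫ p in disk2 r, g p) ∧
    (∫ p in disk2 r, g p) ≤ c₂ * r ^ ε * |Real.log r| ^ d

/-- The strip `{(x,y) : |(x,y)·v| < r, |(x,y)·v^⊥| < c}`. -/
def strip2 (v : ℝ × ℝ) (r c : ℝ) : Set (ℝ × ℝ) :=
  {p : ℝ × ℝ | |dot2 p v| < r ∧ |dot2 p (perp2 v)| < c}

/-- The two-sided bound `a r^δ |log r|^e ≤ ∫_{strip} g ≤ b r^δ |log r|^e` for all small `r`,
for every small `c` ("strip exponents" `δ_v`, `e_v` of `g` in the direction `v`, as in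
Lemma 1.2). -/
def StripBound (g : ℝ × ℝ → ℝ) (v : ℝ × ℝ) (δ : ℝ) (e : ℕ) : Prop :=
  0 < δ ∧ e ≤ 1 ∧ ∃ cv > (0:ℝ), ∀ c : ℝ, 0 < c → c < cv →
    ∃ a > (0:ℝ), ∃ b > (0:ℝ), ∀ r : ℝ, 0 < r → r < c →
      a * r ^ δ * |Real.log r| ^ e ≤ (∫ p in strip2 v r c, g p) ∧
      (∫ p in strip2 v r c, g p) ≤ b * r ^ δ * |Real.log r| ^ e

/-- The order of vanishing of `f` at the origin. -/
def vanishingOrder (f : ℝ × ℝ → ℝ) : ℕ :=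
  sInf {k : ℕ | iteratedFDeriv ℝ k f 0 ≠ 0}

/-- (A constant multiple of) the sum of the terms of lowest total degree in the Taylor
expansion of `f` at the origin, as a homogeneous function on `ℝ²`. -/
def lowestPart (f : ℝ × ℝ → ℝ) (p : ℝ × ℝ) : ℝ :=
  iteratedFDeriv ℝ (vanishingOrder f) f 0 (fun _ => p)

/-- `w` is a tangent direction of the set `C` at the origin. -/
def IsTangentDirAt (C : Set (ℝ × ℝ)) (w : ℝ × ℝ) : Prop :=
  ∃ p : ℕ → ℝ × ℝ, (∀ k, p k ∈ C ∧ p k ≠ 0) ∧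
    Tendsto p atTop (𝓝 (0:ℝ×ℝ)) ∧
    (Tendsto (fun k => (nrm2 (p k))⁻¹ • p k) atTop (𝓝 w) ∨
     Tendsto (fun k => (nrm2 (p k))⁻¹ • p k) atTop (𝓝 (-w)))

/-- `w` is the direction of one of the lines `l₁, …, l_p`: a line through the origin in the
zero set of the lowest-degree Taylor part of some `fᵢ`, or a tangent line at the origin to
one of the boundary curves of `E`. -/
def ExceptionalDir (n : ℕ) (f : Fin n → ℝ × ℝ → ℝ) (E : Set (ℝ × ℝ)) (w : ℝ × ℝ) : Prop :=
  (∃ i, lowestPart (f i) w = 0) ∨ IsTangentDirAt (frontier E) w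

/-- Conditions (1.2)-(1.3) on the factor `α`: `C¹` away from the origin, bounded by `A`,
with gradient bounded by `A (x²+y²)^{-1/2}`. -/
def AlphaBound (α : ℝ × ℝ → ℝ) (A : ℝ) : Prop :=
  ContDiffOn ℝ 1 α {(0:ℝ×ℝ)}ᶜ ∧ (∀ p, |α p| ≤ A) ∧
  ∀ p : ℝ × ℝ, p ≠ 0 → ‖fderiv ℝ α p‖ ≤ A * (nrm2 p)⁻¹

/-- A smooth bump function equal to `1` near `(x₀, y₀)`, supported within (Euclidean)
distance `r` of `(x₀, y₀)`. -/
def IsBump (φ : ℝ × ℝ → ℝ) (x₀ y₀ : ℝ) (r : ℝ) : Prop :=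
  ContDiff ℝ (⊤ : ℕ∞) φ ∧ HasCompactSupport φ ∧ (∀ᶠ p in 𝓝 ((x₀, y₀) : ℝ × ℝ), φ p = 1) ∧
    tsupport φ ⊆ {p : ℝ × ℝ | (p.1 - x₀) ^ 2 + (p.2 - y₀) ^ 2 < r ^ 2}

/-- The oscillatory integral `∫_S h(x,y) e^{i(tx+uy)} dx dy`. -/
def oscInt (h : ℝ × ℝ → ℝ) (S : Set (ℝ × ℝ)) (t u : ℝ) : ℂ :=
  ∫ p in S, (h p : ℂ) * Complex.exp (Complex.I * ((t : ℂ) * (p.1 : ℂ) + (u : ℂ) * (p.2 : ℂ)))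

/-- The convolution kernel `K(t,u) = ∫ m(x,y) e^{i(tx+uy)} dx dy`. -/
def Kfull (m : ℝ × ℝ → ℝ) (t u : ℝ) : ℂ :=
  oscInt m Set.univ t u

/-- The localized kernel `K_φ(t,u) = ∫ φ(x,y) m(x,y) e^{i(tx+uy)} dx dy`. -/
def Kphi (φ m : ℝ × ℝ → ℝ) (t u : ℝ) : ℂ :=
  oscInt (fun p => φ p * m p) Set.univ t u

/-- `k` is a Puiseux function of index `N` on `[0,a]`: `k(x) = k'(x^{1/N})` for a function
`k'` real analytic on an open set containing `[0, a^{1/N}]`; equivalently `x ↦ k(x^N)` is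
real analytic. -/
def PuiseuxOn (N : ℕ) (a : ℝ) (k : ℝ → ℝ) : Prop :=
  ∃ (k' : ℝ → ℝ) (I : Set ℝ), IsOpen I ∧ Icc (0:ℝ) (a ^ ((N:ℝ)⁻¹)) ⊆ I ∧
    AnalyticOnNhd ℝ k' I ∧ ∀ x ∈ Icc (0:ℝ) a, k x = k' (x ^ ((N:ℝ)⁻¹))

/-- `k(x) = l·x^s + higher order terms` as `x → 0⁺`. -/
def LeadingTerm (k : ℝ → ℝ) (l s : ℝ) : Prop :=
  Tendsto (fun x => k x / x ^ s) (𝓝[>] (0:ℝ)) (𝓝 l)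

/-- The mixed partial derivative `∂_x^l ∂_y^m F`. -/
def pderiv2 (l m : ℕ) (F : ℝ × ℝ → ℝ) (p : ℝ × ℝ) : ℝ :=
  iteratedDeriv l (fun x => iteratedDeriv m (fun y => F (x, y)) p.2) p.1

/-- The descending product `α(α−1)⋯(α−l+1)`. -/
def descProd (α : ℝ) (l : ℕ) : ℝ := ∏ j ∈ Finset.range l, (α - (j : ℝ))

/-- The sliver `{(x,y) : 0 < x < a, g(x) < y < G(x)}`. -/
def sliverSet (a : ℝ) (g G : ℝ → ℝ) : Set (ℝ × ℝ) :=
  {q : ℝ × ℝ | 0 < q.1 ∧ q.1 < a ∧ g q.1 < q.2 ∧ q.2 < G q.1}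

/-- A wedge of radius `r₀` at the origin: a region bounded by two lines through the origin
and the circle of radius `r₀`. -/
def IsWedge (r₀ : ℝ) (W : Set (ℝ × ℝ)) : Prop :=
  ∃ θ₁ θ₂ : ℝ, θ₁ < θ₂ ∧ θ₂ ≤ θ₁ + 2 * π ∧
    W = {p : ℝ × ℝ | ∃ ρ θ : ℝ, 0 < ρ ∧ ρ < r₀ ∧ θ₁ < θ ∧ θ < θ₂ ∧
      p = (ρ * Real.cos θ, ρ * Real.sin θ)}

/-!
Let `s` be the degree of homogeneity of `∏ᵢ |Fᵢ|^(γᵢ)`. If `w = v^⊥` is not on any of the lines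
`l₁, …, l_p`, then on a conic neighbourhood of the half-line `ℝ₊ w` no `Fᵢ` vanishes and no
boundary curve of `E` enters, so there `g` is either `0` or comparable to `|p|^s`. In the second
case a conic sector of a disk already carries mass `≈ r^(s+2)`, which forces `ε ≤ s + 2`. In both
cases `g = O(|p|^(t-2))` near the line `ℝ w`, where `t = min ε 1`.

A strip of width `r` around `ℝ w` is covered by a disk of radius `O(r)`, of mass `o(r^a)` for every
`a < ε`, and by the cone around `ℝ w`. For `0 < a < t ≤ 1` one has `|p|^(t-2) ≲
|p·v|^(a-1) |p·w|^(t-1-a)` on the cone, since `a - 1 ≤ 0`, and the right-hand side is an integrable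
product of functions of the two orthogonal coordinates with integral `O(r^a)` over the strip. Hence
`δ_v ≥ a` for all `a < t`, that is `δ_v ≥ t`. The exceptional lines are finitely many because
a nonzero analytic function on the circle has finitely many zeros and a Puiseux curve has a single
tangent direction at the origin.
-/

section AnalyticGerm

variable {E F : Type*} [NormedAddCommGroup E] [NormedSpace ℝ E]
  [NormedAddCommGroup F] [NormedSpace ℝ F] [CompleteSpace F] {f : E → F} {x : E}

lemma iteratedFDeriv_eq_zero_of_diagonal_eq_zero (hf : AnalyticAt ℝ f x) {k : ℕ}
    (h : ∀ y, iteratedFDeriv ℝ k f x (fun _ => y) = 0) : iteratedFDeriv ℝ k f x = 0 := by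
  obtain ⟨p, r, hp⟩ := hf
  have hpk : (fun y => p k fun _ => y) = 0 := by
    ext y
    have := hp.factorial_smul y k
    simpa [h, Nat.factorial_ne_zero, ← Nat.cast_smul_eq_nsmul ℝ] using this
  ext v
  rw [hp.iteratedFDeriv_eq_sum_of_completeSpace, ← (p k).iteratedFDeriv_comp_diagonal 0 v, hpk]
  simp

lemma eventually_eq_zero_of_iteratedFDeriv_eq_zero (hf : AnalyticAt ℝ f x)
    (h : ∀ k, iteratedFDeriv ℝ k f x = 0) : ∀ᶠ y in 𝓝 x, f y = 0 := by
  obtain ⟨p, r, hp⟩ := hf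
  filter_upwards [eball_mem_nhds x hp.r_pos] with y hy
  have hsum := hp.hasSum_iteratedFDeriv (y := y - x)
    (by simpa only [mem_eball, edist_eq_enorm_sub, sub_zero] using hy)
  simp only [h, zero_apply, smul_zero] at hsum
  simpa only [add_sub_cancel] using hsum.unique hasSum_zero

lemma isBigO_sub_leading_iteratedFDeriv (hf : AnalyticAt ℝ f x) {k : ℕ}
    (h : ∀ j < k, iteratedFDeriv ℝ j f x = 0) :
    (fun y => f (x + y) - (k.factorial : ℝ)⁻¹ • iteratedFDeriv ℝ k f x (fun _ => y))
      =O[𝓝 0] fun y => ‖y‖ ^ (k + 1) := by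
  obtain ⟨p, r, hp⟩ := hf
  have hcoeff (j : ℕ) (y : E) :
      p j (fun _ => y) = (j.factorial : ℝ)⁻¹ • iteratedFDeriv ℝ j f x (fun _ => y) := by
    rw [← hp.factorial_smul, ← Nat.cast_smul_eq_nsmul ℝ, inv_smul_smul₀ (by positivity)]
  refine (hp.hasFPowerSeriesAt.isBigO_sub_partialSum_pow (k + 1)).congr_left fun y => ?_
  rw [FormalMultilinearSeries.partialSum, Finset.sum_range_succ, Finset.sum_eq_zero, zero_add,
    hcoeff]
  intro j hj
  simp [hcoeff, h j (Finset.mem_range.1 hj)]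

end AnalyticGerm

section LowestPart

variable {f : ℝ × ℝ → ℝ}

lemma lowestPart_smul (f : ℝ × ℝ → ℝ) (b : ℝ) (p : ℝ × ℝ) :
    lowestPart f (b • p) = b ^ vanishingOrder f * lowestPart f p := by
  simpa [lowestPart] using
    (iteratedFDeriv ℝ (vanishingOrder f) f 0).map_smul_univ (fun _ => b) (fun _ => p)

lemma analyticAt_lowestPart (f : ℝ × ℝ → ℝ) (p : ℝ × ℝ) : AnalyticAt ℝ (lowestPart f) p :=
  ((iteratedFDeriv ℝ (vanishingOrder f) f 0).analyticAt (x := fun _ => p)).fun_comp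
    (f := fun (q : ℝ × ℝ) (_ : Fin (vanishingOrder f)) => q) (.pi fun _ => analyticAt_id)

lemma exists_lowestPart_ne_zero (hf : AnalyticAt ℝ f 0) (hne : ¬ ∀ᶠ p in 𝓝 0, f p = 0) :
    ∃ p, lowestPart f p ≠ 0 := by
  have hnonempty : {k : ℕ | iteratedFDeriv ℝ k f 0 ≠ 0}.Nonempty := by
    by_contra! h
    exact hne (eventually_eq_zero_of_iteratedFDeriv_eq_zero hf fun k => by
      simpa using eq_empty_iff_forall_notMem.1 h k)
  by_contra! h
  exact Nat.sInf_mem hnonempty (iteratedFDeriv_eq_zero_of_diagonal_eq_zero hf h)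

lemma isBigO_sub_lowestPart (hf : AnalyticAt ℝ f 0) :
    (fun p => f p - ((vanishingOrder f).factorial : ℝ)⁻¹ * lowestPart f p)
      =O[𝓝 0] fun p => ‖p‖ ^ (vanishingOrder f + 1) := by
  simpa [lowestPart] using isBigO_sub_leading_iteratedFDeriv hf fun j hj => by
    simpa using Nat.notMem_of_lt_sInf hj

end LowestPart

/-- The filter of pairs `(b, u)` with `b → 0⁺` and `u → w`. The points `b • u` fill out small
conic neighbourhoods of the half-line `ℝ₊ w` near the origin. -/
def conicNhds (w : ℝ × ℝ) : Filter (ℝ × (ℝ × ℝ)) := 𝓝[>] 0 ×ˢ 𝓝 w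

section ConicNhds

variable {f : ℝ × ℝ → ℝ} {w : ℝ × ℝ}

lemma eventually_fst_pos_conicNhds (w : ℝ × ℝ) : ∀ᶠ x in conicNhds w, 0 < x.1 :=
  tendsto_fst.eventually self_mem_nhdsWithin

lemma tendsto_fst_conicNhds (w : ℝ × ℝ) : Tendsto Prod.fst (conicNhds w) (𝓝 0) :=
  tendsto_fst.mono_right nhdsWithin_le_nhds

lemma tendsto_snd_conicNhds (w : ℝ × ℝ) : Tendsto Prod.snd (conicNhds w) (𝓝 w) :=
  tendsto_snd

lemma tendsto_smul_conicNhds (w : ℝ × ℝ) :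
    Tendsto (fun x : ℝ × (ℝ × ℝ) => x.1 • x.2) (conicNhds w) (𝓝 0) := by
  simpa using (tendsto_fst_conicNhds w).smul (tendsto_snd_conicNhds w)

lemma tendsto_sub_lowestPart_div_pow (hf : AnalyticAt ℝ f 0) (w : ℝ × ℝ) :
    Tendsto (fun x : ℝ × (ℝ × ℝ) => (f (x.1 • x.2) -
      ((vanishingOrder f).factorial : ℝ)⁻¹ * lowestPart f (x.1 • x.2)) / x.1 ^ vanishingOrder f)
      (conicNhds w) (𝓝 0) := by
  have hbound : Tendsto (fun x : ℝ × (ℝ × ℝ) => x.1 * ‖x.2‖ ^ (vanishingOrder f + 1))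
      (conicNhds w) (𝓝 0) := by
    simpa using (tendsto_fst_conicNhds w).mul ((tendsto_snd_conicNhds w).norm.pow _)
  refine Asymptotics.IsBigO.trans_tendsto ?_ hbound
  refine (((isBigO_sub_lowestPart hf).comp_tendsto (tendsto_smul_conicNhds w)).mul
    (Asymptotics.isBigO_refl (fun x : ℝ × (ℝ × ℝ) => (x.1 ^ vanishingOrder f)⁻¹) _)).congr'
    (.of_forall fun x => (div_eq_mul_inv _ _).symm) ?_
  filter_upwards [eventually_fst_pos_conicNhds w] with x hx
  simp only [Function.comp_apply, norm_smul, norm_of_nonneg hx.le, mul_pow]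
  field_simp
  ring

lemma tendsto_div_pow_vanishingOrder (hf : AnalyticAt ℝ f 0) (w : ℝ × ℝ) :
    Tendsto (fun x : ℝ × (ℝ × ℝ) => f (x.1 • x.2) / x.1 ^ vanishingOrder f)
      (conicNhds w) (𝓝 (((vanishingOrder f).factorial : ℝ)⁻¹ * lowestPart f w)) := by
  have hlead : Tendsto (fun x : ℝ × (ℝ × ℝ) =>
      ((vanishingOrder f).factorial : ℝ)⁻¹ * lowestPart f x.2)
      (conicNhds w) (𝓝 (((vanishingOrder f).factorial : ℝ)⁻¹ * lowestPart f w)) :=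
    ((analyticAt_lowestPart f w).continuousAt.tendsto.comp (tendsto_snd_conicNhds w)).const_mul _
  refine ((hlead.add (tendsto_sub_lowestPart_div_pow hf w)).congr' ?_).trans (by simp)
  filter_upwards [eventually_fst_pos_conicNhds w] with x hx
  rw [lowestPart_smul]
  field_simp
  ring

/-- The degree of homogeneity of `∏ᵢ |Fᵢ|^(γᵢ)`, where `Fᵢ` is the lowest-degree Taylor part
of `fᵢ` at the origin. -/
def leadingDegree {ι : Type*} [Fintype ι] (f : ι → ℝ × ℝ → ℝ) (γ : ι → ℝ) : ℝ :=
  ∑ i, vanishingOrder (f i) * γ i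

lemma exists_tendsto_prod_abs_rpow_div_rpow {ι : Type*} [Fintype ι] {f : ι → ℝ × ℝ → ℝ}
    (hf : ∀ i, AnalyticAt ℝ (f i) 0) (hw : ∀ i, lowestPart (f i) w ≠ 0) (γ : ι → ℝ) :
    ∃ L > 0, Tendsto
      (fun x : ℝ × (ℝ × ℝ) => (∏ i, |f i (x.1 • x.2)| ^ γ i) / x.1 ^ leadingDegree f γ)
      (conicNhds w) (𝓝 L) := by
  have hlim (i : ι) : 0 < |((vanishingOrder (f i)).factorial : ℝ)⁻¹ * lowestPart (f i) w| :=
    abs_pos.2 (mul_ne_zero (by positivity) (hw i))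
  refine ⟨_, Finset.prod_pos fun i _ => rpow_pos_of_pos (hlim i) (γ i),
    (tendsto_finsetProd .univ fun i _ => (tendsto_div_pow_vanishingOrder (hf i) w).abs.rpow_const
      (.inl (hlim i).ne')).congr' ?_⟩
  filter_upwards [eventually_fst_pos_conicNhds w] with x hx
  rw [leadingDegree, rpow_sum_of_pos hx, ← Finset.prod_div_distrib]
  refine Finset.prod_congr rfl fun i _ => ?_
  rw [abs_div, div_rpow (abs_nonneg _) (abs_nonneg _), abs_of_pos (pow_pos hx _),
    ← rpow_natCast, ← rpow_mul hx.le]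

end ConicNhds

section EuclideanPlane

lemma nrm2_eq_norm (p : ℝ × ℝ) : nrm2 p = ‖Complex.equivRealProdCLM.symm p‖ := by
  rw [nrm2, Complex.equivRealProdCLM_symm_apply, Complex.norm_add_mul_I]

lemma continuous_nrm2 : Continuous nrm2 := by
  unfold nrm2
  fun_prop

lemma nrm2_smul (a : ℝ) (p : ℝ × ℝ) : nrm2 (a • p) = |a| * nrm2 p := by
  simp only [nrm2_eq_norm, map_smul, norm_smul, Real.norm_eq_abs]

lemma nrm2_neg (p : ℝ × ℝ) : nrm2 (-p) = nrm2 p := by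
  simp [nrm2]

lemma nrm2_perp2 (v : ℝ × ℝ) : nrm2 (perp2 v) = nrm2 v := by
  simp [nrm2, perp2, add_comm]

lemma perp2_injective : Function.Injective perp2 := fun p q h => by
  simpa [perp2, Prod.ext_iff, and_comm] using h

lemma nrm2_pos {p : ℝ × ℝ} (hp : p ≠ 0) : 0 < nrm2 p := by
  simpa [nrm2_eq_norm] using hp

lemma ne_zero_of_nrm2_eq_one {w : ℝ × ℝ} (hw : nrm2 w = 1) : w ≠ 0 := by
  rintro rfl
  simp [nrm2] at hw

lemma sq_add_sq_of_nrm2_eq_one {w : ℝ × ℝ} (hw : nrm2 w = 1) : w.1 ^ 2 + w.2 ^ 2 = 1 := by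
  simpa [nrm2] using hw

lemma exists_angle_eq_smul (p : ℝ × ℝ) :
    ∃ θ ∈ Icc (-π) π, p = nrm2 p • (cos θ, sin θ) := by
  have hnorm : nrm2 p = ‖(⟨p.1, p.2⟩ : ℂ)‖ := by
    rw [nrm2, Complex.norm_eq_sqrt_sq_add_sq]
  refine ⟨Complex.arg ⟨p.1, p.2⟩, ⟨(Complex.neg_pi_lt_arg _).le, Complex.arg_le_pi _⟩, ?_⟩
  rw [hnorm]
  exact Prod.ext (Complex.norm_mul_cos_arg ⟨p.1, p.2⟩).symm
    (Complex.norm_mul_sin_arg ⟨p.1, p.2⟩).symm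

lemma mem_disk2_iff {r : ℝ} (hr : 0 ≤ r) {p : ℝ × ℝ} : p ∈ disk2 r ↔ nrm2 p < r :=
  (sqrt_lt (by positivity) hr).symm

lemma isOpen_disk2 (r : ℝ) : IsOpen (disk2 r) :=
  isOpen_lt (by fun_prop) continuous_const

lemma nhds_zero_hasBasis_disk2 : (𝓝 (0 : ℝ × ℝ)).HasBasis (fun r : ℝ => 0 < r) disk2 := by
  have := Complex.equivRealProdCLM.symm.toHomeomorph.isInducing.basis_nhds
    (x := 0) nhds_basis_ball
  refine this.congr (fun _ => Iff.rfl) fun r hr => ?_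
  ext p
  simp [mem_disk2_iff hr.le, nrm2_eq_norm]

lemma finite_unit_zeros_lowestPart {f : ℝ × ℝ → ℝ} (hf : AnalyticAt ℝ f 0)
    (hne : ¬ ∀ᶠ p in 𝓝 0, f p = 0) : {w | nrm2 w = 1 ∧ lowestPart f w = 0}.Finite := by
  set F : ℝ → ℝ := fun θ => lowestPart f (cos θ, sin θ)
  have hF : AnalyticOnNhd ℝ F univ := fun θ _ =>
    (analyticAt_lowestPart f _).fun_comp (f := fun θ => (cos θ, sin θ))
      (Real.analyticAt_cos.prod Real.analyticAt_sin)
  obtain ⟨θ₀, hθ₀⟩ : ∃ θ₀, F θ₀ ≠ 0 := by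
    obtain ⟨p, hp⟩ := exists_lowestPart_ne_zero hf hne
    obtain ⟨θ, -, hθ⟩ := exists_angle_eq_smul p
    refine ⟨θ, fun h => hp ?_⟩
    rw [hθ, lowestPart_smul, show lowestPart f (cos θ, sin θ) = 0 from h, mul_zero]
  have hcodiscrete : F ⁻¹' {0}ᶜ ∈ codiscreteWithin (Icc (-π) π) :=
    codiscreteWithin_mono (subset_univ _)
      (hF.preimage_zero_mem_codiscrete hθ₀)
  refine ((isCompact_Icc.finite_sdiff_of_mem_codiscreteWithin hcodiscrete).image
    fun θ => (cos θ, sin θ)).subset ?_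
  rintro w ⟨hw, hfw⟩
  obtain ⟨θ, hθ, rfl⟩ : ∃ θ ∈ Icc (-π) π, w = (cos θ, sin θ) := by
    simpa [hw] using exists_angle_eq_smul w
  exact ⟨θ, ⟨hθ, by simpa [F] using hfw⟩, rfl⟩

end EuclideanPlane

/-- The direction `p / |p|` of a nonzero point `p` of the plane (with junk value `0` at the
origin). -/
def unitDir (p : ℝ × ℝ) : ℝ × ℝ := (nrm2 p)⁻¹ • p

section TangentDirections

variable {C : Set (ℝ × ℝ)} {w : ℝ × ℝ}

lemma unitDir_eq_self (hw : nrm2 w = 1) : unitDir w = w := by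
  simp [unitDir, hw]

lemma unitDir_smul {a : ℝ} (ha : 0 < a) (p : ℝ × ℝ) : unitDir (a • p) = unitDir p := by
  rw [unitDir, nrm2_smul, abs_of_pos ha, smul_smul, mul_inv_rev, inv_mul_cancel_right₀ ha.ne',
    unitDir]

lemma continuousAt_unitDir {p : ℝ × ℝ} (hp : p ≠ 0) : ContinuousAt unitDir p :=
  (continuous_nrm2.continuousAt.inv₀ (nrm2_pos hp).ne').smul continuousAt_id

lemma mapClusterPt_unitDir_iff_exists_seq :
    MapClusterPt w (𝓝[C \ {0}] 0) unitDir ↔ ∃ p : ℕ → ℝ × ℝ, (∀ k, p k ∈ C ∧ p k ≠ 0) ∧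
      Tendsto p atTop (𝓝 0) ∧ Tendsto (fun k => unitDir (p k)) atTop (𝓝 w) := by
  constructor
  · intro h
    obtain ⟨p, hdir, hp⟩ := h.exists_seq_tendsto
    obtain ⟨hp, hmem⟩ := tendsto_nhdsWithin_iff.1 hp
    obtain ⟨K, hK⟩ := eventually_atTop.1 hmem
    exact ⟨fun k => p (k + K), fun k => hK _ (Nat.le_add_left K k),
      (tendsto_add_atTop_iff_nat K).2 hp, (tendsto_add_atTop_iff_nat K).2 hdir⟩
  · rintro ⟨p, hmem, hp, hdir⟩
    exact hdir.mapClusterPt.of_comp (tendsto_nhdsWithin_iff.2 ⟨hp, .of_forall hmem⟩)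

lemma isTangentDirAt_iff_mapClusterPt :
    IsTangentDirAt C w ↔ MapClusterPt w (𝓝[C \ {0}] 0) unitDir ∨
      MapClusterPt (-w) (𝓝[C \ {0}] 0) unitDir := by
  simp only [mapClusterPt_unitDir_iff_exists_seq, IsTangentDirAt, ← exists_or, ← and_or_left,
    unitDir]

lemma isTangentDirAt_neg : IsTangentDirAt C (-w) ↔ IsTangentDirAt C w := by
  rw [isTangentDirAt_iff_mapClusterPt, neg_neg, or_comm, isTangentDirAt_iff_mapClusterPt]

lemma finite_isTangentDirAt_of_tendsto {w₀ : ℝ × ℝ}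
    (h : Tendsto unitDir (𝓝[C \ {0}] 0) (𝓝 w₀)) : {w | IsTangentDirAt C w}.Finite := by
  have eq_of_mapClusterPt (w : ℝ × ℝ) (hw : MapClusterPt w (𝓝[C \ {0}] 0) unitDir) : w = w₀ :=
    eq_of_nhds_neBot (hw.clusterPt.mono h)
  refine (toFinite {w₀, -w₀}).subset fun w hw => ?_
  rcases isTangentDirAt_iff_mapClusterPt.1 hw with hw | hw
  · exact .inl (eq_of_mapClusterPt w hw)
  · exact .inr (neg_eq_iff_eq_neg.1 (eq_of_mapClusterPt _ hw))

lemma exists_mapClusterPt_unitDir_of_eventually_mem_iUnion {ι : Type*} [Finite ι]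
    {D : ι → Set (ℝ × ℝ)} (hC : ∀ᶠ p in 𝓝 0, p ∈ C → ∃ i, p ∈ D i)
    (hw : MapClusterPt w (𝓝[C \ {0}] 0) unitDir) :
    ∃ i, MapClusterPt w (𝓝[D i \ {0}] 0) unitDir := by
  obtain ⟨U, hU, hdir⟩ := mapClusterPt_iff_ultrafilter.1 hw
  have hcover : ∀ᶠ p in U, ∃ i, p ∈ D i \ {0} := by
    filter_upwards [hU self_mem_nhdsWithin, hU (nhdsWithin_le_nhds hC)] with p hp hpC
    obtain ⟨i, hi⟩ := hpC hp.1
    exact ⟨i, hi, hp.2⟩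
  obtain ⟨i, hi⟩ := U.eventually_exists_iff.1 hcover
  exact ⟨i, mapClusterPt_iff_ultrafilter.2
    ⟨U, le_inf (hU.trans nhdsWithin_le_nhds) (le_principal_iff.2 hi), hdir⟩⟩

lemma finite_isTangentDirAt_of_eventually_mem_iUnion {ι : Type*} [Finite ι]
    {D : ι → Set (ℝ × ℝ)} (hC : ∀ᶠ p in 𝓝 0, p ∈ C → ∃ i, p ∈ D i)
    (hD : ∀ i, {w | IsTangentDirAt (D i) w}.Finite) : {w | IsTangentDirAt C w}.Finite := by
  refine (finite_iUnion hD).subset fun w hw => mem_iUnion.2 ?_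
  simp only [mem_ofPred_eq, isTangentDirAt_iff_mapClusterPt] at hw ⊢
  rcases hw with hw | hw
  · exact (exists_mapClusterPt_unitDir_of_eventually_mem_iUnion hC hw).imp fun _ => .inl
  · exact (exists_mapClusterPt_unitDir_of_eventually_mem_iUnion hC hw).imp fun _ => .inr

lemma eventually_smul_notMem_of_not_isTangentDirAt (hw : nrm2 w = 1)
    (hC : ¬ IsTangentDirAt C w) : ∀ᶠ x in conicNhds w, x.1 • x.2 ∉ C := by
  have hw₀ : w ≠ 0 := ne_zero_of_nrm2_eq_one hw
  have hcluster : ¬ MapClusterPt w (𝓝[C \ {0}] 0) unitDir :=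
    fun h => hC (isTangentDirAt_iff_mapClusterPt.2 (.inl h))
  simp only [mapClusterPt_iff_frequently, not_forall, not_frequently] at hcluster
  obtain ⟨s, hs, havoid⟩ := hcluster
  have hdir : Tendsto (fun x : ℝ × (ℝ × ℝ) => unitDir x.2) (conicNhds w) (𝓝 w) := by
    have := (continuousAt_unitDir hw₀).tendsto.comp (tendsto_snd_conicNhds w)
    rwa [unitDir_eq_self hw] at this
  filter_upwards [hdir hs, (tendsto_smul_conicNhds w).eventually
    (eventually_nhdsWithin_iff.1 havoid), eventually_fst_pos_conicNhds w,
    (tendsto_snd_conicNhds w).eventually_ne hw₀] with x hxs hxC hpos hne hmem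
  exact hxC ⟨hmem, smul_ne_zero hpos.ne' hne⟩ (by rwa [unitDir_smul hpos])

end TangentDirections

section Curves

variable {C : Set (ℝ × ℝ)} {r₀ : ℝ}

lemma exists_tendsto_unitDir_of_analyticAt {c : ℝ → ℝ × ℝ} (hc : AnalyticAt ℝ c 0)
    (hne : ¬ ∀ᶠ t in 𝓝 0, c t = 0) : ∃ w, Tendsto (fun t => unitDir (c t)) (𝓝[>] 0) (𝓝 w) := by
  obtain ⟨k, q, hq, hq₀, hcq⟩ := hc.exists_eventuallyEq_pow_smul_nonzero_iff.2 hne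
  refine ⟨unitDir (q 0), Tendsto.congr' ?_ <|
    ((continuousAt_unitDir hq₀).tendsto.comp hq.continuousAt.tendsto).mono_left
      nhdsWithin_le_nhds⟩
  filter_upwards [self_mem_nhdsWithin, nhdsWithin_le_nhds hcq] with t ht htq
  rw [Function.comp_apply, htq, sub_zero, unitDir_smul (pow_pos ht k)]

lemma mul_abs_rpow_inv_pow {N : ℕ} (hN : N ≠ 0) {σ x : ℝ} (hσ : σ = 1 ∨ σ = -1)
    (hx : 0 ≤ σ * x) : σ * (|x| ^ (N : ℝ)⁻¹) ^ N = x := by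
  rw [rpow_inv_natCast_pow (abs_nonneg x) hN]
  rcases hσ with rfl | rfl
  · rw [abs_of_nonneg (by linarith), one_mul]
  · rw [abs_of_nonpos (by linarith), neg_one_mul, neg_neg]

lemma IsPuiseuxBdryCurve.exists_parametrization (hC : IsPuiseuxBdryCurve r₀ C) (hr : 0 ≤ r₀) :
    ∃ (c : ℝ → ℝ × ℝ) (τ : ℝ × ℝ → ℝ), AnalyticAt ℝ c 0 ∧ c 0 = 0 ∧
      (¬ ∀ᶠ t in 𝓝 0, c t = 0) ∧ Continuous τ ∧ τ 0 = 0 ∧ (∀ p, 0 ≤ τ p) ∧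
      ∀ p ∈ C, c (τ p) = p := by
  obtain ⟨N, h, I, σ, hN, hσ, -, hI, hh, h₀, hC, -, -⟩ := hC
  have hh₀ : AnalyticAt ℝ h 0 := hh 0 (hI ⟨le_rfl, rpow_nonneg hr _⟩)
  have hσN : AnalyticAt ℝ (fun t : ℝ => σ * t ^ N) 0 := by fun_prop
  have hσ₀ : σ ≠ 0 := by rcases hσ with rfl | rfl <;> norm_num
  have hinv : (N : ℝ)⁻¹ ≠ 0 := by positivity
  have hroot : Continuous fun x : ℝ => |x| ^ (N : ℝ)⁻¹ :=
    continuous_abs.rpow_const fun _ => .inr (by positivity)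
  have hne : ¬ ∀ᶠ t : ℝ in 𝓝 0, σ * t ^ N = 0 := fun hev => by
    obtain ⟨t, ht, ht₀⟩ :=
      ((hev.filter_mono nhdsWithin_le_nhds).and (eventually_mem_nhdsWithin (s := {0}ᶜ))).exists
    exact mul_ne_zero hσ₀ (pow_ne_zero N ht₀) ht
  rcases hC with rfl | rfl
  · refine ⟨fun t => (σ * t ^ N, h t), fun p => |p.1| ^ (N : ℝ)⁻¹, hσN.prod hh₀,
      by simp [h₀, hN.ne'], fun hev => hne (hev.mono fun t ht => congrArg Prod.fst ht),
      hroot.comp continuous_fst, by simp [hinv], fun p => by positivity, ?_⟩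
    rintro p ⟨-, hp, hph⟩
    exact Prod.ext (mul_abs_rpow_inv_pow hN.ne' hσ hp) hph.symm
  · refine ⟨fun t => (h t, σ * t ^ N), fun p => |p.2| ^ (N : ℝ)⁻¹, hh₀.prod hσN,
      by simp [h₀, hN.ne'], fun hev => hne (hev.mono fun t ht => congrArg Prod.snd ht),
      hroot.comp continuous_snd, by simp [hinv], fun p => by positivity, ?_⟩
    rintro p ⟨-, hp, hph⟩
    exact Prod.ext hph.symm (mul_abs_rpow_inv_pow hN.ne' hσ hp)

lemma IsPuiseuxBdryCurve.exists_tendsto_unitDir (hC : IsPuiseuxBdryCurve r₀ C) (hr : 0 ≤ r₀) :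
    ∃ w, Tendsto unitDir (𝓝[C \ {0}] 0) (𝓝 w) := by
  obtain ⟨c, τ, hc, hc₀, hne, hτ, hτ₀, hτpos, hcτ⟩ := hC.exists_parametrization hr
  obtain ⟨w, hw⟩ := exists_tendsto_unitDir_of_analyticAt hc hne
  have hmem : ∀ᶠ p in 𝓝[C \ {0}] 0, p ∈ C \ {0} := self_mem_nhdsWithin
  have hτlim : Tendsto τ (𝓝[C \ {0}] 0) (𝓝[>] 0) := by
    refine tendsto_nhdsWithin_iff.2 ⟨(hτ.tendsto' 0 0 hτ₀).mono_left nhdsWithin_le_nhds, ?_⟩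
    filter_upwards [hmem] with p hp
    refine (hτpos p).lt_of_ne' fun h => hp.2 ?_
    rw [mem_singleton_iff, ← hcτ p hp.1, h, hc₀]
  refine ⟨w, (hw.comp hτlim).congr' ?_⟩
  filter_upwards [hmem] with p hp
  rw [Function.comp_apply, hcτ p hp.1]

end Curves

lemma frontier_iUnion_subset_of_finite {X ι : Type*} [TopologicalSpace X] [Finite ι]
    (s : ι → Set X) : frontier (⋃ i, s i) ⊆ ⋃ i, frontier (s i) := by
  intro x hx
  rw [frontier, closure_iUnion_of_finite] at hx
  obtain ⟨i, hi⟩ := mem_iUnion.1 hx.1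
  exact mem_iUnion.2 ⟨i, hi, fun hint => hx.2 (interior_mono (subset_iUnion s i) hint)⟩

lemma eventually_notMem_circle2 {r : ℝ} (hr : r ≠ 0) : ∀ᶠ p in 𝓝 0, p ∉ circle2 r := by
  refine (isClosed_eq (by fun_prop) continuous_const).isOpen_compl.eventually_mem fun h => hr ?_
  simpa using h.symm

lemma IsStdDomain.finite_isTangentDirAt_frontier {E : Set (ℝ × ℝ)} (hE : IsStdDomain E) :
    {w | IsTangentDirAt (frontier E) w}.Finite := by
  rcases hE with ⟨r₀, hr, rfl⟩ | ⟨r₀, hr, m, Es, Cs, rfl, -, hEs, hCs, -⟩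
  · refine finite_isTangentDirAt_of_eventually_mem_iUnion (D := fun i : Empty => i.elim) ?_ nofun
    filter_upwards [eventually_notMem_circle2 hr.ne'] with p hp hfr
    exact absurd (frontier_lt_subset_eq (by fun_prop) continuous_const hfr) hp
  · refine finite_isTangentDirAt_of_eventually_mem_iUnion
      (D := fun q : Fin m × Fin 2 => Cs q.1 q.2) ?_ fun q => ?_
    · filter_upwards [eventually_notMem_circle2 hr.ne'] with p hp hfr
      obtain ⟨i, hi⟩ := mem_iUnion.1 (frontier_iUnion_subset_of_finite Es hfr)
      rcases (hEs i).2.2.2 hi with (h | h) | h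
      · exact ⟨(i, 0), h⟩
      · exact ⟨(i, 1), h⟩
      · exact absurd h hp
    · obtain ⟨w, hw⟩ := (hCs q.1 q.2).exists_tendsto_unitDir hr.le
      exact finite_isTangentDirAt_of_tendsto hw

section ExceptionalDirections

variable {n : ℕ} {f : Fin n → ℝ × ℝ → ℝ} {γ : Fin n → ℝ} {E : Set (ℝ × ℝ)}

lemma StandardForm.analyticAt (h : StandardForm n f γ E) (i : Fin n) : AnalyticAt ℝ (f i) 0 := by
  obtain ⟨U, hU, hf⟩ := h.analytic
  exact hf i 0 (mem_of_mem_nhds hU)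

lemma StandardForm.finite_exceptionalDir (h : StandardForm n f γ E) :
    {w | nrm2 w = 1 ∧ ExceptionalDir n f E w}.Finite := by
  refine ((finite_iUnion fun i => finite_unit_zeros_lowestPart (h.analyticAt i)
    (h.nontriv i)).union h.domain.finite_isTangentDirAt_frontier).subset ?_
  rintro w ⟨hw, ⟨i, hi⟩ | hw'⟩
  · exact .inl (mem_iUnion.2 ⟨i, hw, hi⟩)
  · exact .inr hw'

lemma exceptionalDir_neg {w : ℝ × ℝ} : ExceptionalDir n f E (-w) ↔ ExceptionalDir n f E w := by
  have hzero (i : Fin n) : lowestPart (f i) (-w) = 0 ↔ lowestPart (f i) w = 0 := by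
    rw [← neg_one_smul ℝ w, lowestPart_smul]
    simp
  simp only [ExceptionalDir, hzero, isTangentDirAt_neg]

end ExceptionalDirections

section ConicDichotomy

lemma subset_or_disjoint_of_disjoint_frontier {X : Type*} [TopologicalSpace X] {s E : Set X}
    (hs : IsPreconnected s) (h : Disjoint s (frontier E)) : s ⊆ E ∨ Disjoint s E := by
  have hcover : s ⊆ interior E ∪ interior Eᶜ := by
    rw [← compl_frontier_eq_union_interior]
    exact h.subset_compl_right
  refine (hs.subset_or_subset isOpen_interior isOpen_interior
    (disjoint_compl_right.mono interior_subset interior_subset) hcover).imp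
    (·.trans interior_subset) fun h => ?_
  exact disjoint_left.2 fun x hx => interior_subset (h hx)

lemma eventually_smul_mem_or_notMem {E : Set (ℝ × ℝ)} {w : ℝ × ℝ}
    (h : ∀ᶠ x in conicNhds w, x.1 • x.2 ∉ frontier E) :
    (∀ᶠ x in conicNhds w, x.1 • x.2 ∈ E) ∨ ∀ᶠ x in conicNhds w, x.1 • x.2 ∉ E := by
  have hbasis := (nhdsGT_basis (0 : ℝ)).prod (nhds_basis_ball (x := w))
  obtain ⟨⟨a, b⟩, ⟨ha, hb⟩, hab⟩ := hbasis.eventually_iff.1 h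
  have hmem : Ioo 0 a ×ˢ ball w b ∈ conicNhds w := hbasis.mem_of_mem (i := (a, b)) ⟨ha, hb⟩
  have hconn : IsPreconnected ((fun x : ℝ × (ℝ × ℝ) => x.1 • x.2) '' Ioo 0 a ×ˢ ball w b) :=
    (isPreconnected_Ioo.prod (convex_ball w b).isPreconnected).image _ (by fun_prop)
  have hdisj : Disjoint ((fun x : ℝ × (ℝ × ℝ) => x.1 • x.2) '' Ioo 0 a ×ˢ ball w b)
      (frontier E) := by
    rw [disjoint_left]
    rintro _ ⟨x, hx, rfl⟩
    exact hab hx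
  refine (subset_or_disjoint_of_disjoint_frontier hconn hdisj).imp (fun hE => ?_) fun hE => ?_
  · filter_upwards [hmem] with x hx using hE (mem_image_of_mem _ hx)
  · filter_upwards [hmem] with x hx using disjoint_left.1 hE (mem_image_of_mem _ hx)

end ConicDichotomy

section Exponents

variable {g : ℝ × ℝ → ℝ} {v : ℝ × ℝ} {a b ε δ R : ℝ} {d e : ℕ}

lemma le_of_rpow_isBigO_rpow (h : (fun r : ℝ => r ^ a) =O[𝓝[>] 0] fun r => r ^ b) : b ≤ a := by
  by_contra! hab
  have hbdd : (fun r : ℝ => r ^ (a - b)) =O[𝓝[>] 0] fun _ => (1 : ℝ) := by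
    refine (h.mul (Asymptotics.isBigO_refl (fun r : ℝ => r ^ (-b)) _)).congr' ?_ ?_
    all_goals filter_upwards [self_mem_nhdsWithin] with r (hr : 0 < r)
    all_goals simp [← rpow_add hr, sub_eq_add_neg]
  exact not_isBoundedUnder_of_tendsto_atTop (tendsto_norm_atTop_atTop.comp
    (tendsto_rpow_neg_nhdsGT_zero (sub_neg.2 hab))) ((Asymptotics.isBigO_one_iff ℝ).1 hbdd)

lemma tendsto_const_mul_nhdsGT_zero (hR : 0 < R) : Tendsto (R * ·) (𝓝[>] 0) (𝓝[>] 0) :=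
  tendsto_nhdsWithin_iff.2
    ⟨tendsto_nhdsWithin_of_tendsto_nhds (by simpa using (continuous_const_mul R).tendsto 0),
      by filter_upwards [self_mem_nhdsWithin] with r hr using mul_pos hR hr⟩

lemma BallBound.isLittleO_setIntegral_disk2 (h : BallBound g ε d) (hg : ∀ p, 0 ≤ g p)
    (hR : 0 < R) (ha : a < ε) :
    (fun r => ∫ p in disk2 (R * r), g p) =o[𝓝[>] 0] fun r => r ^ a := by
  obtain ⟨-, -, _, -, c₂, -, c₃, hc₃, hbound⟩ := h
  have hball : (fun r => ∫ p in disk2 r, g p) =O[𝓝[>] 0] fun r => r ^ ε * |log r| ^ (d : ℝ) := by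
    refine .of_bound c₂ ?_
    filter_upwards [Ioo_mem_nhdsGT hc₃] with r hr
    rw [norm_of_nonneg (integral_nonneg hg), rpow_natCast, norm_of_nonneg (by
      have := hr.1; positivity), ← mul_assoc]
    exact (hbound r hr.1 hr.2).2
  have hlog : (fun r => r ^ ε * |log r| ^ (d : ℝ)) =o[𝓝[>] 0] fun r => r ^ a := by
    refine ((Asymptotics.isBigO_refl (fun r : ℝ => r ^ ε) _).mul_isLittleO
      (isLittleO_abs_log_rpow_rpow_nhdsGT_zero d (sub_neg.2 ha))).congr' .rfl ?_
    filter_upwards [self_mem_nhdsWithin] with r (hr : 0 < r)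
    rw [← rpow_add hr, add_sub_cancel]
  refine ((hball.trans_isLittleO hlog).comp_tendsto
    (tendsto_const_mul_nhdsGT_zero hR)).trans_isBigO (.of_bound (R ^ a) ?_)
  filter_upwards [self_mem_nhdsWithin] with r (hr : 0 < r)
  rw [Function.comp_apply, mul_rpow hR.le hr.le, norm_mul, norm_of_nonneg (by positivity)]

lemma StripBound.exists_rpow_isBigO (h : StripBound g v δ e) :
    ∃ cv > 0, ∀ c, 0 < c → c < cv →
      (fun r => r ^ δ) =O[𝓝[>] 0] fun r => ∫ p in strip2 v r c, g p := by
  obtain ⟨-, -, cv, hcv, hbound⟩ := h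
  refine ⟨cv, hcv, fun c hc hccv => ?_⟩
  obtain ⟨a, ha, _, -, hbound⟩ := hbound c hc hccv
  refine .of_bound a⁻¹ ?_
  have hlog : ∀ᶠ r in 𝓝[>] (0 : ℝ), 1 ≤ |log r| :=
    (tendsto_abs_atBot_atTop.comp tendsto_log_nhdsGT_zero).eventually_ge_atTop 1
  filter_upwards [hlog, Ioo_mem_nhdsGT hc] with r hlog ⟨hr, hrc⟩
  have hle : a * r ^ δ ≤ ∫ p in strip2 v r c, g p :=
    (le_mul_of_one_le_right (by positivity) (one_le_pow₀ hlog)).trans (hbound r hr hrc).1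
  rw [norm_of_nonneg (by positivity), le_inv_mul_iff₀ ha]
  exact hle.trans (le_norm_self _)

end Exponents

section ConicBound

open scoped Pointwise

variable {g : ℝ × ℝ → ℝ} {w : ℝ × ℝ} {s t ε R : ℝ} {d : ℕ}

lemma disk2_subset_disk2 {r : ℝ} (hr : 0 ≤ r) (h : r ≤ R) : disk2 r ⊆ disk2 R := by
  intro p hp
  rw [mem_disk2_iff (hr.trans h)]
  exact ((mem_disk2_iff hr).1 hp).trans_le h

lemma tendsto_disk2_smallSets (hR : 0 < R) :
    Tendsto (fun r => disk2 (R * r)) (𝓝[>] 0) (𝓝 0).smallSets := by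
  refine tendsto_smallSets_iff.2 fun U hU => ?_
  obtain ⟨R₀, hR₀, hU⟩ := nhds_zero_hasBasis_disk2.mem_iff.1 hU
  filter_upwards [tendsto_const_mul_nhdsGT_zero hR (Ioo_mem_nhdsGT hR₀)] with r hr
  exact (disk2_subset_disk2 hr.1.le hr.2.le).trans hU

lemma smul_subset_disk2 {U : Set (ℝ × ℝ)} {r : ℝ} (hr : 0 < r) (hU : ∀ p ∈ U, nrm2 p < R) :
    r • U ⊆ disk2 (R * r) := by
  rintro _ ⟨p, hp, rfl⟩
  have hpR := hU p hp
  rw [mem_disk2_iff (mul_nonneg ((sqrt_nonneg _).trans hpR.le) hr.le), nrm2_smul, abs_of_pos hr,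
    mul_comm]
  gcongr

lemma isBigO_rpow_setIntegral_disk2 (hg : ∀ p, 0 ≤ g p) (hint : IntegrableAtFilter g (𝓝 0))
    (h : (fun x : ℝ × (ℝ × ℝ) => x.1 ^ s) =O[conicNhds w] fun x => g (x.1 • x.2)) :
    ∃ R > 0, (fun r => r ^ (s + 2)) =O[𝓝[>] 0] fun r => ∫ p in disk2 (R * r), g p := by
  obtain ⟨M, hM, hbound⟩ := h.exists_pos
  obtain ⟨P, hP, Q, hQ, hPQ⟩ := eventually_prod_iff.1 hbound.bound
  obtain ⟨b, hb, hball⟩ := Metric.mem_nhds_iff.1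
    (hQ.and (continuous_nrm2.continuousAt.eventually_lt_const (lt_add_one (nrm2 w))))
  have hR : 0 < nrm2 w + 1 := add_pos_of_nonneg_of_pos (sqrt_nonneg _) one_pos
  have hvol : 0 < volume.real (ball w b) :=
    ENNReal.toReal_pos (measure_ball_pos volume w hb).ne' measure_ball_lt_top.ne
  refine ⟨nrm2 w + 1, hR, .of_bound (M / volume.real (ball w b)) ?_⟩
  filter_upwards [hP, self_mem_nhdsWithin,
    (tendsto_disk2_smallSets hR).eventually hint.eventually] with r hPr (hr : 0 < r) hintr
  have hsubset : r • ball w b ⊆ disk2 ((nrm2 w + 1) * r) :=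
    smul_subset_disk2 hr fun p hp => (hball hp).2
  have hlower : ∀ p ∈ r • ball w b, M⁻¹ * r ^ s ≤ g p := by
    rintro _ ⟨u, hu, rfl⟩
    rw [inv_mul_le_iff₀ hM, ← norm_of_nonneg (hg _)]
    exact (le_norm_self _).trans (hPQ hPr (hball hu).1)
  have hvol_smul : volume.real (r • ball w b) = r ^ 2 * volume.real (ball w b) := by
    rw [measureReal_def, Measure.addHaar_smul, ENNReal.toReal_mul, Module.finrank_prod,
      Module.finrank_self, abs_of_nonneg (by positivity), ENNReal.toReal_ofReal (by positivity),
      one_add_one_eq_two, measureReal_def]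
  have hle : M⁻¹ * r ^ s * volume.real (r • ball w b) ≤ ∫ p in disk2 ((nrm2 w + 1) * r), g p :=
    (setIntegral_ge_of_const_le_real (measurableSet_ball.const_smul₀ r)
      (isBounded_ball.smul₀ r).measure_lt_top.ne hlower
      (hintr.mono_set hsubset)).trans
      (setIntegral_mono_set hintr (.of_forall hg) hsubset.eventuallyLE)
  rw [norm_of_nonneg (by positivity), rpow_add hr, norm_of_nonneg (integral_nonneg hg)]
  calc r ^ s * r ^ (2 : ℝ)
      = M / volume.real (ball w b) * (M⁻¹ * r ^ s * volume.real (r • ball w b)) := by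
        rw [hvol_smul, rpow_two]
        field_simp
    _ ≤ _ := by gcongr

lemma BallBound.le_add_two (h : BallBound g ε d) (hg : ∀ p, 0 ≤ g p)
    (hint : IntegrableAtFilter g (𝓝 0))
    (hlower : (fun x : ℝ × (ℝ × ℝ) => x.1 ^ s) =O[conicNhds w] fun x => g (x.1 • x.2)) :
    ε ≤ s + 2 := by
  obtain ⟨R, hR, hRO⟩ := isBigO_rpow_setIntegral_disk2 hg hint hlower
  exact le_of_forall_lt_imp_le_of_dense fun a ha =>
    le_of_rpow_isBigO_rpow (hRO.trans (h.isLittleO_setIntegral_disk2 hg hR ha).isBigO)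

end ConicBound

section StdFun

variable {n : ℕ} {f : Fin n → ℝ × ℝ → ℝ} {γ : Fin n → ℝ} {E : Set (ℝ × ℝ)} {w : ℝ × ℝ}
  {ε t : ℝ} {d : ℕ}

lemma stdFun_nonneg (f : Fin n → ℝ × ℝ → ℝ) (γ : Fin n → ℝ) (E : Set (ℝ × ℝ)) (p : ℝ × ℝ) :
    0 ≤ stdFun n f γ E p :=
  indicator_nonneg (fun _ _ => Finset.prod_nonneg fun _ _ => rpow_nonneg (abs_nonneg _) _) p

lemma isTheta_stdFun_conicNhds (hf : ∀ i, AnalyticAt ℝ (f i) 0)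
    (hw : ∀ i, lowestPart (f i) w ≠ 0) (hE : ∀ᶠ x in conicNhds w, x.1 • x.2 ∈ E) :
    (fun x : ℝ × (ℝ × ℝ) => stdFun n f γ E (x.1 • x.2)) =Θ[conicNhds w]
      fun x => x.1 ^ leadingDegree f γ := by
  obtain ⟨L, hL, hlim⟩ := exists_tendsto_prod_abs_rpow_div_rpow hf hw γ
  refine EventuallyEq.trans_isTheta ?_
    (Asymptotics.isTheta_of_div_tendsto_nhds_ne_zero hlim hL.ne').symm
  filter_upwards [hE] with x hx
  rw [stdFun, indicator_of_mem hx]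

lemma StandardForm.isBigO_stdFun_conicNhds (hsf : StandardForm n f γ E)
    (hball : BallBound (stdFun n f γ E) ε d) (hw : nrm2 w = 1)
    (hexc : ¬ ExceptionalDir n f E w) (ht : t ≤ ε) :
    (fun x : ℝ × (ℝ × ℝ) => stdFun n f γ E (x.1 • x.2)) =O[conicNhds w]
      fun x => x.1 ^ (t - 2) := by
  rw [ExceptionalDir, not_or, not_exists] at hexc
  rcases eventually_smul_mem_or_notMem
    (eventually_smul_notMem_of_not_isTangentDirAt hw hexc.2) with hE | hE
  · have htheta := isTheta_stdFun_conicNhds (γ := γ) hsf.analyticAt hexc.1 hE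
    have hle : t - 2 ≤ leadingDegree f γ := by
      linarith [hball.le_add_two (stdFun_nonneg f γ E) hsf.integ htheta.2]
    refine htheta.1.trans (.of_bound 1 ?_)
    filter_upwards [tendsto_fst.eventually (Ioc_mem_nhdsGT one_pos)] with x hx
    have := hx.1
    rw [one_mul, norm_of_nonneg (by positivity), norm_of_nonneg (by positivity)]
    exact rpow_le_rpow_of_exponent_ge hx.1 hx.2 hle
  · refine (Asymptotics.isBigO_zero _ _).congr' ?_ .rfl
    filter_upwards [hE] with x hx
    rw [stdFun, indicator_of_notMem hx]

end StdFun

/-- The coordinates `(p · v, p · v^⊥)` of a point `p`. For a unit vector `v` this map is an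
involution, so it also sends coordinates back to the point. -/
def frameCoords (v : ℝ × ℝ) : ℝ × ℝ →ₗ[ℝ] ℝ × ℝ where
  toFun p := (dot2 p v, dot2 p (perp2 v))
  map_add' p q := by ext <;> simp only [dot2, Prod.fst_add, Prod.snd_add] <;> ring
  map_smul' a p := by
    ext <;> simp only [dot2, Prod.smul_fst, Prod.smul_snd, smul_eq_mul, RingHom.id_apply] <;> ring

section Frame

variable {v : ℝ × ℝ}

lemma frameCoords_apply (v p : ℝ × ℝ) : frameCoords v p = (dot2 p v, dot2 p (perp2 v)) := rfl

lemma dot2_smul_add_dot2_smul_perp2 (hv : nrm2 v = 1) (p : ℝ × ℝ) :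
    dot2 p v • v + dot2 p (perp2 v) • perp2 v = p := by
  have hv := sq_add_sq_of_nrm2_eq_one hv
  ext <;> simp only [dot2, perp2, Prod.fst_add, Prod.snd_add, Prod.smul_fst, Prod.smul_snd,
    smul_eq_mul]
  · linear_combination p.1 * hv
  · linear_combination p.2 * hv

lemma frameCoords_involutive (hv : nrm2 v = 1) : Function.Involutive (frameCoords v) := by
  intro p
  refine Eq.trans ?_ (dot2_smul_add_dot2_smul_perp2 hv p)
  ext <;> simp only [frameCoords_apply, dot2, perp2, Prod.fst_add, Prod.snd_add, Prod.smul_fst,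
    Prod.smul_snd, smul_eq_mul]

lemma measurableEmbedding_frameCoords (hv : nrm2 v = 1) : MeasurableEmbedding (frameCoords v) :=
  (LinearEquiv.ofInvolutive (frameCoords v) (frameCoords_involutive hv)
    ).toContinuousLinearEquiv.toHomeomorph.measurableEmbedding

lemma measurePreserving_frameCoords (hv : nrm2 v = 1) : MeasurePreserving (frameCoords v) := by
  have hdet : LinearMap.det (frameCoords v) * LinearMap.det (frameCoords v) = 1 := by
    rw [← LinearMap.det_comp, ← LinearMap.det_id (M := ℝ × ℝ) (A := ℝ)]
    exact congrArg _ (LinearMap.ext (frameCoords_involutive hv))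
  have habs : |(LinearMap.det (frameCoords v))⁻¹| = 1 := by
    rcases mul_self_eq_one_iff.1 hdet with h | h <;> simp [h]
  refine ⟨(measurableEmbedding_frameCoords hv).measurable, ?_⟩
  rw [Measure.map_linearMap_addHaar_eq_smul_addHaar volume (left_ne_zero_of_mul_eq_one hdet), habs,
    ENNReal.ofReal_one, one_smul]

lemma strip2_eq_preimage (v : ℝ × ℝ) (r c : ℝ) :
    strip2 v r c = frameCoords v ⁻¹' Ioo (-r) r ×ˢ Ioo (-c) c := by
  ext p
  simp only [strip2, frameCoords_apply, mem_preimage, mem_prod, mem_Ioo, abs_lt, mem_ofPred_eq]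

lemma measurableSet_strip2 (v : ℝ × ℝ) (r c : ℝ) : MeasurableSet (strip2 v r c) := by
  rw [strip2_eq_preimage]
  exact (frameCoords v).continuous_of_finiteDimensional.measurable
    (measurableSet_Ioo.prod measurableSet_Ioo)

lemma strip2_subset_disk2 (hv : nrm2 v = 1) (r c : ℝ) : strip2 v r c ⊆ disk2 (r + c) := by
  rintro p ⟨hr, hc⟩
  have hsum : p.1 ^ 2 + p.2 ^ 2 = dot2 p v ^ 2 + dot2 p (perp2 v) ^ 2 := by
    simp only [dot2, perp2]
    linear_combination -(p.1 ^ 2 + p.2 ^ 2) * sq_add_sq_of_nrm2_eq_one hv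
  rw [disk2, mem_ofPred_eq, hsum, ← sq_abs (dot2 p v), ← sq_abs (dot2 p (perp2 v))]
  nlinarith [abs_nonneg (dot2 p v), abs_nonneg (dot2 p (perp2 v))]

end Frame

section StripIntegral

variable {v : ℝ × ℝ} {q q' r c : ℝ}

lemma setIntegral_abs_rpow (hq : -1 < q) (hr : 0 ≤ r) :
    ∫ x in Ioo (-r) r, |x| ^ q = 2 / (q + 1) * r ^ (q + 1) := by
  have hhalf : ∫ x in Ioo 0 r, x ^ q = r ^ (q + 1) / (q + 1) := by
    rw [← integral_Ioc_eq_integral_Ioo, ← intervalIntegral.integral_of_le hr,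
      integral_rpow (.inl hq), zero_rpow (by linarith), sub_zero]
  have heven := integral_comp_abs (f := (Iio r).indicator (· ^ q))
  rw [setIntegral_indicator measurableSet_Iio, Ioi_inter_Iio, hhalf] at heven
  rw [← integral_indicator measurableSet_Ioo]
  convert heven using 1
  · refine integral_congr_ae (.of_forall fun x => ?_)
    simp only [indicator, mem_Ioo, mem_Iio, abs_lt]
  · ring

lemma integrableOn_abs_rpow (hq : -1 < q) (r : ℝ) :
    IntegrableOn (fun x : ℝ => |x| ^ q) (Ioo (-r) r) := by
  rcases le_or_gt r 0 with hr | hr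
  · simp [Ioo_eq_empty_of_le (show r ≤ -r by linarith)]
  · refine .of_integral_ne_zero ?_
    rw [setIntegral_abs_rpow hq hr.le]
    have : 0 < q + 1 := by linarith
    positivity

lemma integrableOn_strip2_rpow_mul_rpow (hv : nrm2 v = 1) (hq : -1 < q) (hq' : -1 < q') (r c : ℝ) :
    IntegrableOn (fun p => |dot2 p v| ^ q * |dot2 p (perp2 v)| ^ q') (strip2 v r c) := by
  rw [strip2_eq_preimage]
  refine ((measurePreserving_frameCoords hv).integrableOn_comp_preimage
    (measurableEmbedding_frameCoords hv) (f := fun z => |z.1| ^ q * |z.2| ^ q')).2 ?_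
  rw [IntegrableOn, Measure.volume_eq_prod, ← Measure.prod_restrict]
  exact (integrableOn_abs_rpow hq r).mul_prod (integrableOn_abs_rpow hq' c)

lemma setIntegral_strip2_rpow_mul_rpow (hv : nrm2 v = 1) (hq : -1 < q) (hq' : -1 < q')
    (hr : 0 ≤ r) (hc : 0 ≤ c) :
    ∫ p in strip2 v r c, |dot2 p v| ^ q * |dot2 p (perp2 v)| ^ q' =
      2 / (q + 1) * r ^ (q + 1) * (2 / (q' + 1) * c ^ (q' + 1)) := by
  rw [strip2_eq_preimage, ← setIntegral_abs_rpow hq hr, ← setIntegral_abs_rpow hq' hc,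
    ← setIntegral_prod_mul, ← Measure.volume_eq_prod]
  exact (measurePreserving_frameCoords hv).setIntegral_preimage_emb
    (measurableEmbedding_frameCoords hv) (fun z => |z.1| ^ q * |z.2| ^ q') _

lemma ae_dot2_ne_zero (hv : nrm2 v = 1) : ∀ᵐ p : ℝ × ℝ, dot2 p v ≠ 0 :=
  (measurePreserving_frameCoords hv).quasiMeasurePreserving.ae
    (p := fun z => z.1 ≠ 0) (Measure.quasiMeasurePreserving_fst.ae (Measure.ae_ne volume 0))

end StripIntegral

section StripBound

variable {g : ℝ × ℝ → ℝ} {v w : ℝ × ℝ} {a c r s q q' t ε C η : ℝ}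
  {d : ℕ}

lemma tendsto_prodMk_add_smul_conicNhds (v w : ℝ × ℝ) :
    Tendsto (fun z : ℝ × ℝ => (z.1, w + z.2 • v)) (𝓝[>] 0 ×ˢ 𝓝 0) (conicNhds w) := by
  have h : Tendsto (fun t : ℝ => w + t • v) (𝓝 0) (𝓝 w) :=
    Continuous.tendsto' (by fun_prop) _ _ (by simp)
  exact tendsto_fst.prodMk (h.comp tendsto_snd)

lemma isBigO_smul_add_smul_of_conicNhds
    (hpos : (fun x : ℝ × (ℝ × ℝ) => g (x.1 • x.2)) =O[conicNhds w] fun x => x.1 ^ s)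
    (hneg : (fun x : ℝ × (ℝ × ℝ) => g (x.1 • x.2)) =O[conicNhds (-w)] fun x => x.1 ^ s)
    (v : ℝ × ℝ) :
    (fun z : ℝ × ℝ => g (z.1 • (w + z.2 • v))) =O[𝓝[≠] 0 ×ˢ 𝓝 0] fun z => |z.1| ^ s := by
  rw [← nhdsLT_sup_nhdsGT, sup_prod]
  refine .sup ?_ ?_
  · have hmap : Tendsto (fun z : ℝ × ℝ => (-z.1, z.2)) (𝓝[<] 0 ×ˢ 𝓝 0) (𝓝[>] 0 ×ˢ 𝓝 0) :=
      (Tendsto.comp (by simpa using tendsto_neg_nhdsLT (a := (0 : ℝ))) tendsto_fst).prodMk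
        tendsto_snd
    refine (hneg.comp_tendsto ((tendsto_prodMk_add_smul_conicNhds (-v) (-w)).comp hmap)).congr'
      (.of_forall fun z => ?_) ?_
    · simp [← neg_add, -neg_add_rev]
    · filter_upwards [tendsto_fst.eventually self_mem_nhdsWithin] with z (hz : z.1 < 0)
      simp [abs_of_neg hz]
  · refine (hpos.comp_tendsto (tendsto_prodMk_add_smul_conicNhds v w)).congr' .rfl ?_
    filter_upwards [tendsto_fst.eventually self_mem_nhdsWithin] with z (hz : 0 < z.1)
    simp [abs_of_pos hz]

lemma exists_le_mul_abs_dot2_rpow (hv : nrm2 v = 1)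
    (hpos : (fun x : ℝ × (ℝ × ℝ) => g (x.1 • x.2)) =O[conicNhds (perp2 v)] fun x => x.1 ^ s)
    (hneg : (fun x : ℝ × (ℝ × ℝ) => g (x.1 • x.2)) =O[conicNhds (-perp2 v)] fun x => x.1 ^ s) :
    ∃ C > 0, ∃ η > 0, ∀ p, dot2 p (perp2 v) ≠ 0 → |dot2 p (perp2 v)| < η →
      |dot2 p v| ≤ η * |dot2 p (perp2 v)| → g p ≤ C * |dot2 p (perp2 v)| ^ s := by
  obtain ⟨C, hC, hbound⟩ := (isBigO_smul_add_smul_of_conicNhds hpos hneg v).exists_pos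
  obtain ⟨⟨η₁, η₂⟩, ⟨hη₁, hη₂⟩, hη⟩ := ((nhdsWithin_hasBasis nhds_basis_ball _).prod
    (nhds_basis_closedBall (x := (0 : ℝ)))).eventually_iff.1 hbound.bound
  refine ⟨C, hC, min η₁ η₂, lt_min hη₁ hη₂, fun p hb hbη hab => ?_⟩
  set b := dot2 p (perp2 v)
  have hp : b • (perp2 v + (dot2 p v / b) • v) = p := by
    rw [smul_add, smul_smul, mul_div_cancel₀ _ hb, add_comm, dot2_smul_add_dot2_smul_perp2 hv]
  have hmem : ((b, dot2 p v / b) : ℝ × ℝ) ∈ (ball 0 η₁ ∩ {0}ᶜ) ×ˢ closedBall 0 η₂ := by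
    refine ⟨⟨by simpa using hbη.trans_le (min_le_left _ _), hb⟩, ?_⟩
    rw [mem_closedBall_zero_iff, norm_eq_abs, abs_div, div_le_iff₀ (abs_pos.2 hb)]
    exact hab.trans (by gcongr; exact min_le_right _ _)
  have hle := hη hmem
  simp only [hp] at hle
  exact (le_norm_self _).trans (hle.trans_eq (by rw [norm_of_nonneg (by positivity)]))

lemma ae_le_indicator_disk2_add (hg : ∀ p, 0 ≤ g p) (hv : nrm2 v = 1) (hC : 0 ≤ C) (hη : 0 < η)
    (hη₁ : η ≤ 1) (hq : q ≤ 0)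
    (hcone : ∀ p ∈ strip2 v r c, dot2 p (perp2 v) ≠ 0 →
      |dot2 p v| ≤ η * |dot2 p (perp2 v)| → g p ≤ C * |dot2 p (perp2 v)| ^ (q + q')) :
    ∀ᵐ p, p ∈ strip2 v r c → g p ≤ (disk2 ((1 + η⁻¹) * r)).indicator g p +
      C * (|dot2 p v| ^ q * |dot2 p (perp2 v)| ^ q') := by
  filter_upwards [ae_dot2_ne_zero hv] with p ha hp
  have ha : 0 < |dot2 p v| := abs_pos.2 ha
  rcases le_or_gt (|dot2 p v|) (η * |dot2 p (perp2 v)|) with hab | hab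
  · have hb : 0 < |dot2 p (perp2 v)| := pos_of_mul_pos_right (ha.trans_le hab) hη.le
    have hpow : |dot2 p (perp2 v)| ^ q ≤ |dot2 p v| ^ q :=
      rpow_le_rpow_of_nonpos ha (hab.trans (mul_le_of_le_one_left hb.le hη₁)) hq
    refine le_add_of_nonneg_of_le (indicator_nonneg (fun p _ => hg p) p) ?_
    calc g p ≤ C * (|dot2 p (perp2 v)| ^ q * |dot2 p (perp2 v)| ^ q') :=
          rpow_add hb q q' ▸ hcone p hp (abs_pos.1 hb) hab
      _ ≤ _ := mul_le_mul_of_nonneg_left (mul_le_mul_of_nonneg_right hpow (by positivity)) hC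
  · have hp_disk : p ∈ disk2 ((1 + η⁻¹) * r) := by
      rw [one_add_mul]
      refine strip2_subset_disk2 hv r (η⁻¹ * r) ⟨hp.1, ?_⟩
      rw [lt_inv_mul_iff₀ hη]
      exact hab.trans hp.1
    rw [indicator_of_mem hp_disk]
    exact le_add_of_nonneg_right (by positivity)

lemma setIntegral_strip2_le (hg : ∀ p, 0 ≤ g p) (hv : nrm2 v = 1) (hr : 0 ≤ r) (hc : 0 ≤ c)
    (hC : 0 ≤ C) (hη : 0 < η) (hη₁ : η ≤ 1) (hq : -1 < q) (hq₀ : q ≤ 0) (hq' : -1 < q')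
    (hstrip : IntegrableOn g (strip2 v r c)) (hdisk : IntegrableOn g (disk2 ((1 + η⁻¹) * r)))
    (hcone : ∀ p ∈ strip2 v r c, dot2 p (perp2 v) ≠ 0 →
      |dot2 p v| ≤ η * |dot2 p (perp2 v)| → g p ≤ C * |dot2 p (perp2 v)| ^ (q + q')) :
    ∫ p in strip2 v r c, g p ≤ (∫ p in disk2 ((1 + η⁻¹) * r), g p) +
      C * (2 / (q + 1) * r ^ (q + 1) * (2 / (q' + 1) * c ^ (q' + 1))) := by
  set D := disk2 ((1 + η⁻¹) * r)
  have hD : MeasurableSet D := (isOpen_disk2 _).measurableSet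
  have hmajorant := (integrableOn_strip2_rpow_mul_rpow hv hq hq' r c).const_mul C
  calc ∫ p in strip2 v r c, g p
      ≤ ∫ p in strip2 v r c, D.indicator g p + C * (|dot2 p v| ^ q * |dot2 p (perp2 v)| ^ q') :=
        setIntegral_mono_on_ae hstrip ((hstrip.indicator hD).add hmajorant)
          (measurableSet_strip2 v r c) (ae_le_indicator_disk2_add hg hv hC hη hη₁ hq₀ hcone)
    _ = (∫ p in strip2 v r c ∩ D, g p) +
          C * (2 / (q + 1) * r ^ (q + 1) * (2 / (q' + 1) * c ^ (q' + 1))) := by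
        rw [integral_add (hstrip.indicator hD) hmajorant, integral_const_mul,
          setIntegral_strip2_rpow_mul_rpow hv hq hq' hr hc, setIntegral_indicator hD]
    _ ≤ _ := add_le_add
        (setIntegral_mono_set hdisk (.of_forall hg) inter_subset_right.eventuallyLE) le_rfl

lemma BallBound.exists_setIntegral_strip2_isBigO (h : BallBound g ε d) (hg : ∀ p, 0 ≤ g p)
    (hint : IntegrableAtFilter g (𝓝 0)) (hv : nrm2 v = 1) (ha : 0 < a) (haε : a < ε)
    (hat : a < t) (ht : t ≤ 1)
    (hpos : (fun x : ℝ × (ℝ × ℝ) => g (x.1 • x.2)) =O[conicNhds (perp2 v)] fun x => x.1 ^ (t - 2))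
    (hneg : (fun x : ℝ × (ℝ × ℝ) => g (x.1 • x.2)) =O[conicNhds (-perp2 v)]
      fun x => x.1 ^ (t - 2)) :
    ∃ c₀ > 0, ∀ c, 0 < c → c < c₀ →
      (fun r => ∫ p in strip2 v r c, g p) =O[𝓝[>] 0] fun r => r ^ a := by
  obtain ⟨C, hC, η₀, hη₀, hcone⟩ := exists_le_mul_abs_dot2_rpow hv hpos hneg
  obtain ⟨U, hU, hUint⟩ := hint
  obtain ⟨R, hR, hRU⟩ := nhds_zero_hasBasis_disk2.mem_iff.1 hU
  refine ⟨min η₀ (R / 2), by positivity, fun c hc hc₀ => ?_⟩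
  obtain ⟨hcη, hcR⟩ := lt_min_iff.1 hc₀
  set η := min η₀ 1
  have hη : 0 < η := by positivity
  have hmajorant : (fun r : ℝ => C * (2 / (a - 1 + 1) * r ^ (a - 1 + 1) *
      (2 / (t - 1 - a + 1) * c ^ (t - 1 - a + 1)))) =O[𝓝[>] 0] fun r => r ^ a := by
    rw [sub_add_cancel]
    exact (((Asymptotics.isBigO_refl _ _).const_mul_left _).mul
      (Asymptotics.isBigO_const_const _ one_ne_zero _)).const_mul_left C |>.congr_right (by simp)
  have hR' : 0 < 1 + η⁻¹ := by positivity
  refine .trans ?_ ((h.isLittleO_setIntegral_disk2 hg hR' haε).isBigO.add hmajorant)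
  refine .of_bound 1 ?_
  filter_upwards [Ioo_mem_nhdsGT hc, (tendsto_disk2_smallSets hR').eventually
    (IntegrableAtFilter.eventually ⟨U, hU, hUint⟩)] with r hr hdisk
  have hstrip : IntegrableOn g (strip2 v r c) := hUint.mono_set <|
    ((strip2_subset_disk2 hv r c).trans
      (disk2_subset_disk2 (by linarith [hr.1]) (by linarith [hr.2]))).trans hRU
  rw [one_mul, norm_of_nonneg (integral_nonneg hg)]
  refine (setIntegral_strip2_le hg hv hr.1.le hc.le hC.le hη (min_le_right _ _) (by linarith)
    (by linarith) (by linarith) hstrip hdisk fun p hp hb hab => ?_).trans (le_norm_self _)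
  rw [show a - 1 + (t - 1 - a) = t - 2 by ring]
  exact hcone p hb (hp.2.trans hcη) (hab.trans (by gcongr; exact min_le_left _ _))

end StripBound

section Main

variable {n : ℕ} {f : Fin n → ℝ × ℝ → ℝ} {γ : Fin n → ℝ} {E : Set (ℝ × ℝ)} {v : ℝ × ℝ}
  {ε δ : ℝ} {d e : ℕ}

lemma StandardForm.min_le_stripExponent (hsf : StandardForm n f γ E)
    (hball : BallBound (stdFun n f γ E) ε d) (hstrip : StripBound (stdFun n f γ E) v δ e)
    (hv : nrm2 v = 1) (hexc : ¬ ExceptionalDir n f E (perp2 v)) : min ε 1 ≤ δ := by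
  refine le_of_forall_lt_imp_le_of_dense fun a ha => ?_
  rcases le_or_gt a 0 with ha₀ | ha₀
  · exact ha₀.trans hstrip.1.le
  have hw : nrm2 (perp2 v) = 1 := (nrm2_perp2 v).trans hv
  obtain ⟨c₀, hc₀, hupper⟩ := hball.exists_setIntegral_strip2_isBigO (stdFun_nonneg f γ E)
    hsf.integ hv ha₀ (ha.trans_le (min_le_left _ _)) ha (min_le_right _ _)
    (hsf.isBigO_stdFun_conicNhds hball hw hexc (min_le_left _ _))
    (hsf.isBigO_stdFun_conicNhds hball ((nrm2_neg _).trans hw)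
      (mt exceptionalDir_neg.1 hexc) (min_le_left _ _))
  obtain ⟨cv, hcv, hlower⟩ := hstrip.exists_rpow_isBigO
  obtain ⟨c, hc, hcc⟩ := exists_between (lt_min hc₀ hcv)
  obtain ⟨hcc₀, hccv⟩ := lt_min_iff.1 hcc
  exact le_of_rpow_isBigO_rpow ((hlower c hc hccv).trans (hupper c hc hcc₀))

end Main

theorem finitely_many_bad_directions_general {n : ℕ} (f : Fin n → ℝ × ℝ → ℝ) (γ : Fin n → ℝ)
    (E : Set (ℝ × ℝ)) (hsf : StandardForm n f γ E) (ε : ℝ) (d : ℕ)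
    (hball : BallBound (stdFun n f γ E) ε d) (δ : ℝ × ℝ → ℝ) (e : ℝ × ℝ → ℕ)
    (hstrip : ∀ v, nrm2 v = 1 → StripBound (stdFun n f γ E) v (δ v) (e v)) :
    {v | nrm2 v = 1 ∧ δ v < min ε 1}.Finite ∧
      ∀ v, nrm2 v = 1 → δ v < min ε 1 → ExceptionalDir n f E (perp2 v) := by
  have hexc : ∀ v, nrm2 v = 1 → δ v < min ε 1 → ExceptionalDir n f E (perp2 v) :=
    fun v hv hδ => by_contra fun h =>
      hδ.not_ge (hsf.min_le_stripExponent hball (hstrip v hv) hv h)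
  refine ⟨(hsf.finite_exceptionalDir.preimage perp2_injective.injOn).subset fun v hv => ?_, hexc⟩
  exact ⟨(nrm2_perp2 v).trans hv.1, hexc v hv.1 hv.2⟩

/-- **Theorem 1.4 a), first part.** In the local multiplier setup with ball exponent
`ε ≥ 1/2`, there are at most finitely many unit directions `v` whose strip exponent `δ_v`
is less than `1/2`, and each such direction is perpendicular to one of the lines
`l₁, …, l_p`. -/
theorem finitely_many_bad_directions {n : ℕ} (f : Fin n → ℝ × ℝ → ℝ)
    (γ : Fin n → ℝ) (E : Set (ℝ × ℝ)) (hsf : StandardForm n f γ E)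
    (ε : ℝ) (d : ℕ) (hball : BallBound (stdFun n f γ E) ε d) (hε : 1/2 ≤ ε)
    (δ : ℝ × ℝ → ℝ) (e : ℝ × ℝ → ℕ)
    (hstrip : ∀ v : ℝ × ℝ, nrm2 v = 1 → StripBound (stdFun n f γ E) v (δ v) (e v)) :
    {v : ℝ × ℝ | nrm2 v = 1 ∧ δ v < 1/2}.Finite ∧
      ∀ v : ℝ × ℝ, nrm2 v = 1 → δ v < 1/2 → ExceptionalDir n f E (perp2 v) := by
  obtain ⟨hfin, hexc⟩ := finitely_many_bad_directions_general f γ E hsf ε d hball δ e hstrip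
  have hmin : 1 / 2 ≤ min ε 1 := le_min hε (by norm_num)
  exact ⟨hfin.subset fun v hv => ⟨hv.1, hv.2.trans_le hmin⟩,
    fun v hv hδ => hexc v hv (hδ.trans_le hmin)⟩
end
end

section
/- (Two-dimensional resolution of singularities.) Let S be real analytic on a neighborhood of the origin in ℝ², not identically zero, with S(0,0) = 0, and let b > 0 be such that the lowest-degree part of S does not vanish on the lines bounding the triangle except at the origin. Then there exist a > 0 and a positive integer N such that, with F_a = {(x,y) : 0 ≤ x ≤ a, 0 ≤ y ≤ bx}, one can write F_a = ∪_{i=1}^n cl(D_i), where for each i there exist: a function k_i with k_i(x) = l_i x^{s_i} + higher order terms, s_i ≥ 1, and x ↦ k_i(x^N) real analytic; a map η_i(x,y) = (x, ±y + k_i(x)); a set D_i' = {(x,y) : 0 < x < a, g_i(x) < y < G_i(x)} with η_i(D_i') = D_i, where g_i(x^N) and G_i(x^N) are real analytic and G_i(x) = H_i x^{M_i} + higher order terms with M_i ≥ 1, H_i > 0; a nonnegative rational α_i; a nonnegative integer β_i; and d_i ≠ 0, such that: (a) if β_i = 0 then g_i ≡ 0, G_i(x) = H_i x^{M_i} exactly,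 and for any predetermined η > 0 the D_i' can be constructed so that on D_i', for all integers 0 ≤ l ≤ α_i, |∂_x^l(S∘η_i)(x,y) − d_i α_i(α_i−1)⋯(α_i−l+1) x^{α_i−l}| < η |d_i| x^{α_i−l}; (b) if β_i > 0 then g_i is identically zero or g_i(x) = h_i x^{m_i} + higher order terms with h_i > 0, m_i > M_i, and for any predetermined η > 0 the D_i' can be constructed so that on D_i', for all integers 0 ≤ l ≤ α_i and 0 ≤ m ≤ β_i, |∂_x^l ∂_y^m (S∘η_i)(x,y) − α_i(α_i−1)⋯(α_i−l+1) β_i(β_i−1)⋯(β_i−m+1) d_i x^{α_i−l} y^{β_i−m}| ≤ η |d_i| x^{α_i−l} y^{β_i−m}. -/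
open MeasureTheory Real Set Filter Metric
open scoped Topology ENNReal

noncomputable section

/-!
In the blow-up chart `(x, w) ↦ (x, x * w)` the function `S` is `x ^ k` times an analytic function
that restricts on `x = 0` to a polynomial of degree at most `k`, and the closed triangle becomes
`0 ≤ w ≤ b`. By compactness it suffices to resolve `S` near each point of this interval; at the
end points that polynomial does not vanish.

Near an interior point write `S = t ^ A * F (t, w)`, where `F (0, ·)` vanishes to order `m`. If
`m = 0` then `S` is already comparable to a monomial. Otherwise a Tschirnhausen shift of `w` by an
analytic function of `t` removes the term of degree `m - 1` in `w`. Either every lower coefficient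
then vanishes identically, so that `F` is `w ^ m` times a unit, or after a ramification `t = τ ^ q`
the Newton polygon has an edge of integral slope `p`. The substitution `w = τ ^ p * w'` on
`|w'| ≤ C` leads to charts in which the order is smaller than `m`, because a polynomial of degree
`m` with no term of degree `m - 1` but some term of lower degree has no root of multiplicity `m`;
on `|w'| ≥ C` the term `w ^ m` dominates. Induction on `m` concludes.

On each resulting piece `S` is a monomial times an analytic unit evaluated at monomials in the
coordinates. Differentiation preserves this shape, and the unit tends to the expected constant as
these monomials tend to `0`.
-/

section Hadamard

variable {𝕜 E F : Type*} [NontriviallyNormedField 𝕜] [NormedAddCommGroup E] [NormedSpace 𝕜 E]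
  [NormedAddCommGroup F] [NormedSpace 𝕜 F]

/-- The power series `q` with `f z - f (P z) = c • q z` for `f = ∑ pₙ` and `z - P z = c • e`: each
difference `pₙ₊₁ z - pₙ₊₁ (P z)` is telescoped by replacing the arguments `z` by `P z` one at a
time. -/
def quotientSeries (p : FormalMultilinearSeries 𝕜 E F) (P : E →L[𝕜] E) (e : E) :
    FormalMultilinearSeries 𝕜 E F := fun n ↦
  ∑ i : Fin (n + 1), (ContinuousMultilinearMap.curryMid i (p (n + 1)) e).compContinuousLinearMap
    fun j ↦ if j.castSucc < i then ContinuousLinearMap.id 𝕜 E else P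

theorem smul_quotientSeries_apply (p : FormalMultilinearSeries 𝕜 E F) {P : E →L[𝕜] E} {e z : E}
    {c : 𝕜} (hz : z - P z = c • e) (n : ℕ) :
    c • quotientSeries p P e n (fun _ ↦ z) = p (n + 1) (fun _ ↦ z) - p (n + 1) (fun _ ↦ P z) := by
  have telescope := (p (n + 1)).toMultilinearMap.map_sub_map_piecewise (fun _ ↦ z) (fun _ ↦ P z)
    Finset.univ
  simp only [Finset.piecewise_univ, ContinuousMultilinearMap.coe_coe, Finset.mem_univ,
    forall_const] at telescope
  rw [telescope, quotientSeries, _root_.sum_apply, Finset.smul_sum]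
  refine Finset.sum_congr rfl fun i _ ↦ ?_
  have insert_eq : (fun j ↦ if j < i then z else if i = j then z - P z else P z) =
      i.insertNth (α := fun _ ↦ E) (c • e)
        fun j ↦ (if j.castSucc < i then ContinuousLinearMap.id 𝕜 E else P) z := by
    refine Fin.eq_insertNth_iff.2 ⟨by simp [hz], funext fun j ↦ ?_⟩
    rcases lt_or_ge j.castSucc i with hj | hj
    · simp [Fin.removeNth, Fin.succAbove_of_castSucc_lt _ _ hj, hj]
    · have hlt : i < j.succ := Fin.le_castSucc_iff.1 hj
      simp [Fin.removeNth, Fin.succAbove_of_le_castSucc _ _ hj, hj.not_gt, hlt.not_gt, hlt.ne]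
  rw [insert_eq, ← ContinuousMultilinearMap.curryMid_apply, map_smul]
  rfl

theorem norm_quotientSeries_le (p : FormalMultilinearSeries 𝕜 E F) (P : E →L[𝕜] E) (e : E)
    (n : ℕ) :
    ‖quotientSeries p P e n‖ ≤ (n + 1) * (‖p (n + 1)‖ * ‖e‖ * (1 + ‖P‖) ^ n) := by
  suffices hsummand : ∀ i : Fin (n + 1),
      ‖(ContinuousMultilinearMap.curryMid i (p (n + 1)) e).compContinuousLinearMap
        fun j ↦ if j.castSucc < i then ContinuousLinearMap.id 𝕜 E else P‖ ≤
        ‖p (n + 1)‖ * ‖e‖ * (1 + ‖P‖) ^ n by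
    simpa [quotientSeries] using norm_sum_le_of_le Finset.univ fun i _ ↦ hsummand i
  intro i
  refine (ContinuousMultilinearMap.norm_compContinuousLinearMap_le _ _).trans ?_
  gcongr
  · exact ((ContinuousMultilinearMap.curryMid i (p (n + 1))).le_opNorm e).trans_eq
      (by rw [ContinuousMultilinearMap.norm_curryMid])
  · refine (Finset.prod_le_prod (g := fun _ ↦ 1 + ‖P‖) (fun _ _ ↦ norm_nonneg _)
      fun j _ ↦ ?_).trans (by simp)
    split_ifs
    · exact ContinuousLinearMap.norm_id_le.trans (le_add_of_nonneg_right (norm_nonneg P))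
    · exact le_add_of_nonneg_left zero_le_one

theorem quotientSeries_radius_pos {p : FormalMultilinearSeries 𝕜 E F} (hp : 0 < p.radius)
    (P : E →L[𝕜] E) (e : E) : 0 < (quotientSeries p P e).radius := by
  obtain ⟨ρ, hρ_pos, hρ_lt⟩ := ENNReal.lt_iff_exists_nnreal_btwn.1 hp
  have hρ : 0 < ρ := by exact_mod_cast hρ_pos
  obtain ⟨C, -, hC⟩ := p.norm_le_div_pow_of_pos_of_lt_radius hρ hρ_lt
  set s : NNReal := ρ / (2 * (1 + ‖P‖₊)) with hs
  have hs_coe : (s : ℝ) = ρ / (2 * (1 + ‖P‖)) := by simp [hs]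
  have hs_pos : (0 : ℝ≥0∞) < s := by exact_mod_cast (by positivity : 0 < s)
  refine hs_pos.trans_le
    ((quotientSeries p P e).le_radius_of_bound (C / ρ * ‖e‖) fun n ↦ ?_)
  have hn : (n : ℝ) + 1 ≤ 2 ^ n := by exact_mod_cast Nat.lt_two_pow_self
  calc ‖quotientSeries p P e n‖ * (s : ℝ) ^ n
      ≤ (n + 1) * (‖p (n + 1)‖ * ‖e‖ * (1 + ‖P‖) ^ n) * (s : ℝ) ^ n := by
        gcongr
        exact norm_quotientSeries_le p P e n
    _ ≤ 2 ^ n * (C / ρ ^ (n + 1) * ‖e‖ * (1 + ‖P‖) ^ n) * (s : ℝ) ^ n := by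
        gcongr
        exact hC (n + 1)
    _ = C / ρ * ‖e‖ := by
        have : (0 : ℝ) < 1 + ‖P‖ := by positivity
        rw [hs_coe, div_pow, mul_pow]
        field_simp
        ring

theorem exists_analyticAt_eq_comp_add_smul [CompleteSpace F] {f : E → F} (hf : AnalyticAt 𝕜 f 0)
    (P : E →L[𝕜] E) (e : E) (c : E → 𝕜) (hP : ∀ z, z - P z = c z • e) :
    ∃ u : E → F, AnalyticAt 𝕜 u 0 ∧ ∀ᶠ z in 𝓝 0, f z = f (P z) + c z • u z := by
  obtain ⟨p, r, hp⟩ := hf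
  have hq := (quotientSeries p P e).hasFPowerSeriesOnBall
    (quotientSeries_radius_pos (hp.r_pos.trans_le hp.r_le) P e)
  refine ⟨_, hq.analyticAt, ?_⟩
  have hP0 : Tendsto P (𝓝 0) (𝓝 0) := by simpa using P.continuous.tendsto 0
  filter_upwards [hp.hasFPowerSeriesAt.eventually_hasSum,
    hP0.eventually hp.hasFPowerSeriesAt.eventually_hasSum,
    hq.hasFPowerSeriesAt.eventually_hasSum] with z sum_z sum_Pz sum_q
  have tail := (hasSum_nat_add_iff' 1).2 (sum_z.sub sum_Pz)
  simp only [← smul_quotientSeries_apply p (hP z)] at tail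
  have heq := tail.unique (sum_q.const_smul (c z))
  have hp0 : p 0 (fun _ ↦ z) = p 0 (fun _ ↦ P z) := congrArg (p 0) (Subsingleton.elim _ _)
  simp only [zero_add, Finset.range_one, Finset.sum_singleton, hp0, sub_self, sub_zero] at heq
  exact sub_eq_iff_eq_add'.1 heq

end Hadamard

section TaylorSnd

variable {𝕜 E : Type*} [NontriviallyNormedField 𝕜] [CompleteSpace 𝕜] [NormedAddCommGroup E]
  [NormedSpace 𝕜 E]

theorem iteratedDeriv_succ_id_mul_zero {v : 𝕜 → 𝕜} (hv : AnalyticAt 𝕜 v 0) (j : ℕ) :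
    iteratedDeriv (j + 1) (fun w ↦ w * v w) 0 = (j + 1) * iteratedDeriv j v 0 := by
  induction j generalizing v with
  | zero =>
    have h := ((hasDerivAt_id (0 : 𝕜)).fun_mul hv.differentiableAt.hasDerivAt).deriv
    simpa using h
  | succ j ih =>
    have hderiv : deriv (fun w ↦ w * v w) =ᶠ[𝓝 0] fun w ↦ v w + w * deriv v w := by
      filter_upwards [hv.eventually_analyticAt] with w hw
      simpa using ((hasDerivAt_id w).fun_mul hw.differentiableAt.hasDerivAt).deriv
    have hmul : AnalyticAt 𝕜 (fun w ↦ w * deriv v w) 0 := analyticAt_id.mul hv.deriv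
    rw [iteratedDeriv_succ', hderiv.iteratedDeriv_eq,
      iteratedDeriv_fun_add hv.contDiffAt hmul.contDiffAt, ih hv.deriv, ← iteratedDeriv_succ']
    push_cast
    ring

theorem exists_taylor_snd {F : E × 𝕜 → 𝕜} (hF : AnalyticAt 𝕜 F 0) (n : ℕ) :
    ∃ (c : ℕ → E → 𝕜) (u : E × 𝕜 → 𝕜), (∀ j, AnalyticAt 𝕜 (c j) 0) ∧ AnalyticAt 𝕜 u 0 ∧
      (∀ᶠ z in 𝓝 (0 : E × 𝕜), F z = ∑ j ∈ Finset.range n, c j z.1 * z.2 ^ j + z.2 ^ n * u z) ∧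
      ∀ᶠ t in 𝓝 (0 : E), (∀ j < n, iteratedDeriv j (fun w ↦ F (t, w)) 0 = j.factorial * c j t) ∧
        iteratedDeriv n (fun w ↦ F (t, w)) 0 = n.factorial * u (t, 0) := by
  induction n generalizing F with
  | zero => exact ⟨fun _ _ ↦ 0, F, fun _ ↦ analyticAt_const, hF, by simp, by simp⟩
  | succ n ih =>
    obtain ⟨v, hv, hFv⟩ := exists_analyticAt_eq_comp_add_smul hF
      ((ContinuousLinearMap.fst 𝕜 E 𝕜).prod 0) (0, 1) Prod.snd (by rintro ⟨t, w⟩; simp)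
    obtain ⟨c, u, hc, hu, hvu, hderiv⟩ := ih hv
    have hF0 : AnalyticAt 𝕜 (fun t ↦ F (t, 0)) (0 : E) := hF.along_fst
    obtain ⟨c', hc'0, hc's⟩ :
        ∃ c' : ℕ → E → 𝕜, (c' 0 = fun t ↦ F (t, 0)) ∧ ∀ j, c' (j + 1) = c j :=
      ⟨fun | 0 => fun t ↦ F (t, 0) | j + 1 => c j, rfl, fun _ ↦ rfl⟩
    refine ⟨c', u, fun j ↦ by cases j <;> simp only [*], hu, ?_, ?_⟩
    · filter_upwards [hFv, hvu] with z hz hz'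
      simp only [hz, hz', Finset.sum_range_succ', smul_eq_mul, mul_add, Finset.mul_sum, pow_succ,
        ContinuousLinearMap.prod_apply, ContinuousLinearMap.coe_fst', zero_apply, pow_zero, mul_one,
        hc'0, hc's]
      ring_nf
    · have hslice := hFv.curry_nhds
      have hvan := hv.eventually_analyticAt.curry_nhds
      filter_upwards [hderiv, hslice, hvan] with t ht hFt hvt
      have hvt0 : AnalyticAt 𝕜 (fun w ↦ v (t, w)) 0 := hvt.self_of_nhds.along_snd
      have hsucc (j : ℕ) : iteratedDeriv (j + 1) (fun w ↦ F (t, w)) 0 =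
          (j + 1) * iteratedDeriv j (fun w ↦ v (t, w)) 0 := by
        have hFt' : (fun w ↦ F (t, w)) =ᶠ[𝓝 0] fun w ↦ F (t, 0) + w * v (t, w) := hFt
        rw [hFt'.iteratedDeriv_eq, iteratedDeriv_const_add j.succ_pos,
          iteratedDeriv_succ_id_mul_zero hvt0]
      refine ⟨fun j hj ↦ ?_, ?_⟩
      · rcases j with _ | j
        · simp [hc'0]
        · rw [hsucc, ht.1 j (by omega), Nat.factorial_succ, hc's]
          push_cast
          ring
      · rw [hsucc, ht.2, Nat.factorial_succ]
        push_cast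
        ring


theorem exists_taylor_snd_translate {F : E × 𝕜 → 𝕜} (hF : AnalyticAt 𝕜 F 0) (n : ℕ) :
    ∃ (c : ℕ → E × 𝕜 → 𝕜) (u : (E × 𝕜) × 𝕜 → 𝕜), (∀ j, AnalyticAt 𝕜 (c j) 0) ∧
      AnalyticAt 𝕜 u 0 ∧
      (∀ᶠ z in 𝓝 (0 : (E × 𝕜) × 𝕜), F (z.1.1, z.1.2 + z.2) =
        ∑ j ∈ Finset.range n, c j z.1 * z.2 ^ j + z.2 ^ n * u z) ∧
      ∀ᶠ p in 𝓝 (0 : E × 𝕜),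
        (∀ j < n, iteratedDeriv j (fun w ↦ F (p.1, w)) p.2 = j.factorial * c j p) ∧
        iteratedDeriv n (fun w ↦ F (p.1, w)) p.2 = n.factorial * u (p, 0) := by
  have hshift : AnalyticAt 𝕜 (fun z : (E × 𝕜) × 𝕜 ↦ F (z.1.1, z.1.2 + z.2)) 0 :=
    AnalyticAt.comp_of_eq (f := fun z : (E × 𝕜) × 𝕜 ↦ (z.1.1, z.1.2 + z.2)) hF
      ((analyticAt_fst.comp_of_eq analyticAt_fst rfl).prod
        ((analyticAt_snd.comp_of_eq analyticAt_fst rfl).add analyticAt_snd)) (by simp)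
  have hderiv_shift (j : ℕ) (t : E × 𝕜) : iteratedDeriv j (fun w ↦ F (t.1, t.2 + w)) 0 =
      iteratedDeriv j (fun w ↦ F (t.1, w)) t.2 := by
    simpa using congrFun (iteratedDeriv_comp_const_add j (fun w ↦ F (t.1, w)) t.2) 0
  simpa only [hderiv_shift] using exists_taylor_snd hshift n

end TaylorSnd

section Preparation

open scoped ContDiff

variable {𝕜 E : Type*} [RCLike 𝕜] [NormedAddCommGroup E] [NormedSpace 𝕜 E] [CompleteSpace E]

theorem exists_analyticAt_implicit {f : E × 𝕜 → 𝕜} (hf : AnalyticAt 𝕜 f 0) (hf0 : f 0 = 0)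
    (hderiv : deriv (fun w ↦ f (0, w)) 0 ≠ 0) :
    ∃ φ : E → 𝕜, AnalyticAt 𝕜 φ 0 ∧ φ 0 = 0 ∧ ∀ᶠ t in 𝓝 0, f (t, φ t) = 0 := by
  have hsmooth : ContDiffAt 𝕜 ω f 0 := hf.contDiffAt
  have hpartial : (fderiv 𝕜 f 0 ∘L .inr 𝕜 E 𝕜) 1 = deriv (fun w ↦ f (0, w)) 0 := by
    have hline : HasDerivAt (fun w : 𝕜 ↦ ((0 : E), w)) (0, 1) 0 :=
      (hasDerivAt_const 0 (0 : E)).prodMk (hasDerivAt_id 0)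
    simpa [Function.comp_def] using
      (hf.differentiableAt.hasFDerivAt.comp_hasDerivAt (0 : 𝕜) hline).deriv.symm
  have hinv : (fderiv 𝕜 f 0 ∘L .inr 𝕜 E 𝕜).IsInvertible :=
    ⟨.unitsEquivAut 𝕜 (Units.mk0 _ hderiv), by ext; simp [← hpartial]⟩
  refine ⟨hsmooth.implicitFunction (by simp) hinv,
    (hsmooth.contDiffAt_implicitFunction (by simp) hinv).analyticAt,
    hsmooth.implicitFunction_apply_self (by simp) hinv, ?_⟩
  simpa [hf0] using hsmooth.eventually_apply_implicitFunction (by simp) hinv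

theorem exists_tschirnhausen_expansion_zero {F : E × 𝕜 → 𝕜} (hF : AnalyticAt 𝕜 F 0) {n : ℕ}
    (hord : analyticOrderAt (fun w ↦ F (0, w)) 0 = (n + 1 : ℕ)) :
    ∃ (φ : E → 𝕜) (c : ℕ → E → 𝕜) (u : E × 𝕜 → 𝕜), AnalyticAt 𝕜 φ 0 ∧ φ 0 = 0 ∧
      (∀ j, AnalyticAt 𝕜 (c j) 0) ∧ (∀ j < n, c j 0 = 0) ∧ AnalyticAt 𝕜 u 0 ∧ u 0 ≠ 0 ∧
      ∀ᶠ z in 𝓝 (0 : E × 𝕜), F (z.1, φ z.1 + z.2) =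
        ∑ j ∈ Finset.range n, c j z.1 * z.2 ^ j + z.2 ^ (n + 1) * u z := by
  have hslice : AnalyticAt 𝕜 (fun w ↦ F (0, w)) 0 := hF.along_snd
  obtain ⟨hlow, htop⟩ := (analyticOrderAt_eq_nat_iff_iteratedDeriv_eq_zero hslice).1 hord
  obtain ⟨c, u, hc, hu, hFc, hcoeff⟩ := exists_taylor_snd_translate hF (n + 1)
  have hfact (j : ℕ) : (j.factorial : 𝕜) ≠ 0 := by exact_mod_cast j.factorial_ne_zero
  have hc0 (j : ℕ) (hj : j < n + 1) : c j 0 = 0 := by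
    simpa [hlow j hj, hfact j] using (hcoeff.self_of_nhds.1 j hj).symm
  have hu0 : u 0 ≠ 0 := fun h ↦ htop (by simpa [h, Prod.mk_zero_zero] using hcoeff.self_of_nhds.2)
  have hcn : deriv (fun w ↦ c n (0, w)) 0 ≠ 0 := by
    have hline : Tendsto (fun w : 𝕜 ↦ ((0 : E), w)) (𝓝 0) (𝓝 0) :=
      (Continuous.prodMk_right (0 : E)).tendsto 0
    have hcoeff_n : (fun w ↦ n.factorial * c n (0, w)) =ᶠ[𝓝 0]
        iteratedDeriv n fun w ↦ F (0, w) := by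
      filter_upwards [hline.eventually hcoeff] with w hw
      simpa using (hw.1 n n.lt_succ_self).symm
    intro h
    rw [iteratedDeriv_succ, ← hcoeff_n.deriv_eq, deriv_const_mul_field, h, mul_zero] at htop
    exact htop rfl
  obtain ⟨φ, hφ, hφ0, hcφ⟩ := exists_analyticAt_implicit (hc n) (hc0 n n.lt_succ_self) hcn
  have hgraph : AnalyticAt 𝕜 (fun t ↦ (t, φ t)) 0 := analyticAt_id.prod hφ
  have hgraph0 : Tendsto (fun z : E × 𝕜 ↦ ((z.1, φ z.1), z.2)) (𝓝 0) (𝓝 0) := by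
    have : ContinuousAt (fun z : E × 𝕜 ↦ ((z.1, φ z.1), z.2)) 0 :=
      (continuousAt_fst.prodMk (hφ.continuousAt.comp_of_eq continuousAt_fst rfl)).prodMk
        continuousAt_snd
    simpa [ContinuousAt, hφ0, Prod.mk_zero_zero] using this
  refine ⟨φ, fun j t ↦ c j (t, φ t), fun z ↦ u ((z.1, φ z.1), z.2), hφ, hφ0, fun j ↦ ?_,
    fun j hj ↦ ?_, ?_, ?_, ?_⟩
  · exact AnalyticAt.comp_of_eq (hc j) hgraph (by simp [hφ0])
  · simpa [hφ0, Prod.mk_zero_zero] using hc0 j (by omega)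
  · exact AnalyticAt.comp_of_eq (f := fun z : E × 𝕜 ↦ ((z.1, φ z.1), z.2)) hu
      ((analyticAt_fst.prod (hφ.comp_of_eq analyticAt_fst rfl)).prod analyticAt_snd) (by simp [hφ0])
  · simpa [hφ0, Prod.mk_zero_zero] using hu0
  · filter_upwards [hgraph0.eventually hFc, (continuous_fst.tendsto 0).eventually hcφ] with z hz hcz
    rw [hz, Finset.sum_range_succ, hcz, zero_mul, add_zero]

/-- The substitution `w ↦ φ + w` removes the term of degree `n`, as in Tschirnhausen's reduction of
polynomials. -/
theorem exists_tschirnhausen_expansion {F : E × 𝕜 → 𝕜} {w₀ : 𝕜} (hF : AnalyticAt 𝕜 F (0, w₀))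
    {n : ℕ} (hord : analyticOrderAt (fun w ↦ F (0, w)) w₀ = (n + 1 : ℕ)) :
    ∃ (φ : E → 𝕜) (c : ℕ → E → 𝕜) (u : E × 𝕜 → 𝕜), AnalyticAt 𝕜 φ 0 ∧ φ 0 = w₀ ∧
      (∀ j, AnalyticAt 𝕜 (c j) 0) ∧ (∀ j < n, c j 0 = 0) ∧ AnalyticAt 𝕜 u 0 ∧ u 0 ≠ 0 ∧
      ∀ᶠ z in 𝓝 (0 : E × 𝕜), F (z.1, φ z.1 + z.2) =
        ∑ j ∈ Finset.range n, c j z.1 * z.2 ^ j + z.2 ^ (n + 1) * u z := by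
  have hF' : AnalyticAt 𝕜 (fun z : E × 𝕜 ↦ F (z.1, w₀ + z.2)) 0 :=
    hF.comp_of_eq (analyticAt_fst.prod (analyticAt_const.add analyticAt_snd)) (by simp)
  have hderiv : deriv (fun w ↦ w₀ + w) 0 ≠ 0 := by simp
  have hord' : analyticOrderAt (fun w ↦ F (0, w₀ + w)) 0 = (n + 1 : ℕ) := by
    simpa [Function.comp_def, hord] using analyticOrderAt_comp_of_deriv_ne_zero
      (f := fun w ↦ F (0, w)) (z₀ := 0) (analyticAt_const.add analyticAt_id) hderiv
  obtain ⟨φ, c, u, hφ, hφ0, hc, hc0, hu, hu0, hexp⟩ :=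
    exists_tschirnhausen_expansion_zero hF' hord'
  exact ⟨fun t ↦ w₀ + φ t, c, u, analyticAt_const.add hφ, by simp [hφ0], hc, hc0, hu, hu0,
    by simpa only [add_assoc] using hexp⟩

end Preparation

section EulerOperator

variable {E : Type*} [NormedAddCommGroup E] [NormedSpace ℝ E]

/-- The amplitude of the `l`-th derivative of `x ^ α * U (γ x)` along a curve `γ` with
`γ' = x⁻¹ • A γ`: applied successively with `k = 0, …, l - 1`, the operator `α - k + ∂_{A z}`
replaces `x ^ (α - k) * U (γ x)` by `x ^ (α - (k + 1)) * V (γ x)`. -/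
def eulerIter (A : E →L[ℝ] E) (α : ℝ) (U : E → ℝ) : ℕ → E → ℝ
  | 0 => U
  | l + 1 => fun z ↦ (α - l) * eulerIter A α U l z + fderiv ℝ (eulerIter A α U l) z (A z)

variable {A : E →L[ℝ] E} {α : ℝ} {U : E → ℝ}

theorem analyticAt_eulerIter {z : E} (hU : AnalyticAt ℝ U z) (l : ℕ) :
    AnalyticAt ℝ (eulerIter A α U l) z := by
  induction l with
  | zero => exact hU
  | succ l ih =>
    exact (analyticAt_const.mul ih).add
      (((ContinuousLinearMap.id ℝ (E →L[ℝ] ℝ)).analyticAt_bilinear _).comp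
        (ih.fderiv.prod (A.analyticAt z)))

theorem eulerIter_apply_zero (l : ℕ) : eulerIter A α U l 0 = descProd α l * U 0 := by
  induction l with
  | zero => simp [eulerIter, descProd]
  | succ l ih =>
    rw [descProd, Finset.prod_range_succ, ← descProd]
    simp only [eulerIter, ih, map_zero, add_zero]
    ring

theorem iteratedDeriv_eq_rpow_mul_eulerIter {γ : ℝ → E} {f : ℝ → ℝ} {s : Set ℝ} {C : ℝ}
    (hs : IsOpen s) (hpos : s ⊆ Ioi 0) (hγ : ∀ x ∈ s, HasDerivAt γ (x⁻¹ • A (γ x)) x)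
    (hU : ∀ x ∈ s, AnalyticAt ℝ U (γ x)) (hf : ∀ x ∈ s, f x = C * x ^ α * U (γ x)) (l : ℕ) :
    ∀ x ∈ s, iteratedDeriv l f x = C * x ^ (α - l) * eulerIter A α U l (γ x) := by
  induction l with
  | zero => simpa [eulerIter] using hf
  | succ l ih =>
    intro x hx
    have hx0 : 0 < x := hpos hx
    have hW : DifferentiableAt ℝ (eulerIter A α U l) (γ x) :=
      (analyticAt_eulerIter (hU x hx) l).differentiableAt
    have hderiv := ((Real.hasDerivAt_rpow_const (p := α - l) (.inl hx0.ne')).const_mul C).fun_mul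
      (hW.hasFDerivAt.comp_hasDerivAt x (hγ x hx))
    have heq : iteratedDeriv l f =ᶠ[𝓝 x] fun x ↦ C * x ^ (α - l) * eulerIter A α U l (γ x) :=
      eventually_of_mem (hs.mem_nhds hx) ih
    simp only [Function.comp_apply] at hderiv
    rw [iteratedDeriv_succ, heq.deriv_eq, hderiv.deriv, map_smul, smul_eq_mul,
      Nat.cast_succ, ← sub_sub, Real.rpow_sub_one hx0.ne', eulerIter]
    ring

end EulerOperator

section MonomialApproximation

variable {ι : Type*}

/-- The map `(x, y) ↦ (cᵢ x^{aᵢ} y^{bᵢ})ᵢ`. -/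
def monomialMap (c a b : ι → ℝ) (p : ℝ × ℝ) : ι → ℝ := fun i ↦ c i * p.1 ^ a i * p.2 ^ b i

variable {c a b : ι → ℝ}

theorem isOpen_quadrant_inter_monomialMap_preimage {V : Set (ι → ℝ)} (hV : IsOpen V) :
    IsOpen ((Ioi 0 ×ˢ Ioi 0) ∩ monomialMap c a b ⁻¹' V) := by
  refine ContinuousOn.isOpen_inter_preimage ?_ (isOpen_Ioi.prod isOpen_Ioi) hV
  refine continuousOn_pi.2 fun i ↦ ?_
  refine (continuousOn_const.mul (continuousOn_fst.rpow_const ?_)).mul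
    (continuousOn_snd.rpow_const ?_)
  · exact fun p hp ↦ .inl hp.1.ne'
  · exact fun p hp ↦ .inl hp.2.ne'

variable [Fintype ι]

theorem hasDerivAt_monomialMap_fst {x : ℝ} (hx : 0 < x) (y : ℝ) :
    HasDerivAt (fun x ↦ monomialMap c a b (x, y))
      (x⁻¹ • ContinuousLinearMap.mul ℝ (ι → ℝ) a (monomialMap c a b (x, y))) x := by
  refine hasDerivAt_pi.2 fun i ↦ ?_
  refine (((Real.hasDerivAt_rpow_const (p := a i) (.inl hx.ne')).const_mul (c i)).mul_const
    (y ^ b i)).congr_deriv ?_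
  simp only [monomialMap, ContinuousLinearMap.mul_apply', Pi.smul_apply, Pi.mul_apply, smul_eq_mul,
    Real.rpow_sub_one hx.ne']
  ring

theorem hasDerivAt_monomialMap_snd (x : ℝ) {y : ℝ} (hy : 0 < y) :
    HasDerivAt (fun y ↦ monomialMap c a b (x, y))
      (y⁻¹ • ContinuousLinearMap.mul ℝ (ι → ℝ) b (monomialMap c a b (x, y))) y := by
  refine hasDerivAt_pi.2 fun i ↦ ?_
  refine ((Real.hasDerivAt_rpow_const (p := b i) (.inl hy.ne')).const_mul
    (c i * x ^ a i)).congr_deriv ?_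
  simp only [monomialMap, ContinuousLinearMap.mul_apply', Pi.smul_apply, Pi.mul_apply, smul_eq_mul,
    Real.rpow_sub_one hy.ne']
  ring

theorem pderiv2_eq_rpow_mul_eulerIter {U : (ι → ℝ) → ℝ} {V : Set (ι → ℝ)} {Φ : ℝ × ℝ → ℝ}
    {α β : ℝ} (hV : IsOpen V) (hU : AnalyticOnNhd ℝ U V)
    (hΦ : ∀ p ∈ (Ioi 0 ×ˢ Ioi 0) ∩ monomialMap c a b ⁻¹' V,
      Φ p = p.1 ^ α * p.2 ^ β * U (monomialMap c a b p)) (l m : ℕ) {p : ℝ × ℝ}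
    (hp : p ∈ (Ioi 0 ×ˢ Ioi 0) ∩ monomialMap c a b ⁻¹' V) :
    pderiv2 l m Φ p = p.1 ^ (α - l) * p.2 ^ (β - m) *
      eulerIter (.mul ℝ (ι → ℝ) a) α (eulerIter (.mul ℝ (ι → ℝ) b) β U m) l
        (monomialMap c a b p) := by
  have hΩ := isOpen_quadrant_inter_monomialMap_preimage (c := c) (a := a) (b := b) hV
  set Ω := (Ioi 0 ×ˢ Ioi 0) ∩ monomialMap c a b ⁻¹' V
  have inner (x y : ℝ) (hxy : (x, y) ∈ Ω) : iteratedDeriv m (fun y ↦ Φ (x, y)) y =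
      x ^ α * y ^ (β - m) * eulerIter (.mul ℝ (ι → ℝ) b) β U m (monomialMap c a b (x, y)) :=
    iteratedDeriv_eq_rpow_mul_eulerIter (s := Prod.mk x ⁻¹' Ω)
      (γ := fun y ↦ monomialMap c a b (x, y))
      (hΩ.preimage (Continuous.prodMk_right x)) (fun y hy ↦ hy.1.2)
      (fun y hy ↦ hasDerivAt_monomialMap_snd x hy.1.2) (fun y hy ↦ hU _ hy.2)
      (fun y hy ↦ hΦ (x, y) hy) m y hxy
  have outer := iteratedDeriv_eq_rpow_mul_eulerIter (s := (·, p.2) ⁻¹' Ω) (C := p.2 ^ (β - m))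
      (α := α) (U := eulerIter (.mul ℝ (ι → ℝ) b) β U m)
      (f := fun x ↦ iteratedDeriv m (fun y ↦ Φ (x, y)) p.2)
      (hΩ.preimage (Continuous.prodMk_left p.2)) (fun x hx ↦ hx.1.1)
      (fun x hx ↦ hasDerivAt_monomialMap_fst hx.1.1 p.2)
      (fun x hx ↦ analyticAt_eulerIter (hU _ hx.2) m)
      (fun x hx ↦ (inner x p.2 hx).trans (by ring)) l p.1 hp
  rw [pderiv2, outer]
  ring

theorem eventually_abs_pderiv2_sub_lt {U : (ι → ℝ) → ℝ} (hU : AnalyticAt ℝ U 0) (hU0 : U 0 ≠ 0)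
    {η : ℝ} (hη : 0 < η) (c a b : ι → ℝ) (α β : ℝ) (L M : ℕ) :
    ∀ᶠ ρ in 𝓝[>] (0 : ℝ), ∀ Φ : ℝ × ℝ → ℝ,
      (∀ p : ℝ × ℝ, 0 < p.1 → 0 < p.2 → ‖monomialMap c a b p‖ < ρ →
        Φ p = p.1 ^ α * p.2 ^ β * U (monomialMap c a b p)) →
      ∀ p : ℝ × ℝ, 0 < p.1 → 0 < p.2 → ‖monomialMap c a b p‖ < ρ → ∀ l ≤ L, ∀ m ≤ M,
        |pderiv2 l m Φ p - descProd α l * descProd β m * U 0 * p.1 ^ (α - l) * p.2 ^ (β - m)| <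
          η * |U 0| * p.1 ^ (α - l) * p.2 ^ (β - m) := by
  set W : ℕ → ℕ → (ι → ℝ) → ℝ := fun l m ↦
    eulerIter (.mul ℝ (ι → ℝ) a) α (eulerIter (.mul ℝ (ι → ℝ) b) β U m) l with hW
  have hW0 (l m : ℕ) : W l m 0 = descProd α l * descProd β m * U 0 := by
    simp only [hW, eulerIter_apply_zero, mul_assoc]
  have hclose (l m : ℕ) : ∀ᶠ z in 𝓝 0, |W l m z - W l m 0| < η * |U 0| :=
    (analyticAt_eulerIter (analyticAt_eulerIter hU m) l).continuousAt.eventually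
      (Metric.ball_mem_nhds _ (by positivity))
  have hall : ∀ᶠ z in 𝓝 0, AnalyticAt ℝ U z ∧ ∀ l ≤ L, ∀ m ≤ M, |W l m z - W l m 0| < η * |U 0| :=
    hU.eventually_analyticAt.and <| (Set.finite_Iic L).eventually_all.2 fun l _ ↦
      (Set.finite_Iic M).eventually_all.2 fun m _ ↦ hclose l m
  obtain ⟨ρ₀, hρ₀, hball⟩ := Metric.eventually_nhds_iff_ball.1 hall
  filter_upwards [Ioc_mem_nhdsGT hρ₀] with ρ hρ Φ hΦ p hx hy hp l hl m hm
  have hmem (z : ι → ℝ) (hz : z ∈ Metric.ball 0 ρ) := hball z (Metric.ball_subset_ball hρ.2 hz)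
  have hpz : monomialMap c a b p ∈ Metric.ball 0 ρ := by simpa using hp
  rw [pderiv2_eq_rpow_mul_eulerIter Metric.isOpen_ball (fun z hz ↦ (hmem z hz).1)
    (fun q hq ↦ hΦ q hq.1.1 hq.1.2 (by simpa using hq.2)) l m ⟨⟨hx, hy⟩, hpz⟩, ← hW0]
  have hxy : 0 < p.1 ^ (α - l) * p.2 ^ (β - m) :=
    mul_pos (Real.rpow_pos_of_pos hx _) (Real.rpow_pos_of_pos hy _)
  calc |p.1 ^ (α - l) * p.2 ^ (β - m) * W l m (monomialMap c a b p) -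
        W l m 0 * p.1 ^ (α - l) * p.2 ^ (β - m)|
      = |p.1 ^ (α - l) * p.2 ^ (β - m) * (W l m (monomialMap c a b p) - W l m 0)| := by ring_nf
    _ = |W l m (monomialMap c a b p) - W l m 0| * (p.1 ^ (α - l) * p.2 ^ (β - m)) := by
        rw [abs_mul, abs_of_pos hxy, mul_comm]
    _ < η * |U 0| * (p.1 ^ (α - l) * p.2 ^ (β - m)) := by
        gcongr
        exact (hmem _ hpz).2 l hl m hm
    _ = η * |U 0| * p.1 ^ (α - l) * p.2 ^ (β - m) := by ring

end MonomialApproximation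

section Puiseux

/-- The function `x ↦ f (x ^ (1 / N))`, a Puiseux series of index `N` when `f` is analytic. -/
def puiseux (N : ℕ) (f : ℝ → ℝ) (x : ℝ) : ℝ := f (x ^ (N : ℝ)⁻¹)

variable {N : ℕ} {f : ℝ → ℝ}

theorem puiseux_pow (hN : N ≠ 0) {t : ℝ} (ht : 0 ≤ t) : puiseux N f (t ^ N) = f t := by
  rw [puiseux, Real.pow_rpow_inv_natCast ht hN]

theorem exists_pos_pow_eq (hN : N ≠ 0) {x : ℝ} (hx : 0 < x) : ∃ t > 0, t ^ N = x :=
  ⟨x ^ (N : ℝ)⁻¹, Real.rpow_pos_of_pos hx _, Real.rpow_inv_natCast_pow hx.le hN⟩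

theorem tendsto_rpow_inv_nhdsGT_zero (hN : N ≠ 0) :
    Tendsto (fun x : ℝ ↦ x ^ (N : ℝ)⁻¹) (𝓝[>] 0) (𝓝[>] 0) := by
  have hN' : 0 < (N : ℝ)⁻¹ := by positivity
  refine tendsto_nhdsWithin_iff.2 ⟨?_, ?_⟩
  · simpa [Real.zero_rpow hN'.ne'] using
      (Real.continuous_rpow_const hN'.le).continuousWithinAt (s := Ioi 0) (x := 0).tendsto
  · exact eventually_mem_nhdsWithin.mono fun x hx ↦ Real.rpow_pos_of_pos hx _

theorem eventually_puiseuxOn_puiseux (hN : N ≠ 0) (hf : AnalyticAt ℝ f 0) :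
    ∀ᶠ a in 𝓝[>] 0, PuiseuxOn N a (puiseux N f) := by
  obtain ⟨r, hr, hball⟩ := hf.exists_ball_analyticOnNhd
  filter_upwards [tendsto_rpow_inv_nhdsGT_zero hN (mem_nhdsWithin_of_mem_nhds (Iio_mem_nhds hr))]
    with a ha
  refine ⟨f, Metric.ball 0 r, Metric.isOpen_ball, fun t ht ↦ ?_, hball, fun x _ ↦ rfl⟩
  rw [mem_ball_zero_iff, Real.norm_of_nonneg ht.1]
  exact ht.2.trans_lt ha

theorem leadingTerm_puiseux_pow_mul (hN : N ≠ 0) (hf : ContinuousAt f 0) (e : ℕ) :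
    LeadingTerm (puiseux N fun t ↦ t ^ e * f t) (f 0) (e / N) := by
  have hlim := hf.tendsto.comp ((tendsto_rpow_inv_nhdsGT_zero hN).mono_right nhdsWithin_le_nhds)
  refine hlim.congr' (eventually_mem_nhdsWithin.mono fun x hx ↦ ?_)
  obtain ⟨t, ht, rfl⟩ := exists_pos_pow_eq hN hx
  simp only [Function.comp_apply]
  rw [puiseux_pow hN ht.le, Real.pow_rpow_inv_natCast ht.le hN,
    ← Real.rpow_natCast_mul ht.le, mul_div_cancel₀ _ (Nat.cast_ne_zero.2 hN), Real.rpow_natCast]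
  field_simp

theorem PuiseuxOn.mul_index {a : ℝ} (h : PuiseuxOn N a f) (ha : 0 ≤ a) {q : ℕ} (hq : q ≠ 0) :
    PuiseuxOn (N * q) a f := by
  obtain ⟨f', I, hI, haI, hf', hff'⟩ := h
  have root_pow {x : ℝ} (hx : 0 ≤ x) : (x ^ ((N * q : ℕ) : ℝ)⁻¹) ^ q = x ^ (N : ℝ)⁻¹ := by
    rw [← Real.rpow_mul_natCast hx, Nat.cast_mul, mul_inv,
      inv_mul_cancel_right₀ (Nat.cast_ne_zero.2 hq)]
  refine ⟨fun t ↦ f' (t ^ q), (· ^ q) ⁻¹' I, hI.preimage (continuous_pow q), fun t ht ↦ haI ?_,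
    fun t ht ↦ (hf' (t ^ q) ht).fun_comp (f := (· ^ q)) (analyticAt_id.pow q), fun x hx ↦ ?_⟩
  · exact ⟨pow_nonneg ht.1 q, root_pow ha ▸ pow_le_pow_left₀ ht.1 ht.2 q⟩
  · simpa only [root_pow hx.1] using hff' x hx

end Puiseux

section MonomialBlock

/-- One piece of the resolution of `S` over `0 < x < a`: `D` is the image of a sliver under
`(x, y) ↦ (x, σ y + k x)`, with Puiseux data of index `N`, and in these coordinates `S` and its
derivatives agree with a monomial up to the relative error `η`. -/
def IsMonomialBlock (S : ℝ × ℝ → ℝ) (η : ℝ) (N : ℕ) (a : ℝ) (D : Set (ℝ × ℝ)) : Prop :=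
  ∃ (k g G : ℝ → ℝ) (σ li si Hi Mi αi di : ℝ) (βi : ℕ),
    (σ = 1 ∨ σ = -1) ∧
    PuiseuxOn N a k ∧ LeadingTerm k li si ∧ 1 ≤ si ∧
    PuiseuxOn N a g ∧ PuiseuxOn N a G ∧
    LeadingTerm G Hi Mi ∧ 0 < Hi ∧ 1 ≤ Mi ∧
    (∃ q : ℚ, (q : ℝ) = αi) ∧ 0 ≤ αi ∧ di ≠ 0 ∧
    D = (fun q : ℝ × ℝ => (q.1, σ * q.2 + k q.1)) '' sliverSet a g G ∧
    ((βi = 0 ∧ (∀ x, g x = 0) ∧ (∀ x ∈ Ioo (0:ℝ) a, G x = Hi * x ^ Mi) ∧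
      (∀ p ∈ sliverSet a g G, ∀ l : ℕ, (l : ℝ) ≤ αi →
        |pderiv2 l 0 (fun q => S (q.1, σ * q.2 + k q.1)) p -
            di * descProd αi l * p.1 ^ (αi - l)| <
          η * |di| * p.1 ^ (αi - l))) ∨
     (0 < βi ∧
      ((∀ x, g x = 0) ∨ ∃ hi mi : ℝ, 0 < hi ∧ Mi < mi ∧ LeadingTerm g hi mi) ∧
      (∀ p ∈ sliverSet a g G, ∀ l : ℕ, (l : ℝ) ≤ αi → ∀ mm : ℕ, mm ≤ βi →
        |pderiv2 l mm (fun q => S (q.1, σ * q.2 + k q.1)) p -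
            descProd αi l * descProd (βi : ℝ) mm * di *
              p.1 ^ (αi - l) * p.2 ^ ((βi : ℝ) - (mm : ℝ))| ≤
          η * |di| * p.1 ^ (αi - l) * p.2 ^ ((βi : ℝ) - (mm : ℝ)))))

/-- `D` truncated to `x < a` is a monomial block for every sufficiently small `a > 0`. -/
def IsMonomialGerm (S : ℝ × ℝ → ℝ) (η : ℝ) (N : ℕ) (D : Set (ℝ × ℝ)) : Prop :=
  ∀ᶠ a in 𝓝[>] 0, IsMonomialBlock S η N a (D ∩ {p | p.1 < a})

variable {S : ℝ × ℝ → ℝ} {η : ℝ} {N : ℕ} {D : Set (ℝ × ℝ)}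

theorem IsMonomialBlock.of_abs_pderiv2_sub_lt {a : ℝ} {k g G : ℝ → ℝ} {σ l s H M α d : ℝ} {β : ℕ}
    (hσ : σ = 1 ∨ σ = -1) (hk : PuiseuxOn N a k) (hl : LeadingTerm k l s) (hs : 1 ≤ s)
    (hg : PuiseuxOn N a g) (hG : PuiseuxOn N a G) (hGH : LeadingTerm G H M) (hH : 0 < H)
    (hM : 1 ≤ M) (hα : ∃ q : ℚ, (q : ℝ) = α) (hα0 : 0 ≤ α) (hd : d ≠ 0)
    (hD : D = (fun q : ℝ × ℝ ↦ (q.1, σ * q.2 + k q.1)) '' sliverSet a g G)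
    (hβ : β = 0 → (∀ x, g x = 0) ∧ ∀ x ∈ Ioo 0 a, G x = H * x ^ M)
    (hgh : (∀ x, g x = 0) ∨ ∃ h m : ℝ, 0 < h ∧ M < m ∧ LeadingTerm g h m)
    (hest : ∀ p ∈ sliverSet a g G, ∀ l : ℕ, (l : ℝ) ≤ α → ∀ m ≤ β,
      |pderiv2 l m (fun q ↦ S (q.1, σ * q.2 + k q.1)) p -
          descProd α l * descProd β m * d * p.1 ^ (α - l) * p.2 ^ ((β : ℝ) - m)| <
        η * |d| * p.1 ^ (α - l) * p.2 ^ ((β : ℝ) - m)) :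
    IsMonomialBlock S η N a D := by
  refine ⟨k, g, G, σ, l, s, H, M, α, d, β, hσ, hk, hl, hs, hg, hG, hGH, hH, hM, hα, hα0, hd, hD, ?_⟩
  rcases β.eq_zero_or_pos with rfl | hβ0
  · refine .inl ⟨rfl, (hβ rfl).1, (hβ rfl).2, fun p hp l hl ↦ ?_⟩
    simpa [descProd, mul_comm d] using hest p hp l hl 0 le_rfl
  · exact .inr ⟨hβ0, hgh, fun p hp l hl m hm ↦ (hest p hp l hl m hm).le⟩

theorem IsMonomialBlock.fst_mem_Ioo {a : ℝ} (h : IsMonomialBlock S η N a D) {p : ℝ × ℝ}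
    (hp : p ∈ D) : p.1 ∈ Ioo 0 a := by
  obtain ⟨k, g, G, σ, l, s, H, M, α, d, β, -, -, -, -, -, -, -, -, -, -, -, -, rfl, -⟩ := h
  obtain ⟨q, hq, rfl⟩ := hp
  exact ⟨hq.1, hq.2.1⟩

theorem IsMonomialBlock.mul_index {a : ℝ} (h : IsMonomialBlock S η N a D) (ha : 0 ≤ a) {q : ℕ}
    (hq : q ≠ 0) : IsMonomialBlock S η (N * q) a D := by
  obtain ⟨k, g, G, σ, l, s, H, M, α, d, β, hσ, hk, hl, hs, hg, hG, h⟩ := h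
  exact ⟨k, g, G, σ, l, s, H, M, α, d, β, hσ, hk.mul_index ha hq, hl, hs, hg.mul_index ha hq,
    hG.mul_index ha hq, h⟩

theorem IsMonomialGerm.mul_index (h : IsMonomialGerm S η N D) {q : ℕ} (hq : q ≠ 0) :
    IsMonomialGerm S η (N * q) D :=
  (h.and eventually_mem_nhdsWithin).mono fun _ ⟨hblock, ha⟩ ↦ hblock.mul_index ha.le hq

end MonomialBlock

section Chart

/-- The filter of neighborhoods of the `y`-axis from the right: properties that hold along it
hold over `0 < x < a` for some `a > 0`. -/
def edge : Filter (ℝ × ℝ) := (𝓝[>] 0).comap Prod.fst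

theorem eventually_edge_iff {P : ℝ × ℝ → Prop} :
    (∀ᶠ p in edge, P p) ↔ ∀ᶠ a in 𝓝[>] (0 : ℝ), ∀ p : ℝ × ℝ, p.1 ∈ Ioo 0 a → P p := by
  rw [edge, ((nhdsGT_basis (0 : ℝ)).comap Prod.fst).eventually_iff]
  constructor
  · rintro ⟨b, hb, h⟩
    filter_upwards [Ioo_mem_nhdsGT hb] with a ha p hp
    exact h ⟨hp.1, hp.2.trans ha.2⟩
  · intro h
    obtain ⟨a, ha, ha0⟩ := (h.and eventually_mem_nhdsWithin).exists
    exact ⟨a, ha0, fun p hp ↦ ha p hp⟩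

/-- Ramified coordinates around the Puiseux curve `y = x κ(x ^ (1 / N))`: the parameter is
`t = x ^ (1 / N)`, and `w` is the vertical distance to the curve in units of `t ^ μ`. -/
def chart (N μ : ℕ) (κ : ℝ → ℝ) (z : ℝ × ℝ) : ℝ × ℝ := (z.1 ^ N, z.1 ^ N * κ z.1 + z.1 ^ μ * z.2)

/-- The set of points over `x > 0` whose ramified coordinate `w` lies in `I`. -/
def sector (N μ : ℕ) (κ : ℝ → ℝ) (I : Set ℝ) : Set (ℝ × ℝ) := chart N μ κ '' (Ioi 0 ×ˢ I)

variable {N μ : ℕ} {κ : ℝ → ℝ}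

theorem chart_pow (q : ℕ) (τ w : ℝ) :
    chart N μ κ (τ ^ q, w) = chart (N * q) (μ * q) (fun τ ↦ κ (τ ^ q)) (τ, w) := by
  simp only [chart, ← pow_mul, mul_comm q]

theorem chart_pow_mul (p : ℕ) (t w : ℝ) :
    chart N μ κ (t, t ^ p * w) = chart N (μ + p) κ (t, w) := by
  simp only [chart, pow_add, mul_assoc]

theorem chart_add (hNμ : N ≤ μ) (φ : ℝ → ℝ) (t w : ℝ) :
    chart N μ κ (t, φ t + w) = chart N μ (fun t ↦ κ t + t ^ (μ - N) * φ t) (t, w) := by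
  obtain ⟨d, rfl⟩ := Nat.exists_eq_add_of_le hNμ
  simp only [chart, Nat.add_sub_cancel_left, pow_add, Prod.mk.injEq, true_and]
  ring

theorem sector_mono {I J : Set ℝ} (h : I ⊆ J) : sector N μ κ I ⊆ sector N μ κ J :=
  image_mono (prod_mono_right h)

theorem sector_union (I J : Set ℝ) : sector N μ κ (I ∪ J) = sector N μ κ I ∪ sector N μ κ J := by
  rw [sector, prod_union, image_union, sector, sector]

theorem sector_pow {q : ℕ} (hq : q ≠ 0) (I : Set ℝ) :
    sector (N * q) (μ * q) (fun τ ↦ κ (τ ^ q)) I = sector N μ κ I := by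
  refine Subset.antisymm ?_ ?_
  · rintro _ ⟨⟨τ, w⟩, ⟨hτ, hw⟩, rfl⟩
    exact ⟨(τ ^ q, w), ⟨pow_pos (mem_Ioi.1 hτ) q, hw⟩, chart_pow q τ w⟩
  · rintro _ ⟨⟨t, w⟩, ⟨ht, hw⟩, rfl⟩
    obtain ⟨τ, hτ, rfl⟩ := exists_pos_pow_eq hq ht
    exact ⟨(τ, w), ⟨hτ, hw⟩, (chart_pow q τ w).symm⟩

theorem chart_image_eventuallyLE (hN : N ≠ 0) {s R : Set (ℝ × ℝ)} (hs : ∀ z ∈ s, 0 < z.1)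
    (h : ∀ᶠ t in 𝓝[>] 0, ∀ w, (t, w) ∈ s → chart N μ κ (t, w) ∈ R) :
    chart N μ κ '' s ≤ᶠ[edge] R := by
  filter_upwards [((tendsto_rpow_inv_nhdsGT_zero hN).eventually h).comap Prod.fst]
  rintro _ hR ⟨⟨t, w⟩, hz, rfl⟩
  have hroot : (t ^ N) ^ (N : ℝ)⁻¹ = t := Real.pow_rpow_inv_natCast (hs _ hz).le hN
  exact hroot ▸ hR w (hroot.symm ▸ hz)

end Chart

section MonomialLeaf

/-- The region `c t ^ δ / ε < w < ε` over `t > 0`, in the ramified coordinates of a chart. -/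
def horn (c : ℝ) (δ : ℕ) (ε : ℝ) : Set (ℝ × ℝ) :=
  {z | 0 < z.1 ∧ c * z.1 ^ δ < ε * z.2 ∧ z.2 < ε}

variable {S : ℝ × ℝ → ℝ} {N μ δ A β : ℕ} {κ : ℝ → ℝ} {σ c ε a t v η : ℝ} {U : (Fin 3 → ℝ) → ℝ}

theorem pos_of_mem_horn (hc : 0 ≤ c) (hε : 0 < ε) (h : (t, v) ∈ horn c δ ε) : 0 < v :=
  pos_of_mul_pos_right ((mul_nonneg hc (pow_nonneg h.1.le δ)).trans_lt h.2.1) hε.le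

theorem monomialMap_chart (hN : N ≠ 0) (ht : 0 < t) (hv : 0 < v) :
    monomialMap ![1, 1, c] ![(N : ℝ)⁻¹, -(μ / N), (δ + μ) / N] ![0, 1, -1] (chart N μ 0 (t, v)) =
      ![t, v, c * t ^ δ / v] := by
  have hN' : (N : ℝ) ≠ 0 := Nat.cast_ne_zero.2 hN
  ext i
  fin_cases i <;>
    simp [monomialMap, chart, ← Real.rpow_natCast_mul ht.le, mul_div_cancel₀, hN', Real.rpow_neg,
      Real.rpow_neg_one, Real.rpow_add, ht, ht.le]
  all_goals field_simp

theorem chart_mem_sliverSet_iff (hN : N ≠ 0) (hε : 0 < ε) (ht : 0 < t) :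
    chart N μ 0 (t, v) ∈ sliverSet a (puiseux N fun t ↦ t ^ (δ + μ) * (c / ε))
      (puiseux N fun t ↦ t ^ μ * ε) ↔ (t, v) ∈ horn c δ ε ∧ t ^ N < a := by
  have hμ : 0 < t ^ μ := pow_pos ht μ
  have hlow : t ^ (δ + μ) * (c / ε) < t ^ μ * v ↔ c * t ^ δ < ε * v := by
    rw [pow_add, mul_comm (t ^ δ), mul_assoc, mul_lt_mul_iff_right₀ hμ, mul_div_assoc',
      div_lt_iff₀ hε, mul_comm c, mul_comm v]
  simp only [sliverSet, horn, chart, mem_ofPred_eq, puiseux_pow hN ht.le, Pi.zero_apply, mul_zero,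
    zero_add, hlow, mul_lt_mul_iff_right₀ hμ, ht, pow_pos ht N]
  tauto

theorem exists_chart_eq (hN : N ≠ 0) {p : ℝ × ℝ} (hp : 0 < p.1) :
    ∃ t > 0, ∃ v, chart N μ 0 (t, v) = p := by
  obtain ⟨t, ht, htp⟩ := exists_pos_pow_eq hN hp
  refine ⟨t, ht, p.2 / t ^ μ, Prod.ext htp ?_⟩
  simp [chart, mul_div_cancel₀ p.2 (pow_pos ht μ).ne']

theorem shear_chart_zero (hN : N ≠ 0) (ht : 0 ≤ t) :
    ((chart N μ 0 (t, v)).1, σ * (chart N μ 0 (t, v)).2 +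
      puiseux N (fun t ↦ t ^ N * κ t) (chart N μ 0 (t, v)).1) = chart N μ κ (t, σ * v) := by
  simp only [chart, puiseux_pow hN ht, Pi.zero_apply, Prod.mk.injEq, true_and]
  ring

theorem chart_image_horn (hN : N ≠ 0) (hσ : σ * σ = 1) (hε : 0 < ε) :
    chart N μ κ '' {z | (z.1, σ * z.2) ∈ horn c δ ε} ∩ {p | p.1 < a} =
      (fun q ↦ (q.1, σ * q.2 + puiseux N (fun t ↦ t ^ N * κ t) q.1)) ''
        sliverSet a (puiseux N fun t ↦ t ^ (δ + μ) * (c / ε)) (puiseux N fun t ↦ t ^ μ * ε) := by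
  refine Subset.antisymm ?_ ?_
  · rintro _ ⟨⟨⟨t, w⟩, hz, rfl⟩, ha⟩
    refine ⟨chart N μ 0 (t, σ * w), (chart_mem_sliverSet_iff hN hε hz.1).2 ⟨hz, ha⟩, ?_⟩
    beta_reduce
    rw [shear_chart_zero hN hz.1.le, ← mul_assoc, hσ, one_mul]
  · rintro _ ⟨p, hp, rfl⟩
    obtain ⟨t, ht, v, rfl⟩ := exists_chart_eq (μ := μ) hN hp.1
    obtain ⟨hz, ha⟩ := (chart_mem_sliverSet_iff hN hε ht).1 hp
    beta_reduce
    rw [shear_chart_zero hN ht.le]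
    exact ⟨⟨(t, σ * v), by simpa [← mul_assoc, hσ] using hz, rfl⟩, ha⟩

theorem rpow_mul_rpow_chart (hN : N ≠ 0) (hA : β * μ ≤ A) (ht : 0 < t) :
    (chart N μ 0 (t, v)).1 ^ ((A - β * μ : ℝ) / N) * (chart N μ 0 (t, v)).2 ^ (β : ℝ) =
      t ^ A * v ^ β := by
  obtain ⟨d, rfl⟩ := Nat.exists_eq_add_of_le hA
  have hd : ((β * μ + d : ℕ) - β * μ : ℝ) = d := by push_cast; ring
  simp only [chart, Pi.zero_apply, mul_zero, zero_add, ← Real.rpow_natCast_mul ht.le, hd,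
    mul_div_cancel₀ (d : ℝ) (Nat.cast_ne_zero.2 hN), Real.rpow_natCast]
  ring

theorem eventually_forall_sliverSet_abs_pderiv2_sub_lt (hN : N ≠ 0) (hA : β * μ ≤ A)
    (hc : 0 ≤ c) (hη : 0 < η) (hU : AnalyticAt ℝ U 0) (hU0 : U 0 ≠ 0)
    (hS : ∀ᶠ z in 𝓝 (0 : ℝ × ℝ), 0 < z.1 → 0 < z.2 →
      S (chart N μ κ (z.1, σ * z.2)) = z.1 ^ A * z.2 ^ β * U ![z.1, z.2, c * z.1 ^ δ / z.2])
    {α : ℝ} (hα : α = (A - β * μ) / N) (L : ℕ) :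
    ∀ᶠ ε in 𝓝[>] 0, ∀ a : ℝ, a ^ (N : ℝ)⁻¹ < ε →
      ∀ p ∈ sliverSet a (puiseux N fun t ↦ t ^ (δ + μ) * (c / ε)) (puiseux N fun t ↦ t ^ μ * ε),
      ∀ l ≤ L, ∀ m ≤ β,
      |pderiv2 l m (fun q ↦ S (q.1, σ * q.2 + puiseux N (fun t ↦ t ^ N * κ t) q.1)) p -
        descProd α l * descProd β m * U 0 * p.1 ^ (α - l) * p.2 ^ ((β : ℝ) - m)| <
          η * |U 0| * p.1 ^ (α - l) * p.2 ^ ((β : ℝ) - m) := by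
  obtain ⟨r, hr, hball⟩ := Metric.eventually_nhds_iff_ball.1 hS
  filter_upwards [eventually_abs_pderiv2_sub_lt hU hU0 hη ![1, 1, c]
    ![(N : ℝ)⁻¹, -(μ / N), (δ + μ) / N] ![0, 1, -1] α β L β, Ioc_mem_nhdsGT hr]
    with ε hε hεr a ha p hp l hl m hm
  obtain ⟨t, ht, v, rfl⟩ := exists_chart_eq (μ := μ) hN hp.1
  obtain ⟨hz, hta⟩ := (chart_mem_sliverSet_iff hN hεr.1 ht).1 hp
  have hv : 0 < v := pos_of_mem_horn hc hεr.1 hz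
  have htε : t < ε := by
    rw [← Real.pow_rpow_inv_natCast ht.le hN]
    exact (Real.rpow_lt_rpow (pow_pos ht N).le hta (by positivity)).trans ha
  have hy : 0 < (chart N μ 0 (t, v)).2 := by simp [chart, pow_pos ht, hv]
  refine hε _ (fun p hp₁ hp₂ hp ↦ ?_) _ hp.1 hy ?_ l hl m hm
  · obtain ⟨t, ht, v, rfl⟩ := exists_chart_eq (μ := μ) hN hp₁
    have hv : 0 < v := by simpa [chart, pow_pos ht] using hp₂
    rw [monomialMap_chart hN ht hv] at hp ⊢
    rw [shear_chart_zero hN ht.le, hα, rpow_mul_rpow_chart hN hA ht]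
    have hlt (i : Fin 3) := ((norm_le_pi_norm _ i).trans_lt hp).trans_le hεr.2
    refine hball (t, v) ?_ ht hv
    simpa [Prod.norm_def] using ⟨hlt 0, hlt 1⟩
  · rw [monomialMap_chart hN ht hv, pi_norm_lt_iff hεr.1, Fin.forall_fin_succ, Fin.forall_fin_two]
    simp only [Matrix.cons_val_zero, Matrix.cons_val_succ, Matrix.cons_val_one]
    refine ⟨?_, ?_, ?_⟩ <;> rw [Real.norm_of_nonneg]
    exacts [htε, ht.le, hz.2.2, hv.le,
      (div_lt_iff₀ hv).2 hz.2.1, div_nonneg (mul_nonneg hc (pow_nonneg ht.le δ)) hv.le]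

theorem eventually_isMonomialGerm_chart_image_horn (hN : N ≠ 0) (hNμ : N ≤ μ) (hA : β * μ ≤ A)
    (hδ : 0 < δ) (hσ : σ = 1 ∨ σ = -1) (hc : 0 ≤ c) (hβ : β = 0 → c = 0) (hη : 0 < η)
    (hκ : AnalyticAt ℝ κ 0) (hU : AnalyticAt ℝ U 0) (hU0 : U 0 ≠ 0)
    (hS : ∀ᶠ z in 𝓝 (0 : ℝ × ℝ), 0 < z.1 → 0 < z.2 →
      S (chart N μ κ (z.1, σ * z.2)) = z.1 ^ A * z.2 ^ β * U ![z.1, z.2, c * z.1 ^ δ / z.2]) :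
    ∀ᶠ ε in 𝓝[>] 0,
      IsMonomialGerm S η N (chart N μ κ '' {z | (z.1, σ * z.2) ∈ horn c δ ε}) := by
  have hN0 : (0 : ℝ) < N := by positivity
  set α : ℝ := (A - β * μ) / N with hα
  filter_upwards [eventually_forall_sliverSet_abs_pderiv2_sub_lt hN hA hc hη hU hU0 hS hα ⌊α⌋₊,
    eventually_mem_nhdsWithin] with ε hest hε
  filter_upwards [eventually_puiseuxOn_puiseux hN ((analyticAt_id.fun_pow N).fun_mul hκ),
    eventually_puiseuxOn_puiseux hN ((analyticAt_id.fun_pow (δ + μ)).fun_mul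
      (analyticAt_const (v := c / ε))),
    eventually_puiseuxOn_puiseux hN ((analyticAt_id.fun_pow μ).fun_mul (analyticAt_const (v := ε))),
    (tendsto_rpow_inv_nhdsGT_zero hN).eventually (Ioo_mem_nhdsGT hε)] with a hk hg hG ha
  refine .of_abs_pderiv2_sub_lt hσ hk (leadingTerm_puiseux_pow_mul hN hκ.continuousAt N)
    (div_self hN0.ne').ge hg hG (leadingTerm_puiseux_pow_mul hN continuousAt_const μ) hε ?_
    ⟨(A - β * μ) / N, by simp [α]⟩ ?_ hU0 (chart_image_horn hN ?_ hε) ?_ ?_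
    fun p hp l hl ↦ hest a ha.2 p hp l (Nat.le_floor hl)
  · rw [one_le_div hN0]
    exact_mod_cast hNμ
  · exact div_nonneg (sub_nonneg.2 (mod_cast hA)) hN0.le
  · rcases hσ with rfl | rfl <;> norm_num
  · refine fun h ↦ ⟨fun x ↦ by simp [puiseux, hβ h], fun x hx ↦ ?_⟩
    obtain ⟨t, ht, rfl⟩ := exists_pos_pow_eq hN hx.1
    rw [puiseux_pow hN ht.le, ← Real.rpow_natCast_mul ht.le, mul_div_cancel₀ _ hN0.ne',
      Real.rpow_natCast, mul_comm, id]
  · rcases hc.eq_or_lt with rfl | hc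
    · exact .inl fun x ↦ by simp [puiseux]
    · refine .inr ⟨c / ε, (δ + μ : ℕ) / N, div_pos hc hε, ?_,
        leadingTerm_puiseux_pow_mul hN continuousAt_const (δ + μ)⟩
      gcongr
      omega

end MonomialLeaf

section MonomialCover

/-- Near the `y`-axis, `Q` is covered by the closures of finitely many monomial germs of a common
index, all of them contained in `R`. -/
def MonomialCover (S : ℝ × ℝ → ℝ) (η : ℝ) (R Q : Set (ℝ × ℝ)) : Prop :=
  ∃ N ≠ 0, ∃ L : Set (Set (ℝ × ℝ)), L.Finite ∧
    (∀ D ∈ L, IsMonomialGerm S η N D ∧ D ≤ᶠ[edge] R) ∧ Q ≤ᶠ[edge] ⋃ D ∈ L, closure D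

namespace MonomialCover

variable {S : ℝ × ℝ → ℝ} {η : ℝ} {R R' Q Q' : Set (ℝ × ℝ)} {N μ : ℕ} {κ : ℝ → ℝ}

theorem of_isMonomialGerm {D : Set (ℝ × ℝ)} (hN : N ≠ 0) (hD : IsMonomialGerm S η N D)
    (hR : D ≤ᶠ[edge] R) (hQ : Q ⊆ closure D) : MonomialCover S η R Q :=
  ⟨N, hN, {D}, finite_singleton D, by simpa using ⟨hD, hR⟩,
    .of_forall fun p hp ↦ mem_biUnion rfl (hQ hp)⟩

theorem empty : MonomialCover S η R ∅ :=
  ⟨1, one_ne_zero, ∅, finite_empty, by simp, .of_forall fun _ h ↦ h.elim⟩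

theorem mono (h : MonomialCover S η R Q) (hR : R ≤ᶠ[edge] R') (hQ : Q' ≤ᶠ[edge] Q) :
    MonomialCover S η R' Q' := by
  obtain ⟨N, hN, L, hL, hD, hcov⟩ := h
  exact ⟨N, hN, L, hL, fun D hDL ↦ ⟨(hD D hDL).1, (hD D hDL).2.trans hR⟩, hQ.trans hcov⟩

theorem union (h : MonomialCover S η R Q) (h' : MonomialCover S η R Q') :
    MonomialCover S η R (Q ∪ Q') := by
  obtain ⟨N, hN, L, hL, hD, hcov⟩ := h
  obtain ⟨N', hN', L', hL', hD', hcov'⟩ := h'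
  refine ⟨N * N', mul_ne_zero hN hN', L ∪ L', hL.union hL', ?_, ?_⟩
  · rintro D (hDL | hDL)
    · exact ⟨(hD D hDL).1.mul_index hN', (hD D hDL).2⟩
    · exact ⟨mul_comm N' N ▸ (hD' D hDL).1.mul_index hN, (hD' D hDL).2⟩
  · rw [biUnion_union]
    exact hcov.union hcov'

theorem sector_of_isCompact {K : Set ℝ} (hK : IsCompact K)
    (h : ∀ w ∈ K, ∃ V ∈ 𝓝[K] w, MonomialCover S η R (sector N μ κ V)) :
    MonomialCover S η R (sector N μ κ K) := by
  refine hK.induction_on (p := fun V ↦ MonomialCover S η R (sector N μ κ V)) ?_ ?_ ?_ h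
  · simpa [sector] using empty
  · exact fun V W hVW hW ↦ hW.mono .rfl (sector_mono hVW).eventuallyLE
  · exact fun V W hV hW ↦ (sector_union V W).symm ▸ hV.union hW

end MonomialCover

/-- Arbitrarily small sectors around the curve `w = w₀` of a chart contain a finite cover by
monomial germs of a smaller sector around that curve. -/
def ResolvableAt (S : ℝ × ℝ → ℝ) (η : ℝ) (N μ : ℕ) (κ : ℝ → ℝ) (w₀ : ℝ) : Prop :=
  ∀ U ∈ 𝓝 w₀, ∃ V ∈ 𝓝 w₀, MonomialCover S η (sector N μ κ U) (sector N μ κ V)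

variable {S : ℝ × ℝ → ℝ} {η w₀ : ℝ} {N μ : ℕ} {κ : ℝ → ℝ}

theorem ResolvableAt.of_pow {q : ℕ} (hq : q ≠ 0)
    (h : ResolvableAt S η (N * q) (μ * q) (fun τ ↦ κ (τ ^ q)) w₀) : ResolvableAt S η N μ κ w₀ := by
  simpa only [ResolvableAt, sector_pow hq] using h

theorem sector_eventuallyLE_of_tendsto {κ' θ : ℝ → ℝ} {I J : Set ℝ} (hN : N ≠ 0)
    (hθ : ∀ t w, chart N μ κ (t, w) = chart N μ κ' (t, θ t + w))
    (h : ∀ᶠ t in 𝓝[>] 0, ∀ w ∈ I, θ t + w ∈ J) : sector N μ κ I ≤ᶠ[edge] sector N μ κ' J := by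
  refine chart_image_eventuallyLE hN (fun z hz ↦ hz.1) ?_
  filter_upwards [h] with t ht w hw
  exact ⟨(t, θ t + w), ⟨hw.1, ht w hw.2⟩, (hθ t w).symm⟩

theorem exists_mem_nhds_eventually_add_mem {θ : ℝ → ℝ} (hθ : ContinuousAt θ 0) {U : Set ℝ}
    (hU : U ∈ 𝓝 (θ 0 + w₀)) : ∃ V ∈ 𝓝 w₀, ∀ᶠ t in 𝓝[>] 0, ∀ w ∈ V, θ t + w ∈ U := by
  have hcont : ContinuousAt (fun z : ℝ × ℝ ↦ θ z.1 + z.2) (0, w₀) :=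
    (hθ.comp_of_eq continuousAt_fst rfl).add continuousAt_snd
  obtain ⟨T, hT, V, hV, hTV⟩ := mem_nhds_prod_iff.1 (hcont hU)
  refine ⟨V, hV, mem_nhdsWithin_of_mem_nhds (mem_of_superset hT fun t ht w hw ↦ ?_)⟩
  exact hTV (mk_mem_prod ht hw)

theorem ResolvableAt.of_shift (hN : N ≠ 0) (hNμ : N ≤ μ) {φ : ℝ → ℝ} (hφ : ContinuousAt φ 0)
    (h : ResolvableAt S η N μ (fun t ↦ κ t + t ^ (μ - N) * φ t) 0) :
    ResolvableAt S η N μ κ (φ 0) := by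
  intro U hU
  obtain ⟨W, hW, hWU⟩ := exists_mem_nhds_eventually_add_mem (w₀ := 0) hφ (by simpa using hU)
  obtain ⟨W', hW', hcov⟩ := h W hW
  obtain ⟨V, hV, hVW⟩ := exists_mem_nhds_eventually_add_mem (w₀ := φ 0) hφ.neg (by simpa using hW')
  refine ⟨V, hV, hcov.mono
    (sector_eventuallyLE_of_tendsto hN (fun t w ↦ (chart_add hNμ φ t w).symm) hWU)
    (sector_eventuallyLE_of_tendsto hN (fun t w ↦ ?_) hVW)⟩
  rw [← chart_add hNμ, Pi.neg_apply, add_neg_cancel_left]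

end MonomialCover

section ChartExpansion

/-- In the chart `(N, μ, κ)` and near `(0, w₀)`, the function `S` is `t ^ A * F (t, w)` with `F`
analytic. -/
structure ChartExpansion (S : ℝ × ℝ → ℝ) (N μ A : ℕ) (κ : ℝ → ℝ) (F : ℝ × ℝ → ℝ) (w₀ : ℝ) :
    Prop where
  index_ne_zero : N ≠ 0
  index_le : N ≤ μ
  analyticAt_curve : AnalyticAt ℝ κ 0
  analyticAt : AnalyticAt ℝ F (0, w₀)
  eventually_eq : ∀ᶠ z in 𝓝 (0, w₀), S (chart N μ κ z) = z.1 ^ A * F z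

namespace ChartExpansion

variable {S : ℝ × ℝ → ℝ} {N μ A : ℕ} {κ : ℝ → ℝ} {F F' : ℝ × ℝ → ℝ} {w₀ : ℝ}

theorem shift {φ : ℝ → ℝ} (h : ChartExpansion S N μ A κ F (φ 0)) (hφ : AnalyticAt ℝ φ 0) :
    ChartExpansion S N μ A (fun t ↦ κ t + t ^ (μ - N) * φ t) (fun z ↦ F (z.1, φ z.1 + z.2)) 0 := by
  have hshift : AnalyticAt ℝ (fun z : ℝ × ℝ ↦ (z.1, φ z.1 + z.2)) (0, 0) :=
    analyticAt_fst.prod ((hφ.comp_of_eq analyticAt_fst rfl).add analyticAt_snd)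
  refine ⟨h.index_ne_zero, h.index_le,
    h.analyticAt_curve.add ((analyticAt_id.pow (μ - N)).mul hφ),
    h.analyticAt.comp_of_eq hshift (by simp), ?_⟩
  have htends := hshift.continuousAt.tendsto
  simp only [add_zero] at htends
  filter_upwards [htends.eventually h.eventually_eq] with z hz
  rw [← hz, chart_add h.index_le]

theorem ramify {q : ℕ} (h : ChartExpansion S N μ A κ F w₀) (hq : q ≠ 0) :
    ChartExpansion S (N * q) (μ * q) (A * q) (fun τ ↦ κ (τ ^ q)) (fun z ↦ F (z.1 ^ q, z.2)) w₀ := by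
  have hpow : AnalyticAt ℝ (fun z : ℝ × ℝ ↦ (z.1 ^ q, z.2)) (0, w₀) :=
    (analyticAt_fst.pow q).prod analyticAt_snd
  refine ⟨mul_ne_zero h.index_ne_zero hq, Nat.mul_le_mul_right q h.index_le,
    h.analyticAt_curve.comp_of_eq (analyticAt_id.pow q) (by simp [hq]),
    h.analyticAt.comp_of_eq hpow (by simp [hq]), ?_⟩
  have htends := hpow.continuousAt.tendsto
  simp only [zero_pow hq] at htends
  filter_upwards [htends.eventually h.eventually_eq] with z hz
  rw [← chart_pow, hz, mul_comm A, pow_mul]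

theorem rescale (h : ChartExpansion S N μ A κ F 0) {p : ℕ} (hp : p ≠ 0) {B : ℕ}
    (hF' : AnalyticAt ℝ F' (0, w₀))
    (hFF' : ∀ᶠ z in 𝓝 (0, w₀), F (z.1, z.1 ^ p * z.2) = z.1 ^ B * F' z) :
    ChartExpansion S N (μ + p) (A + B) κ F' w₀ := by
  refine ⟨h.index_ne_zero, h.index_le.trans (μ.le_add_right p), h.analyticAt_curve, hF', ?_⟩
  have htends : Tendsto (fun z : ℝ × ℝ ↦ (z.1, z.1 ^ p * z.2)) (𝓝 (0, w₀)) (𝓝 (0, 0)) := by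
    have hcont : Continuous fun z : ℝ × ℝ ↦ (z.1, z.1 ^ p * z.2) := by fun_prop
    simpa [hp] using hcont.tendsto (0, w₀)
  filter_upwards [htends.eventually h.eventually_eq, hFF'] with z hz hz'
  rw [← chart_pow_mul, hz, hz', pow_add, mul_assoc]

end ChartExpansion

end ChartExpansion

section Leaf

variable {S : ℝ × ℝ → ℝ} {N μ A β p : ℕ} {κ : ℝ → ℝ} {F u : ℝ × ℝ → ℝ} {η σ c : ℝ}

theorem analyticAt_apply {ι : Type*} [Fintype ι] (i : ι) (z : ι → ℝ) :
    AnalyticAt ℝ (fun z : ι → ℝ ↦ z i) z :=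
  (ContinuousLinearMap.proj (R := ℝ) (φ := fun _ : ι ↦ ℝ) i).analyticAt z

theorem sector_closure_subset (I : Set ℝ) :
    sector N μ κ (closure I) ⊆ closure (sector N μ κ I) := by
  rintro _ ⟨⟨t, w⟩, ⟨ht, hw⟩, rfl⟩
  have hcont : Continuous fun w ↦ chart N μ κ (t, w) := by simp only [chart]; fun_prop
  exact map_mem_closure (f := fun w ↦ chart N μ κ (t, w)) hcont hw
    fun v hv ↦ ⟨(t, v), ⟨ht, hv⟩, rfl⟩

theorem preimage_mul_Icc_subset_closure (hσ : σ ≠ 0) {ε : ℝ} (hε : 0 < ε) :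
    {w | σ * w ∈ Icc 0 ε} ⊆ closure {w | σ * w ∈ Ioo 0 ε} := by
  rw [← closure_Ioo hε.ne]
  exact ((Homeomorph.mulLeft₀ σ hσ).preimage_closure (Ioo 0 ε)).le

namespace ChartExpansion

theorem eventually_isMonomialGerm (h : ChartExpansion S N μ A κ F 0) (hA : β * μ ≤ A)
    (hp : p ≠ 0) (hσ : σ = 1 ∨ σ = -1) (hc : 0 ≤ c) (hβ : β = 0 → c = 0) (hη : 0 < η)
    {U : (Fin 3 → ℝ) → ℝ} (hU : AnalyticAt ℝ U 0) (hU0 : U 0 ≠ 0)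
    (hF : ∀ᶠ z in 𝓝 0, 0 < z.1 → 0 < σ * z.2 →
      F z = (σ * z.2) ^ β * U ![z.1, σ * z.2, c * z.1 ^ p / (σ * z.2)]) :
    ∀ᶠ ε in 𝓝[>] 0,
      IsMonomialGerm S η N (chart N μ κ '' {z | (z.1, σ * z.2) ∈ horn c p ε}) := by
  have hσσ : σ * σ = 1 := by rcases hσ with rfl | rfl <;> norm_num
  refine eventually_isMonomialGerm_chart_image_horn h.index_ne_zero h.index_le hA
    (Nat.pos_of_ne_zero hp) hσ hc hβ hη h.analyticAt_curve hU hU0 ?_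
  have htends : Tendsto (fun z : ℝ × ℝ ↦ (z.1, σ * z.2)) (𝓝 0) (𝓝 0) := by
    have hcont : Continuous fun z : ℝ × ℝ ↦ (z.1, σ * z.2) := by fun_prop
    simpa [← Prod.mk_zero_zero] using hcont.tendsto 0
  filter_upwards [htends.eventually h.eventually_eq, htends.eventually hF] with z hz hz' h₁ h₂
  simp only [← mul_assoc σ, hσσ, one_mul] at hz'
  rw [hz, hz' h₁ h₂, mul_assoc]

theorem eventually_monomialCover_half (h : ChartExpansion S N μ A κ F 0) (hA : β * μ ≤ A)
    (hu : AnalyticAt ℝ u 0) (hu0 : u 0 ≠ 0) (hF : ∀ᶠ z in 𝓝 0, F z = z.2 ^ β * u z)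
    (hη : 0 < η) (hσ : σ = 1 ∨ σ = -1) :
    ∀ᶠ ε in 𝓝[>] 0, MonomialCover S η (sector N μ κ {w | σ * w ∈ Ioo 0 ε})
      (sector N μ κ {w | σ * w ∈ Icc 0 ε}) := by
  have hσσ : σ * σ = 1 := by rcases hσ with rfl | rfl <;> norm_num
  have hσ0 : σ ≠ 0 := left_ne_zero_of_mul_eq_one hσσ
  have hu' : AnalyticAt ℝ (fun z : Fin 3 → ℝ ↦ σ ^ β * u (z 0, σ * z 1)) 0 :=
    analyticAt_const.mul <| hu.comp_of_eq ((analyticAt_apply 0 0).prod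
      (analyticAt_const.mul (analyticAt_apply 1 0))) (by simp)
  have hgerm := h.eventually_isMonomialGerm (c := 0) hA one_ne_zero hσ le_rfl (fun _ ↦ rfl) hη
    hu' (by simpa [hσ0, ← Prod.mk_zero_zero] using hu0) (by
      filter_upwards [hF] with z hz _ _
      simp [hz, ← mul_assoc, ← mul_pow, mul_right_comm σ, hσσ])
  filter_upwards [hgerm, eventually_mem_nhdsWithin] with ε hε hε0
  have hhorn : {z : ℝ × ℝ | (z.1, σ * z.2) ∈ horn 0 1 ε} = Ioi 0 ×ˢ {w | σ * w ∈ Ioo 0 ε} := by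
    ext z
    simp [horn, mul_pos_iff_of_pos_left (mem_Ioi.1 hε0)]
  rw [hhorn] at hε
  exact .of_isMonomialGerm h.index_ne_zero hε .rfl
    ((sector_mono (preimage_mul_Icc_subset_closure hσ0 hε0)).trans (sector_closure_subset _))

theorem resolvableAt_of_eq_pow_mul (h : ChartExpansion S N μ A κ F 0) (hA : β * μ ≤ A)
    (hu : AnalyticAt ℝ u 0) (hu0 : u 0 ≠ 0) (hF : ∀ᶠ z in 𝓝 0, F z = z.2 ^ β * u z)
    (hη : 0 < η) : ResolvableAt S η N μ κ 0 := by
  intro U hU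
  obtain ⟨r, hr, hrU⟩ := Metric.mem_nhds_iff.1 hU
  obtain ⟨ε, ⟨hpos, hneg⟩, hε, hεr⟩ :=
    (((h.eventually_monomialCover_half hA hu hu0 hF hη (.inl rfl)).and
      (h.eventually_monomialCover_half hA hu hu0 hF hη (.inr rfl))).and (Ioo_mem_nhdsGT hr)).exists
  have hsub (w : ℝ) (hw : |w| < r) : w ∈ U := hrU (by simpa using hw)
  refine ⟨Icc (-ε) ε, Icc_mem_nhds (neg_neg_of_pos hε) hε,
    ((hpos.mono (sector_mono fun w hw ↦ hsub w ?_).eventuallyLE .rfl).union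
      (hneg.mono (sector_mono fun w hw ↦ hsub w ?_).eventuallyLE .rfl)).mono .rfl ?_⟩
  · simp only [mem_ofPred_eq, mem_Ioo] at hw
    exact abs_lt.2 ⟨by linarith, by linarith⟩
  · simp only [mem_ofPred_eq, mem_Ioo] at hw
    exact abs_lt.2 ⟨by linarith, by linarith⟩
  · rw [← sector_union]
    refine (sector_mono fun w hw ↦ ?_).eventuallyLE
    rcases le_total 0 w with hw0 | hw0
    · exact .inl ⟨by linarith, by linarith [hw.2]⟩
    · exact .inr ⟨by linarith, by linarith [hw.1]⟩

end ChartExpansion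

end Leaf

section NewtonPolygon

theorem exists_newton_slope {ι : Type*} {s : Finset ι} {d : ι → ℕ} {e : ι → ℕ∞}
    (hd : ∀ j ∈ s, d j ≠ 0) (he : ∀ j ∈ s, e j ≠ 0) (hfin : ∃ j ∈ s, e j ≠ ⊤) :
    ∃ p ≠ 0, ∃ q ≠ 0, (∀ j ∈ s, ((p * d j : ℕ) : ℕ∞) ≤ e j * (q : ℕ)) ∧
      ∃ j ∈ s, e j * (q : ℕ) = (p * d j : ℕ) := by
  obtain ⟨i, hi, hmin⟩ := (s.filter (e · ≠ ⊤)).exists_min_image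
    (fun j ↦ ((e j).toNat / d j : ℚ)) (by simpa [Finset.Nonempty] using hfin)
  simp only [Finset.mem_filter] at hi hmin
  have hei : ((e i).toNat : ℕ∞) = e i := ENat.natCast_toNat hi.2
  refine ⟨(e i).toNat, by simp [he i hi.1, hi.2], d i, hd i hi.1, fun j hj ↦ ?_, i, hi.1, ?_⟩
  · by_cases hj' : e j = ⊤
    · simp [hj', hd i hi.1]
    · have hle := hmin j ⟨hj, hj'⟩
      rw [div_le_div_iff₀ (by have := hd i hi.1; positivity) (by have := hd j hj; positivity)]
        at hle
      rw [← ENat.natCast_toNat hj']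
      exact_mod_cast hle
  · push_cast
    rw [hei]

theorem analyticOrderAt_pow_zero (m : ℕ) : analyticOrderAt (fun t : ℝ ↦ t ^ m) 0 = m := by
  have h := analyticOrderAt_pow (𝕜 := ℝ) analyticAt_id m (z₀ := 0)
  rwa [analyticOrderAt_id, nsmul_one] at h

theorem exists_analyticAt_comp_pow_eq {f : ℝ → ℝ} (hf : AnalyticAt ℝ f 0) {m q : ℕ} (hq : q ≠ 0)
    (hm : (m : ℕ∞) ≤ analyticOrderAt f 0 * (q : ℕ)) :
    ∃ g, AnalyticAt ℝ g 0 ∧ (∀ᶠ τ in 𝓝 0, f (τ ^ q) = τ ^ m * g τ) ∧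
      (analyticOrderAt f 0 * (q : ℕ) = m → g 0 ≠ 0) := by
  have hpow : AnalyticAt ℝ (fun τ : ℝ ↦ τ ^ q) 0 := analyticAt_id.pow q
  have hf' : AnalyticAt ℝ (fun τ ↦ f (τ ^ q)) 0 := hf.comp_of_eq hpow (zero_pow hq)
  have hord : analyticOrderAt (fun τ ↦ f (τ ^ q)) 0 = analyticOrderAt f 0 * (q : ℕ) := by
    have hcomp := AnalyticAt.analyticOrderAt_comp (f := f) (by rwa [zero_pow hq]) hpow
    simp only [zero_pow hq, sub_zero] at hcomp
    rwa [analyticOrderAt_pow_zero] at hcomp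
  obtain ⟨g, hg, hfg⟩ := (natCast_le_analyticOrderAt hf').1 (hord ▸ hm)
  simp only [sub_zero, smul_eq_mul] at hfg
  refine ⟨g, hg, hfg, fun hm' ↦ hg.analyticOrderAt_eq_zero.1 ?_⟩
  have hmul : analyticOrderAt (fun τ ↦ τ ^ m * g τ) 0 = _ :=
    analyticOrderAt_mul (analyticAt_id.fun_pow m) hg
  rw [← analyticOrderAt_congr hfg, hord, hm', analyticOrderAt_pow_zero] at hmul
  exact ENat.add_right_injective_of_ne_top (ENat.natCast_ne_top m) (by simpa using hmul.symm)

theorem exists_newton_ramification {n : ℕ} {c : ℕ → ℝ → ℝ} (hc : ∀ j, AnalyticAt ℝ (c j) 0)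
    (hc0 : ∀ j < n, c j 0 = 0) (hne : ∃ j < n, ¬∀ᶠ t in 𝓝 0, c j t = 0) :
    ∃ p ≠ 0, ∃ q ≠ 0, ∃ c' : ℕ → ℝ → ℝ, (∀ j, AnalyticAt ℝ (c' j) 0) ∧
      (∀ᶠ τ in 𝓝 0, ∀ j < n, c j (τ ^ q) = τ ^ (p * (n + 1 - j)) * c' j τ) ∧
      ∃ j < n, c' j 0 ≠ 0 := by
  obtain ⟨p, hp, q, hq, hle, i, hi, heq⟩ := exists_newton_slope (s := Finset.range n)
    (d := fun j ↦ n + 1 - j) (e := fun j ↦ analyticOrderAt (c j) 0)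
    (fun j hj ↦ by have := Finset.mem_range.1 hj; omega)
    (fun j hj ↦ (hc j).analyticOrderAt_ne_zero.2 (hc0 j (Finset.mem_range.1 hj)))
    (by simpa only [Finset.mem_range, Ne, analyticOrderAt_eq_top] using hne)
  have hfac (j : ℕ) : ∃ g, AnalyticAt ℝ g 0 ∧ (j < n → (∀ᶠ τ in 𝓝 0,
      c j (τ ^ q) = τ ^ (p * (n + 1 - j)) * g τ) ∧
        (analyticOrderAt (c j) 0 * (q : ℕ) = (p * (n + 1 - j) : ℕ) → g 0 ≠ 0)) := by
    by_cases hj : j < n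
    · obtain ⟨g, hg, hg'⟩ := exists_analyticAt_comp_pow_eq (hc j) hq (hle j (Finset.mem_range.2 hj))
      exact ⟨g, hg, fun _ ↦ hg'⟩
    · exact ⟨0, analyticAt_const, fun h ↦ absurd h hj⟩
  choose c' hc' hfac using hfac
  refine ⟨p, hp, q, hq, c', hc', ?_, i, Finset.mem_range.1 hi,
    (hfac i (Finset.mem_range.1 hi)).2 heq⟩
  exact (eventually_all_finite (finite_lt_nat n)).2 fun j hj ↦ (hfac j hj).1

theorem analyticOrderAt_eval {Q : Polynomial ℝ} (hQ : Q ≠ 0) (w₀ : ℝ) :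
    analyticOrderAt (fun w ↦ Q.eval w) w₀ = Q.rootMultiplicity w₀ := by
  obtain ⟨R, hR, hdvd⟩ := Polynomial.exists_eq_pow_rootMultiplicity_mul_and_not_dvd Q hQ w₀
  refine (AnalyticOnNhd.eval_polynomial Q w₀ trivial).analyticOrderAt_eq_natCast.2
    ⟨fun w ↦ R.eval w, AnalyticOnNhd.eval_polynomial R w₀ trivial,
      mt Polynomial.dvd_iff_isRoot.2 hdvd, .of_forall fun w ↦ ?_⟩
  conv_lhs => rw [hR]
  simp

theorem rootMultiplicity_lt_natDegree {R : Type*} [CommRing R] [IsDomain R] [CharZero R]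
    {Q : Polynomial R} (hnext : Q.nextCoeff = 0) (hlow : ∃ j < Q.natDegree, Q.coeff j ≠ 0) (r : R) :
    Q.rootMultiplicity r < Q.natDegree := by
  obtain ⟨j, hj, hj0⟩ := hlow
  have hQ : Q ≠ 0 := by rintro rfl; simp at hj0
  by_contra! hle
  obtain ⟨P, hP⟩ := Q.pow_rootMultiplicity_dvd r
  generalize Q.rootMultiplicity r = m at hle hP
  have hmonic : ((Polynomial.X - Polynomial.C r) ^ m).Monic := (Polynomial.monic_X_sub_C r).pow m
  have hdeg : ((Polynomial.X - Polynomial.C r) ^ m).natDegree = m := by simp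
  have hP0 : P ≠ 0 := fun hP0 ↦ hQ (by rw [hP, hP0, mul_zero])
  have hQdeg : Q.natDegree = m + P.natDegree := by
    rw [← hdeg, ← hmonic.natDegree_mul' hP0, ← hP]
  obtain ⟨a, rfl⟩ : ∃ a, Polynomial.C a = P := Polynomial.natDegree_eq_zero.1 (by omega)
  have hQm : Q.natDegree = m := by simpa using hQdeg
  have hr : r = 0 := by
    have hnext' : ((Polynomial.X - Polynomial.C r) ^ m).coeff (m - 1) = m • -r := by
      rw [← Polynomial.nextCoeff_X_sub_C r, ← (Polynomial.monic_X_sub_C r).nextCoeff_pow,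
        Polynomial.nextCoeff_of_natDegree_pos (by omega), hdeg]
    rw [Polynomial.nextCoeff_of_natDegree_pos (by omega), hQm, hP, Polynomial.coeff_mul_C,
      hnext'] at hnext
    simpa [show a ≠ 0 by simpa using hP0, show m ≠ 0 by omega] using hnext
  refine hj0 ?_
  rw [hP, hr]
  simp [Polynomial.coeff_X_pow, show j ≠ m by omega]

end NewtonPolygon

section NewtonStep

variable {S : ℝ × ℝ → ℝ} {N μ A n p : ℕ} {κ : ℝ → ℝ} {F u : ℝ × ℝ → ℝ} {c : ℕ → ℝ → ℝ}
  {η σ w₀ : ℝ} {U : Set ℝ}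

/-- Near the origin, `F (t, w)` is `w ^ (n + 1) * u` plus terms of degree less than `n` in `w`, and
the Newton polygon of `F` has a single compact edge, consisting of monomials proportional to
`(t ^ p) ^ (n + 1 - j) * w ^ j`. -/
structure NewtonForm (F : ℝ × ℝ → ℝ) (n p : ℕ) (c : ℕ → ℝ → ℝ) (u : ℝ × ℝ → ℝ) : Prop where
  slope_ne_zero : p ≠ 0
  analyticAt_coeff : ∀ j, AnalyticAt ℝ (c j) 0
  exists_coeff_ne_zero : ∃ j < n, c j 0 ≠ 0
  analyticAt_unit : AnalyticAt ℝ u 0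
  unit_ne_zero : u 0 ≠ 0
  eventually_eq : ∀ᶠ z in 𝓝 0, F z =
    ∑ j ∈ Finset.range n, z.1 ^ (p * (n + 1 - j)) * c j z.1 * z.2 ^ j + z.2 ^ (n + 1) * u z

/-- The strict transform of a function in Newton form under the weighted blow-up
`(t, w) ↦ (t, t ^ p * w)`. -/
def strictTransform (n p : ℕ) (c : ℕ → ℝ → ℝ) (u : ℝ × ℝ → ℝ) (z : ℝ × ℝ) : ℝ :=
  ∑ j ∈ Finset.range n, c j z.1 * z.2 ^ j + z.2 ^ (n + 1) * u (z.1, z.1 ^ p * z.2)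

namespace NewtonForm

theorem analyticAt_strictTransform (h : NewtonForm F n p c u) (w₀ : ℝ) :
    AnalyticAt ℝ (strictTransform n p c u) (0, w₀) := by
  refine .add (Finset.analyticAt_fun_sum _ fun j _ ↦ ?_) ((analyticAt_snd.pow _).mul ?_)
  · exact ((h.analyticAt_coeff j).comp_of_eq analyticAt_fst rfl).mul (analyticAt_snd.pow j)
  · exact h.analyticAt_unit.comp_of_eq
      (analyticAt_fst.prod ((analyticAt_fst.pow p).mul analyticAt_snd)) (by simp [h.slope_ne_zero])

theorem eventually_eq_strictTransform (h : NewtonForm F n p c u) (w₀ : ℝ) :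
    ∀ᶠ z in 𝓝 (0, w₀),
      F (z.1, z.1 ^ p * z.2) = z.1 ^ (p * (n + 1)) * strictTransform n p c u z := by
  have hblow : Tendsto (fun z : ℝ × ℝ ↦ (z.1, z.1 ^ p * z.2)) (𝓝 (0, w₀)) (𝓝 0) := by
    have hcont : Continuous fun z : ℝ × ℝ ↦ (z.1, z.1 ^ p * z.2) := by fun_prop
    simpa [h.slope_ne_zero, ← Prod.mk_zero_zero] using hcont.tendsto (0, w₀)
  filter_upwards [hblow.eventually h.eventually_eq] with z hz
  rw [hz, strictTransform, mul_add, Finset.mul_sum]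
  congr 1
  · refine Finset.sum_congr rfl fun j hj ↦ ?_
    obtain ⟨d, hd⟩ := Nat.exists_eq_add_of_lt (Finset.mem_range.1 hj)
    rw [show n + 1 - j = d + 2 by omega, show n + 1 = d + 2 + j by omega]
    ring
  · ring

theorem exists_analyticOrderAt_strictTransform_eq (h : NewtonForm F n p c u) (w₀ : ℝ) :
    ∃ m < n + 1, analyticOrderAt (fun w ↦ strictTransform n p c u (0, w)) w₀ = m := by
  let Q : Polynomial ℝ :=
    ∑ j ∈ Finset.range n, .C (c j 0) * .X ^ j + .C (u 0) * .X ^ (n + 1)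
  have hcoeff (j : ℕ) :
      Q.coeff j = (if j < n then c j 0 else 0) + if j = n + 1 then u 0 else 0 := by
    simp [Q, Polynomial.coeff_X_pow]
  have hdeg : Q.natDegree = n + 1 := by
    refine Polynomial.natDegree_eq_of_le_of_coeff_ne_zero ?_ (by simp [hcoeff, h.unit_ne_zero])
    refine Polynomial.natDegree_le_iff_coeff_eq_zero.2 fun j hj ↦ ?_
    simp [hcoeff, show ¬j < n by omega, show j ≠ n + 1 by omega]
  have hnext : Q.nextCoeff = 0 := by
    simp [Polynomial.nextCoeff, hdeg, hcoeff]
  have hlow : ∃ j < Q.natDegree, Q.coeff j ≠ 0 := by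
    obtain ⟨j, hj, hj0⟩ := h.exists_coeff_ne_zero
    exact ⟨j, by omega, by simpa [hcoeff, hj, show j ≠ n + 1 by omega] using hj0⟩
  have heval : (fun w ↦ strictTransform n p c u (0, w)) = fun w ↦ Q.eval w := by
    ext w
    simp [strictTransform, Q, Polynomial.eval_finsetSum, h.slope_ne_zero, mul_comm (u _),
      ← Prod.mk_zero_zero]
  refine ⟨Q.rootMultiplicity w₀, hdeg ▸ rootMultiplicity_lt_natDegree hnext hlow w₀, ?_⟩
  rw [heval, analyticOrderAt_eval (by rintro hQ; simp [hQ] at hdeg)]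

end NewtonForm

/-- Every chart expansion of `S` whose analytic factor has order `m` along the exceptional line
`t = 0` is resolvable, provided that enough powers of `t` split off. -/
def ResolvableOrder (S : ℝ × ℝ → ℝ) (η : ℝ) (m : ℕ) : Prop :=
  ∀ {N μ A κ F w₀}, ChartExpansion S N μ A κ F w₀ →
    analyticOrderAt (fun w ↦ F (0, w)) w₀ = m → m * μ ≤ A → ResolvableAt S η N μ κ w₀

theorem sector_Ioo_subset {ε : ℝ} (hε : 0 < ε) : sector N μ κ (Ioo (-ε) ε) ⊆
    chart N μ κ '' {z | (z.1, 1 * z.2) ∈ horn 1 p ε} ∪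
      chart N μ κ '' {z | (z.1, -1 * z.2) ∈ horn 1 p ε} ∪ sector N (μ + p) κ (Icc (-ε⁻¹) ε⁻¹) := by
  rintro _ ⟨⟨t, w⟩, ⟨ht, hw⟩, rfl⟩
  rcases lt_or_ge (1 * t ^ p) (ε * (1 * w)) with hpos | hpos
  · exact .inl (.inl ⟨(t, w), ⟨ht, hpos, by linarith [hw.2]⟩, rfl⟩)
  rcases lt_or_ge (1 * t ^ p) (ε * (-1 * w)) with hneg | hneg
  · exact .inl (.inr ⟨(t, w), ⟨ht, hneg, by linarith [hw.1]⟩, rfl⟩)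
  have htp : 0 < t ^ p := pow_pos ht p
  refine .inr ⟨(t, w / t ^ p), ⟨ht, ?_⟩, by rw [← chart_pow_mul, mul_div_cancel₀ _ htp.ne']⟩
  rw [mem_Icc, ← abs_le, abs_div, abs_of_pos htp, div_le_iff₀ htp, ← div_eq_inv_mul,
    le_div_iff₀ hε, ← abs_of_pos hε, ← abs_mul, abs_le]
  constructor <;> linarith

namespace ChartExpansion

theorem monomialCover_inner (h : ChartExpansion S N μ A κ F 0) (hF : NewtonForm F n p c u)
    (hA : (n + 1) * μ ≤ A) (IH : ∀ m < n + 1, ResolvableOrder S η m) (hU : U ∈ 𝓝 0) (C : ℝ) :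
    MonomialCover S η (sector N μ κ U) (sector N (μ + p) κ (Icc (-C) C)) := by
  refine .sector_of_isCompact isCompact_Icc fun w₀ _ ↦ ?_
  obtain ⟨m, hm, hord⟩ := hF.exists_analyticOrderAt_strictTransform_eq w₀
  have hmA : m * (μ + p) ≤ A + p * (n + 1) :=
    calc m * (μ + p) ≤ (n + 1) * (μ + p) := Nat.mul_le_mul_right _ hm.le
      _ = (n + 1) * μ + p * (n + 1) := by ring
      _ ≤ A + p * (n + 1) := by gcongr
  have hres : ResolvableAt S η N (μ + p) κ w₀ :=
    IH m hm (h.rescale hF.slope_ne_zero (hF.analyticAt_strictTransform w₀)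
      (hF.eventually_eq_strictTransform w₀)) hord hmA
  have hblow : ContinuousAt (fun z : ℝ × ℝ ↦ z.1 ^ p * z.2) (0, w₀) := by fun_prop
  obtain ⟨T, hT, W, hW, hTW⟩ := mem_nhds_prod_iff.1
    (hblow.preimage_mem_nhds (by simpa [hF.slope_ne_zero] using hU))
  obtain ⟨V, hV, hcov⟩ := hres W hW
  refine ⟨V, mem_nhdsWithin_of_mem_nhds hV, hcov.mono ?_ .rfl⟩
  refine chart_image_eventuallyLE h.index_ne_zero (fun z hz ↦ hz.1) ?_
  filter_upwards [mem_nhdsWithin_of_mem_nhds hT] with t ht w hw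
  exact ⟨(t, t ^ p * w), ⟨hw.1, hTW (mk_mem_prod ht hw.2)⟩, chart_pow_mul p t w⟩

theorem eventually_isMonomialGerm_outer (h : ChartExpansion S N μ A κ F 0)
    (hF : NewtonForm F n p c u) (hA : (n + 1) * μ ≤ A) (hη : 0 < η) (hσ : σ = 1 ∨ σ = -1) :
    ∀ᶠ ε in 𝓝[>] 0,
      IsMonomialGerm S η N (chart N μ κ '' {z | (z.1, σ * z.2) ∈ horn 1 p ε}) := by
  have hσσ : σ * σ = 1 := by rcases hσ with rfl | rfl <;> norm_num
  let U (z : Fin 3 → ℝ) : ℝ := ∑ j ∈ Finset.range n, c j (z 0) * σ ^ j * z 2 ^ (n + 1 - j) +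
    σ ^ (n + 1) * u (z 0, σ * z 1)
  have hU : AnalyticAt ℝ U 0 := by
    refine .add (Finset.analyticAt_fun_sum _ fun j _ ↦ ?_) (analyticAt_const.mul ?_)
    · exact (((hF.analyticAt_coeff j).comp_of_eq (analyticAt_apply 0 0) rfl).mul
        analyticAt_const).mul ((analyticAt_apply 2 0).pow _)
    · exact hF.analyticAt_unit.comp_of_eq
        ((analyticAt_apply 0 0).prod (analyticAt_const.mul (analyticAt_apply 1 0))) (by simp)
  have hU0 : U 0 ≠ 0 := by
    have hsum : ∑ j ∈ Finset.range n, c j 0 * σ ^ j * (0 : ℝ) ^ (n + 1 - j) = 0 :=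
      Finset.sum_eq_zero fun j hj ↦ by
        rw [zero_pow (by have := Finset.mem_range.1 hj; omega), mul_zero]
    simpa [U, hsum, left_ne_zero_of_mul_eq_one hσσ, ← Prod.mk_zero_zero] using hF.unit_ne_zero
  refine h.eventually_isMonomialGerm hA hF.slope_ne_zero hσ zero_le_one (by simp) hη hU hU0 ?_
  filter_upwards [hF.eventually_eq] with ⟨t, w⟩ hz _ hpos
  obtain ⟨v, rfl⟩ : ∃ v, σ * v = w := ⟨σ * w, by rw [← mul_assoc, hσσ, one_mul]⟩
  simp only [← mul_assoc σ σ, hσσ, one_mul] at hpos ⊢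
  simp only [U, hz, mul_add, Finset.mul_sum, Matrix.cons_val]
  congr 1
  · refine Finset.sum_congr rfl fun j hj ↦ ?_
    have hv : v ^ (n + 1) = v ^ j * v ^ (n + 1 - j) := by
      rw [← pow_add, Nat.add_sub_cancel' (by have := Finset.mem_range.1 hj; omega)]
    rw [hv, pow_mul, div_pow, mul_pow]
    field_simp
  · ring

theorem resolvableAt_of_newtonForm (h : ChartExpansion S N μ A κ F 0) (hF : NewtonForm F n p c u)
    (hA : (n + 1) * μ ≤ A) (hη : 0 < η) (IH : ∀ m < n + 1, ResolvableOrder S η m) :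
    ResolvableAt S η N μ κ 0 := by
  intro U hU
  obtain ⟨r, hr, hrU⟩ := Metric.mem_nhds_iff.1 hU
  obtain ⟨ε, ⟨hpos, hneg⟩, hε, hεr⟩ :=
    (((h.eventually_isMonomialGerm_outer hF hA hη (.inl rfl)).and
      (h.eventually_isMonomialGerm_outer hF hA hη (.inr rfl))).and (Ioo_mem_nhdsGT hr)).exists
  have houter {σ : ℝ} (hσ : σ = 1 ∨ σ = -1)
      (hgerm : IsMonomialGerm S η N (chart N μ κ '' {z | (z.1, σ * z.2) ∈ horn 1 p ε})) :
      MonomialCover S η (sector N μ κ U)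
        (chart N μ κ '' {z | (z.1, σ * z.2) ∈ horn 1 p ε}) := by
    refine .of_isMonomialGerm h.index_ne_zero hgerm (image_mono fun z hz ↦ ?_).eventuallyLE
      subset_closure
    have hz0 : 0 < σ * z.2 := pos_of_mem_horn zero_le_one hε hz
    have habs : |z.2| = σ * z.2 := by
      rw [← abs_of_pos hz0, abs_mul]
      rcases hσ with rfl | rfl <;> simp
    exact ⟨hz.1, hrU (by simpa [habs] using hz.2.2.trans hεr)⟩
  exact ⟨Ioo (-ε) ε, Ioo_mem_nhds (neg_neg_of_pos hε) hε,
    (((houter (.inl rfl) hpos).union (houter (.inr rfl) hneg)).union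
      (h.monomialCover_inner hF hA IH hU ε⁻¹)).mono .rfl
        (sector_Ioo_subset hε).eventuallyLE⟩

end ChartExpansion

end NewtonStep

section Induction

variable {S : ℝ × ℝ → ℝ} {N μ A n : ℕ} {κ : ℝ → ℝ} {F u : ℝ × ℝ → ℝ} {c : ℕ → ℝ → ℝ} {η : ℝ}

theorem resolvableOrder_zero (hη : 0 < η) : ResolvableOrder S η 0 := by
  intro N μ A κ F w₀ h hord _
  have hshift := h.shift (φ := fun _ ↦ w₀) analyticAt_const
  have hF0 : F (0, w₀) ≠ 0 := h.analyticAt.along_snd.analyticOrderAt_eq_zero.1 hord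
  exact .of_shift h.index_ne_zero h.index_le (φ := fun _ ↦ w₀) continuousAt_const <|
    hshift.resolvableAt_of_eq_pow_mul (β := 0) (by simp) hshift.analyticAt (by simpa using hF0)
      (.of_forall fun z ↦ by simp) hη

theorem ChartExpansion.resolvableAt_of_eq_sum (h : ChartExpansion S N μ A κ F 0) (hη : 0 < η)
    (hA : (n + 1) * μ ≤ A) (IH : ∀ m < n + 1, ResolvableOrder S η m)
    (hc : ∀ j, AnalyticAt ℝ (c j) 0) (hc0 : ∀ j < n, c j 0 = 0) (hu : AnalyticAt ℝ u 0)
    (hu0 : u 0 ≠ 0) (hF : ∀ᶠ z in 𝓝 0,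
      F z = ∑ j ∈ Finset.range n, c j z.1 * z.2 ^ j + z.2 ^ (n + 1) * u z) :
    ResolvableAt S η N μ κ 0 := by
  by_cases hvanish : ∃ j < n, ¬∀ᶠ t in 𝓝 0, c j t = 0
  · obtain ⟨p, hp, q, hq, c', hc', hcc', hne⟩ := exists_newton_ramification hc hc0 hvanish
    have hpow : AnalyticAt ℝ (fun z : ℝ × ℝ ↦ (z.1 ^ q, z.2)) 0 :=
      (analyticAt_fst.pow q).prod analyticAt_snd
    have hpow0 : Tendsto (fun z : ℝ × ℝ ↦ (z.1 ^ q, z.2)) (𝓝 0) (𝓝 0) := by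
      simpa [hq, ← Prod.mk_zero_zero] using hpow.continuousAt.tendsto
    have hform : NewtonForm (fun z ↦ F (z.1 ^ q, z.2)) n p c' fun z ↦ u (z.1 ^ q, z.2) := by
      refine ⟨hp, hc', hne, hu.comp_of_eq hpow (by simp [hq]),
        by simpa [hq, Prod.mk_zero_zero] using hu0, ?_⟩
      filter_upwards [hpow0.eventually hF, (continuous_fst.tendsto 0).eventually hcc']
        with z hz hcz
      rw [hz, Finset.sum_congr rfl fun j hj ↦ by rw [hcz j (Finset.mem_range.1 hj)]]
    exact .of_pow hq <| (h.ramify hq).resolvableAt_of_newtonForm hform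
      (by rw [← mul_assoc]; exact Nat.mul_le_mul_right q hA) hη IH
  · push Not at hvanish
    refine h.resolvableAt_of_eq_pow_mul hA hu hu0 ?_ hη
    have hvanish' : ∀ᶠ t in 𝓝 0, ∀ j < n, c j t = 0 :=
      (eventually_all_finite (finite_lt_nat n)).2 hvanish
    filter_upwards [hF, (continuous_fst.tendsto 0).eventually hvanish'] with z hz hcz
    rw [hz, Finset.sum_eq_zero, zero_add]
    exact fun j hj ↦ by rw [hcz j (Finset.mem_range.1 hj), zero_mul]

theorem resolvableOrder (hη : 0 < η) (m : ℕ) : ResolvableOrder S η m := by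
  induction m using Nat.strong_induction_on with
  | _ m IH =>
    rcases m with _ | n
    · exact resolvableOrder_zero hη
    · intro N μ A κ F w₀ h hord hA
      obtain ⟨φ, c, u, hφ, rfl, hc, hc0, hu, hu0, hF⟩ :=
        exists_tschirnhausen_expansion h.analyticAt hord
      exact .of_shift h.index_ne_zero h.index_le hφ.continuousAt <|
        (h.shift hφ).resolvableAt_of_eq_sum hη hA IH hc hc0 hu hu0 hF

end Induction

section BlowUp

theorem iteratedDeriv_comp_smul_zero {𝕜 E G : Type*} [NontriviallyNormedField 𝕜]
    [NormedAddCommGroup E] [NormedSpace 𝕜 E] [NormedAddCommGroup G] [NormedSpace 𝕜 G]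
    [CompleteSpace G] {f : E → G} (hf : AnalyticAt 𝕜 f 0) (v : E) (n : ℕ) :
    iteratedDeriv n (fun t : 𝕜 ↦ f (t • v)) 0 = iteratedFDeriv 𝕜 n f 0 fun _ ↦ v := by
  obtain ⟨p, r, hp⟩ := hf
  have hline : HasFPowerSeriesOnBall f p (ContinuousLinearMap.toSpanSingleton 𝕜 v 0) r := by
    simpa using hp
  rw [iteratedDeriv_eq_iteratedFDeriv, ← hp.factorial_smul v n,
    ← HasFPowerSeriesOnBall.factorial_smul (f := fun t : 𝕜 ↦ f (t • v))
      hline.compContinuousLinearMap (1 : 𝕜) n]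
  rw [FormalMultilinearSeries.compContinuousLinearMap_apply]
  simp [Function.comp_def]

theorem exists_polynomial_eval_eq_apply_add_smul {R M ι : Type*} [CommSemiring R]
    [AddCommMonoid M] [Module R M] [Fintype ι] (f : MultilinearMap R (fun _ : ι ↦ M) R) (v v' : M) :
    ∃ Q : Polynomial R,
      Q.natDegree ≤ Fintype.card ι ∧ ∀ w : R, Q.eval w = f fun _ ↦ v + w • v' := by
  classical
  let e (s : Finset ι) : ι → M := s.piecewise (fun _ ↦ v') fun _ ↦ v
  refine ⟨∑ s : Finset ι, .C (f (e s)) * .X ^ s.card, ?_, fun w ↦ ?_⟩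
  · exact Polynomial.natDegree_sum_le_of_forall_le _ _ fun s _ ↦
      (Polynomial.natDegree_C_mul_X_pow_le _ _).trans s.card_le_univ
  · have hexpand := f.map_add_univ (fun _ ↦ w • v') fun _ ↦ v
    have hterm (s : Finset ι) :
        f (s.piecewise (fun _ ↦ w • v') fun _ ↦ v) = f (e s) * w ^ s.card := by
      have he :
          s.piecewise (fun _ ↦ w • v') (fun _ ↦ v) = s.piecewise (fun i ↦ w • e s i) (e s) := by
        ext i
        by_cases hi : i ∈ s <;> simp [e, hi]
      rw [he, f.map_piecewise_smul, Finset.prod_const, smul_eq_mul, mul_comm]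
    simp only [hterm] at hexpand
    simp [Polynomial.eval_finsetSum, ← hexpand, Pi.add_def, add_comm v]

theorem exists_blowUp_factor {𝕜 : Type*} [RCLike 𝕜] {S : 𝕜 × 𝕜 → 𝕜} (hS : AnalyticAt 𝕜 S 0) {k : ℕ}
    (hk : ∀ j < k, iteratedFDeriv 𝕜 j S 0 = 0) (w₀ : 𝕜) :
    ∃ F : 𝕜 × 𝕜 → 𝕜, AnalyticAt 𝕜 F (0, w₀) ∧
      (∀ᶠ z in 𝓝 (0, w₀), S (z.1, z.1 * z.2) = z.1 ^ k * F z) ∧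
      ∀ᶠ w in 𝓝 w₀, iteratedFDeriv 𝕜 k S 0 (fun _ ↦ (1, w)) = k.factorial * F (0, w) := by
  have hS' : AnalyticAt 𝕜 (fun z : 𝕜 × 𝕜 ↦ S (z.2, z.2 * (w₀ + z.1))) 0 :=
    hS.comp_of_eq (analyticAt_snd.prod (analyticAt_snd.mul (analyticAt_const.add analyticAt_fst)))
      (by simp)
  have hderiv (j : ℕ) (w : 𝕜) : iteratedDeriv j (fun t ↦ S (t, t * w)) 0 =
      iteratedFDeriv 𝕜 j S 0 fun _ ↦ (1, w) := by
    simpa using iteratedDeriv_comp_smul_zero hS (1, w) j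
  obtain ⟨c, u, -, hu, hSu, hcoeff⟩ := exists_taylor_snd hS' k
  have htranslate : AnalyticAt 𝕜 (fun z : 𝕜 × 𝕜 ↦ (z.2 - w₀, z.1)) (0, w₀) :=
    (analyticAt_snd.sub analyticAt_const).prod analyticAt_fst
  have htends : Tendsto (fun z : 𝕜 × 𝕜 ↦ (z.2 - w₀, z.1)) (𝓝 (0, w₀)) (𝓝 0) := by
    simpa [← Prod.mk_zero_zero] using htranslate.continuousAt.tendsto
  have hsub : Tendsto (fun w ↦ w - w₀) (𝓝 w₀) (𝓝 0) := by
    simpa using (continuous_sub_right w₀).tendsto w₀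
  have hcoeff' : ∀ᶠ w in 𝓝 w₀, (∀ j < k, c j (w - w₀) = 0) ∧
      iteratedFDeriv 𝕜 k S 0 (fun _ ↦ (1, w)) = k.factorial * u (w - w₀, 0) := by
    filter_upwards [hsub.eventually hcoeff] with w hw
    simp only [add_sub_cancel, hderiv] at hw
    refine ⟨fun j hj ↦ ?_, hw.2⟩
    simpa [hk j hj, j.factorial_ne_zero] using (hw.1 j hj).symm
  refine ⟨fun z ↦ u (z.2 - w₀, z.1), hu.comp_of_eq htranslate (by simp), ?_,
    hcoeff'.mono fun w hw ↦ hw.2⟩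
  filter_upwards [htends.eventually hSu,
    (continuous_snd.tendsto ((0 : 𝕜), w₀)).eventually hcoeff'] with z hz hcz
  simp only [add_sub_cancel] at hz
  rw [hz, Finset.sum_eq_zero, zero_add]
  exact fun j hj ↦ by rw [hcz.1 j (Finset.mem_range.1 hj), zero_mul]

variable {S : ℝ × ℝ → ℝ}

theorem iteratedFDeriv_eq_zero_of_lt_vanishingOrder {j : ℕ} (hj : j < vanishingOrder S) :
    iteratedFDeriv ℝ j S 0 = 0 := by
  by_contra h
  exact Nat.notMem_of_lt_sInf hj h

theorem exists_chartExpansion_blowUp (hS : AnalyticAt ℝ S 0) {k : ℕ}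
    (hk : ∀ j < k, iteratedFDeriv ℝ j S 0 = 0) :
    ∃ Q : Polynomial ℝ, Q.natDegree ≤ k ∧
      (∀ w, iteratedFDeriv ℝ k S 0 (fun _ ↦ (1, w)) = k.factorial * Q.eval w) ∧
      ∀ w₀, ∃ F, ChartExpansion S 1 1 k 0 F w₀ ∧ ∀ᶠ w in 𝓝 w₀, F (0, w) = Q.eval w := by
  have hfact : (k.factorial : ℝ) ≠ 0 := Nat.cast_ne_zero.2 k.factorial_ne_zero
  obtain ⟨Q, hdeg, hQ⟩ := exists_polynomial_eval_eq_apply_add_smul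
    (iteratedFDeriv ℝ k S 0).toMultilinearMap (1, 0) (0, 1)
  have hlow (w : ℝ) : Q.eval w = iteratedFDeriv ℝ k S 0 fun _ ↦ (1, w) := by simp [hQ]
  have hdeg' : (Polynomial.C (k.factorial : ℝ)⁻¹ * Q).natDegree ≤ k :=
    (Polynomial.natDegree_C_mul_le _ _).trans (hdeg.trans_eq (Fintype.card_fin k))
  refine ⟨_, hdeg', fun w ↦ ?_, fun w₀ ↦ ?_⟩
  · rw [← hlow, Polynomial.eval_mul, Polynomial.eval_C, mul_inv_cancel_left₀ hfact]
  · obtain ⟨F, hF, hSF, hFlow⟩ := exists_blowUp_factor hS hk w₀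
    refine ⟨F, ⟨one_ne_zero, le_rfl, analyticAt_const, hF, ?_⟩, ?_⟩
    · simpa only [chart, pow_one, Pi.zero_apply, mul_zero, zero_add] using hSF
    · filter_upwards [hFlow] with w hw
      rw [Polynomial.eval_mul, Polynomial.eval_C, hlow, hw, inv_mul_cancel_left₀ hfact]

end BlowUp

section Triangle

variable {S : ℝ × ℝ → ℝ} {η b : ℝ} {N μ A : ℕ} {κ : ℝ → ℝ} {F : ℝ × ℝ → ℝ} {w₀ : ℝ}

theorem ChartExpansion.exists_monomialCover_half_of_ne_zero (h : ChartExpansion S N μ A κ F w₀)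
    (hF : F (0, w₀) ≠ 0) (hη : 0 < η) {σ : ℝ} (hσ : σ = 1 ∨ σ = -1) (hb : 0 < b) :
    ∃ ε > 0, MonomialCover S η (sector N μ κ {w | σ * (w - w₀) ∈ Icc 0 b})
      (sector N μ κ {w | σ * (w - w₀) ∈ Icc 0 ε}) := by
  have hshift := h.shift (φ := fun _ ↦ w₀) analyticAt_const
  have hcov := hshift.eventually_monomialCover_half (β := 0) (by simp) hshift.analyticAt
    (by simpa using hF) (.of_forall fun z ↦ by simp) hη hσ
  obtain ⟨ε, ⟨hε, hεb⟩, hε0⟩ :=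
    ((hcov.and (Ioo_mem_nhdsGT hb)).and eventually_mem_nhdsWithin).exists
  refine ⟨ε, hε0, hε.mono
    (sector_eventuallyLE_of_tendsto (θ := fun _ ↦ w₀) h.index_ne_zero
      (fun t w ↦ (chart_add h.index_le _ t w).symm) (.of_forall fun _ w hw ↦ ?_))
    (sector_eventuallyLE_of_tendsto (θ := fun _ ↦ -w₀) h.index_ne_zero
      (fun t w ↦ ?_) (.of_forall fun _ w hw ↦ ?_))⟩
  · rw [mem_ofPred_eq, add_sub_cancel_left]
    exact ⟨hw.1.le, (hw.2.trans hεb.2).le⟩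
  · rw [← chart_add h.index_le, add_neg_cancel_left]
  · rwa [mem_ofPred_eq, neg_add_eq_sub]

theorem ChartExpansion.resolvableAt_of_eventually_eq_eval (h : ChartExpansion S N μ A κ F w₀)
    {Q : Polynomial ℝ} (hQ : Q ≠ 0) (hFQ : ∀ᶠ w in 𝓝 w₀, F (0, w) = Q.eval w)
    (hA : Q.natDegree * μ ≤ A) (hη : 0 < η) : ResolvableAt S η N μ κ w₀ := by
  have hmult : Q.rootMultiplicity w₀ ≤ Q.natDegree :=
    Q.count_roots ▸ (Multiset.count_le_card _ _).trans Q.card_roots'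
  exact resolvableOrder hη (Q.rootMultiplicity w₀) h
    ((analyticOrderAt_congr hFQ).trans (analyticOrderAt_eval hQ w₀))
    ((Nat.mul_le_mul_right μ hmult).trans hA)

theorem monomialCover_triangle (hS : AnalyticAt ℝ S 0) (hη : 0 < η) (hb : 0 < b)
    (h0 : lowestPart S (1, 0) ≠ 0) (h1 : lowestPart S (1, b) ≠ 0) :
    MonomialCover S η (sector 1 1 0 (Icc 0 b)) (sector 1 1 0 (Icc 0 b)) := by
  obtain ⟨Q, hdeg, hlow, hF⟩ :=
    exists_chartExpansion_blowUp hS fun j ↦ iteratedFDeriv_eq_zero_of_lt_vanishingOrder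
  have heval {w : ℝ} (hw : lowestPart S (1, w) ≠ 0) : Q.eval w ≠ 0 := by
    rw [lowestPart, hlow] at hw
    exact right_ne_zero_of_mul hw
  have hQ : Q ≠ 0 := by
    rintro rfl
    exact heval h0 Polynomial.eval_zero
  refine .sector_of_isCompact isCompact_Icc fun w₀ hw₀ ↦ ?_
  obtain ⟨F, hSF, hFQ⟩ := hF w₀
  have hF0 : F (0, w₀) = Q.eval w₀ := hFQ.self_of_nhds
  rcases hw₀.1.eq_or_lt with rfl | hpos
  · obtain ⟨ε, hε, hcov⟩ :=
      hSF.exists_monomialCover_half_of_ne_zero (hF0 ▸ heval h0) hη (.inl rfl) hb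
    simp only [sub_zero, one_mul] at hcov
    exact ⟨_, nhdsWithin_mono _ Icc_subset_Ici_self (Icc_mem_nhdsGE hε), hcov⟩
  rcases hw₀.2.eq_or_lt with rfl | hlt
  · obtain ⟨ε, hε, hcov⟩ :=
      hSF.exists_monomialCover_half_of_ne_zero (hF0 ▸ heval h1) hη (.inr rfl) hb
    have hset (δ : ℝ) : {w | -1 * (w - w₀) ∈ Icc 0 δ} = Icc (w₀ - δ) w₀ := by
      ext w
      simp only [mem_ofPred_eq, neg_one_mul, neg_sub, sub_mem_Icc_iff_right, sub_zero]
    rw [hset, hset, sub_self] at hcov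
    exact ⟨_, nhdsWithin_mono _ Icc_subset_Iic_self (Icc_mem_nhdsLE (sub_lt_self _ hε)), hcov⟩
  · obtain ⟨V, hV, hcov⟩ := hSF.resolvableAt_of_eventually_eq_eval hQ hFQ (by simpa using hdeg) hη
      (Icc 0 b) (Icc_mem_nhds hpos hlt)
    exact ⟨V, mem_nhdsWithin_of_mem_nhds hV, hcov⟩

theorem sector_one_one_zero_Icc :
    sector 1 1 0 (Icc 0 b) = {p | 0 < p.1 ∧ 0 ≤ p.2 ∧ p.2 ≤ b * p.1} := by
  ext ⟨x, y⟩
  simp only [sector, chart, pow_one, Pi.zero_apply, mul_zero, zero_add, mem_image, mem_prod,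
    mem_Ioi, mem_Icc, Prod.exists, Prod.mk.injEq, mem_ofPred_eq]
  constructor
  · rintro ⟨t, w, ⟨ht, hw, hwb⟩, rfl, rfl⟩
    exact ⟨ht, mul_nonneg ht.le hw, by rw [mul_comm b]; gcongr⟩
  · rintro ⟨hx, hy, hyb⟩
    exact ⟨x, y / x, ⟨hx, div_nonneg hy hx.le, (div_le_iff₀ hx).2 hyb⟩, rfl,
      mul_div_cancel₀ y hx.ne'⟩

theorem closure_triangle {a : ℝ} (ha : 0 < a) (hb : 0 < b) :
    closure {p : ℝ × ℝ | p.1 ∈ Ioo 0 a ∧ 0 ≤ p.2 ∧ p.2 ≤ b * p.1} =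
      {p | 0 ≤ p.1 ∧ p.1 ≤ a ∧ 0 ≤ p.2 ∧ p.2 ≤ b * p.1} := by
  refine Subset.antisymm (closure_minimal (fun p hp ↦ ⟨hp.1.1.le, hp.1.2.le, hp.2⟩) ?_) ?_
  · simp only [ofPred_and]
    exact (isClosed_le (by fun_prop) (by fun_prop)).inter <|
      (isClosed_le (by fun_prop) (by fun_prop)).inter <|
        (isClosed_le (by fun_prop) (by fun_prop)).inter (isClosed_le (by fun_prop) (by fun_prop))
  · rintro ⟨x, y⟩ ⟨hx, hxa, hy, hyb⟩
    refine closure_mono ?_ <| closure_openSegment (𝕜 := ℝ) (x, y) (a / 2, 0) ▸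
      left_mem_segment ℝ (x, y) (a / 2, 0)
    rintro _ ⟨s, t, hs, ht, hst, rfl⟩
    simp only at hx hxa hy hyb
    simp only [Prod.smul_mk, Prod.mk_add_mk, smul_eq_mul, mul_zero, add_zero, mem_ofPred_eq,
      mem_Ioo]
    exact ⟨⟨by positivity, by nlinarith⟩, by positivity, by nlinarith [mul_pos hb (mul_pos ht ha)]⟩

end Triangle

section Assembly

variable {S : ℝ × ℝ → ℝ} {η : ℝ} {R : Set (ℝ × ℝ)}

theorem MonomialCover.exists_closure_eq_iUnion (h : MonomialCover S η R R) :
    ∃ a > 0, ∃ N > 0, ∃ (n : ℕ) (D : Fin n → Set (ℝ × ℝ)),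
      closure (R ∩ {p | p.1 ∈ Ioo 0 a}) = ⋃ i, closure (D i) ∧
        ∀ i, IsMonomialBlock S η N a (D i) := by
  obtain ⟨N, hN, L, hL, hgerm, hcov⟩ := h
  obtain ⟨n, E, rfl⟩ := hL.fin_embedding
  simp only [forall_mem_range, biUnion_range] at hgerm hcov
  obtain ⟨a, ⟨⟨hER, hRE⟩, hblock⟩, ha⟩ := ((((eventually_edge_iff.1
    (eventually_all.2 fun i ↦ (hgerm i).2)).and (eventually_edge_iff.1 hcov)).and
    (eventually_all.2 fun i ↦ (hgerm i).1)).and eventually_mem_nhdsWithin).exists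
  refine ⟨a, ha, N, hN.bot_lt, n, fun i ↦ E i ∩ {p | p.1 < a}, Subset.antisymm ?_ ?_, hblock⟩
  · refine closure_minimal (fun p hp ↦ ?_) (isClosed_iUnion_of_finite fun _ ↦ isClosed_closure)
    obtain ⟨i, hi⟩ := mem_iUnion.1 (hRE p hp.2 hp.1)
    have hopen : IsOpen {p : ℝ × ℝ | p.1 < a} := isOpen_lt continuous_fst continuous_const
    exact mem_iUnion.2 ⟨i, hopen.closure_inter ⟨hi, hp.2.2⟩⟩
  · refine iUnion_subset fun i ↦ closure_mono fun p hp ↦ ?_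
    have hpa := (hblock i).fst_mem_Ioo hp
    exact ⟨hER p hpa i hp.1, hpa⟩

end Assembly

/-- **Theorem 2.1 (two-dimensional resolution of singularities).** Let `S` be real
analytic near the origin, not identically zero, with `S(0,0) = 0`, and let `b > 0` be such
that the lowest-degree part of `S` does not vanish on the lines bounding the triangle
`{0 ≤ x ≤ a, 0 ≤ y ≤ bx}` except at the origin. Then for any predetermined `η > 0` there
exist `a > 0`, a positive integer `N`, and finitely many sets `Dᵢ` whose closures cover the
triangle, such that each `Dᵢ` is the image under a coordinate change
`ηᵢ(x,y) = (x, ±y + kᵢ(x))` (with `kᵢ(x) = lᵢ x^{sᵢ} + …`, `sᵢ ≥ 1`, `kᵢ(x^N)` real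
analytic) of a sliver `Dᵢ' = {0 < x < a, gᵢ(x) < y < Gᵢ(x)}` (with `gᵢ(x^N)`, `Gᵢ(x^N)`
real analytic and `Gᵢ(x) = Hᵢ x^{Mᵢ} + …`, `Hᵢ > 0`, `Mᵢ ≥ 1`) on which `S ∘ ηᵢ` together
with its derivatives is comparable, with relative error `η`, to a monomial
`dᵢ x^{αᵢ} y^{βᵢ}` in the sense of (2.1)-(2.2). -/
theorem resolution_of_singularities_2d
    (S : ℝ × ℝ → ℝ) (US : Set (ℝ × ℝ)) (hUS : US ∈ 𝓝 (0:ℝ×ℝ))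
    (hSa : AnalyticOnNhd ℝ S US) (hS0 : S 0 = 0)
    (hSnz : ¬ (∀ᶠ p in 𝓝 (0:ℝ×ℝ), S p = 0))
    (b : ℝ) (hb : 0 < b)
    (hbline : ∀ s : ℝ, s ≠ 0 → lowestPart S (s, b * s) ≠ 0 ∧ lowestPart S (s, 0) ≠ 0)
    (ηc : ℝ) (hηc : 0 < ηc) :
    ∃ (a : ℝ) (N : ℕ) (nn : ℕ) (D : Fin nn → Set (ℝ × ℝ)), 0 < a ∧ 0 < N ∧
      {p : ℝ × ℝ | 0 ≤ p.1 ∧ p.1 ≤ a ∧ 0 ≤ p.2 ∧ p.2 ≤ b * p.1} =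
        (⋃ i, closure (D i)) ∧
      ∀ i : Fin nn, ∃ (k g G : ℝ → ℝ) (σ li si Hi Mi αi di : ℝ) (βi : ℕ),
        (σ = 1 ∨ σ = -1) ∧
        PuiseuxOn N a k ∧ LeadingTerm k li si ∧ 1 ≤ si ∧
        PuiseuxOn N a g ∧ PuiseuxOn N a G ∧
        LeadingTerm G Hi Mi ∧ 0 < Hi ∧ 1 ≤ Mi ∧
        (∃ q : ℚ, (q : ℝ) = αi) ∧ 0 ≤ αi ∧ di ≠ 0 ∧
        D i = (fun q : ℝ × ℝ => (q.1, σ * q.2 + k q.1)) '' sliverSet a g G ∧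
        ((βi = 0 ∧ (∀ x, g x = 0) ∧ (∀ x ∈ Ioo (0:ℝ) a, G x = Hi * x ^ Mi) ∧
          (∀ p ∈ sliverSet a g G, ∀ l : ℕ, (l : ℝ) ≤ αi →
            |pderiv2 l 0 (fun q => S (q.1, σ * q.2 + k q.1)) p -
                di * descProd αi l * p.1 ^ (αi - l)| <
              ηc * |di| * p.1 ^ (αi - l))) ∨
         (0 < βi ∧
          ((∀ x, g x = 0) ∨ ∃ hi mi : ℝ, 0 < hi ∧ Mi < mi ∧ LeadingTerm g hi mi) ∧
          (∀ p ∈ sliverSet a g G, ∀ l : ℕ, (l : ℝ) ≤ αi → ∀ mm : ℕ, mm ≤ βi →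
            |pderiv2 l mm (fun q => S (q.1, σ * q.2 + k q.1)) p -
                descProd αi l * descProd (βi : ℝ) mm * di *
                  p.1 ^ (αi - l) * p.2 ^ ((βi : ℝ) - (mm : ℝ))| ≤
              ηc * |di| * p.1 ^ (αi - l) * p.2 ^ ((βi : ℝ) - (mm : ℝ))))) := by
  obtain ⟨hbottom, htop⟩ := (hbline 1 one_ne_zero).symm
  have hcover := monomialCover_triangle (hSa 0 (mem_of_mem_nhds hUS)) hηc hb hbottom
    (by rwa [mul_one] at htop)
  obtain ⟨a, ha, N, hN, n, D, hclosure, hD⟩ := hcover.exists_closure_eq_iUnion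
  have htrunc : sector 1 1 0 (Icc 0 b) ∩ {p | p.1 ∈ Ioo 0 a} =
      {p | p.1 ∈ Ioo 0 a ∧ 0 ≤ p.2 ∧ p.2 ≤ b * p.1} := by
    rw [sector_one_one_zero_Icc]
    ext p
    simp only [mem_inter_iff, mem_ofPred_eq, mem_Ioo]
    tauto
  rw [htrunc, closure_triangle ha hb] at hclosure
  exact ⟨a, N, n, D, ha, hN, hclosure, hD⟩
end
end
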